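/- Fix d ∈ ℕ and m_1, …, m_d ∈ ℕ. Let (F⃗_n) be a sequence of random vectors with F⃗_n = (P_{n,1}(N^{(n)}), …, P_{n,d}(N^{(n)})), where N^{(n)} ~ γ_{K_n} and each P_{n,i} lies in the finitely generated Wiener chaos span of degree m_i in K_n variables. If the laws of F⃗_n converge weakly to the standard Gaussian N(0, I_d) on ℝ^d, then for every q ≥ 1 there exist N ∈ ℕ and C > 0 such that E[ (det Γ(F⃗_n))^{−q} ] ≤ C for all n ≥ N, where Γ(F⃗_n) is the d×d Malliavin matrix Γ(F⃗_n)_{ij} := Σ_{k=1}^{K_n} ∂_k P_{n,i}(N^{(n)}) ∂_k P_{n,j}(N^{(n)}). -/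

import Mathlib

open MeasureTheory ProbabilityTheory MvPolynomial Filter Topology

noncomputable def gaussPi (ι : Type) [Fintype ι] : Measure (ι → ℝ) :=
  Measure.pi fun _ => gaussianReal 0 1

noncomputable def hermiteProd {K : ℕ} (k : Fin K → ℕ) : MvPolynomial (Fin K) ℝ :=
  ∏ i, Polynomial.aeval (MvPolynomial.X i) (Polynomial.hermite (k i))

noncomputable def chaos (K m : ℕ) : Submodule ℝ (MvPolynomial (Fin K) ℝ) :=
  Submodule.span ℝ {P | ∃ k : Fin K → ℕ, ∑ i, k i = m ∧ P = hermiteProd k}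

noncomputable def sqField {ι : Type} [Fintype ι] (P : MvPolynomial ι ℝ) (x : ι → ℝ) : ℝ :=
  ∑ i, (eval x (pderiv i P)) ^ 2

def TendstoInLaw {E : Type} [MeasurableSpace E] [TopologicalSpace E]
    (μs : ℕ → Measure E) (μ : Measure E) : Prop :=
  ∀ f : BoundedContinuousFunction E ℝ,
    Tendsto (fun n => ∫ x, f x ∂μs n) atTop (𝓝 (∫ x, f x ∂μ))

/-- The Malliavin matrix of a vector of polynomial functionals. -/
noncomputable def malMatrix {K d : ℕ} (P : Fin d → MvPolynomial (Fin K) ℝ) (x : Fin K → ℝ) :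
    Matrix (Fin d) (Fin d) ℝ :=
  Matrix.of fun i j => ∑ k, eval x (pderiv k (P i)) * eval x (pderiv k (P j))



section GaussBasics

instance gaussPi_prob (ι : Type) [Fintype ι] : IsProbabilityMeasure (gaussPi ι) := by
  unfold gaussPi; infer_instance

variable {ι : Type} [Fintype ι]

lemma integral_cexp_lin (a : ι → ℝ) :
    ∫ z, Complex.exp (((∑ i, a i * z i : ℝ) : ℂ) * Complex.I) ∂gaussPi ι
      = Complex.exp (-((∑ i, a i ^ 2 : ℝ) : ℂ) / 2) := by
  have h : ∀ z : ι → ℝ, Complex.exp (((∑ i, a i * z i : ℝ) : ℂ) * Complex.I)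
      = ∏ i, Complex.exp ((a i : ℂ) * (z i : ℂ) * Complex.I) := by
    intro z
    rw [← Complex.exp_sum]
    push_cast
    rw [Finset.sum_mul]
  simp_rw [h]
  unfold gaussPi
  rw [integral_fintype_prod_eq_prod (f := fun i (x : ℝ) =>
    Complex.exp ((a i : ℂ) * (x : ℂ) * Complex.I))]
  have h2 : ∀ i, ∫ x : ℝ, Complex.exp ((a i : ℂ) * (x : ℂ) * Complex.I) ∂gaussianReal 0 1
      = Complex.exp (-((a i : ℂ)^2) / 2) := by
    intro i
    have := charFun_gaussianReal (μ := 0) (v := 1) (a i)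
    rw [charFun_apply_real] at this
    rw [this]
    congr 1
    push_cast
    ring
  simp_rw [h2]
  rw [← Complex.exp_sum]
  congr 1
  push_cast
  rw [← Finset.sum_div, Finset.sum_neg_distrib]

lemma integral_cos_lin (a : ι → ℝ) :
    ∫ z, Real.cos (∑ i, a i * z i) ∂gaussPi ι = Real.exp (-(∑ i, a i ^ 2) / 2) := by
  have h := congrArg Complex.re (integral_cexp_lin a)
  have h1 : (Complex.exp (-((∑ i, a i ^ 2 : ℝ) : ℂ) / 2)).re
      = Real.exp (-(∑ i, a i ^ 2) / 2) := by
    have : (-((∑ i, a i ^ 2 : ℝ) : ℂ) / 2) = ((-(∑ i, a i ^ 2) / 2 : ℝ) : ℂ) := by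
      push_cast; ring
    rw [this, Complex.exp_ofReal_re]
  rw [h1] at h
  rw [← h]
  have h2 : Integrable (fun z : ι → ℝ => Complex.exp (((∑ i, a i * z i : ℝ) : ℂ) * Complex.I))
      (gaussPi ι) := by
    refine Integrable.of_bound (C := 1) ?_ ?_
    · exact (by fun_prop : Continuous _).aestronglyMeasurable
    · exact Filter.Eventually.of_forall fun z => by
        rw [Complex.norm_exp_ofReal_mul_I]
  have h3 := integral_re h2
  simp only [RCLike.re_to_complex] at h3
  rw [← h3]
  refine integral_congr_ae (Filter.Eventually.of_forall fun z => ?_)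
  simp only [Complex.exp_ofReal_mul_I_re]

lemma map_lin_gaussPi (a : ι → ℝ) :
    Measure.map (fun z : ι → ℝ => ∑ i, a i * z i) (gaussPi ι)
      = Measure.map (fun g : ℝ => √(∑ i, a i ^ 2) * g) (gaussianReal 0 1) := by
  have hm : Measurable (fun z : ι → ℝ => ∑ i, a i * z i) := by fun_prop
  haveI : IsProbabilityMeasure (Measure.map (fun z : ι → ℝ => ∑ i, a i * z i) (gaussPi ι)) :=
    Measure.isProbabilityMeasure_map hm.aemeasurable
  haveI : IsProbabilityMeasure (Measure.map (fun g : ℝ => √(∑ i, a i ^ 2) * g) (gaussianReal 0 1)) :=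
    Measure.isProbabilityMeasure_map (by fun_prop)
  refine Measure.ext_of_charFun (funext fun t => ?_)
  rw [gaussianReal_map_const_mul, charFun_gaussianReal, charFun_apply_real,
    integral_map hm.aemeasurable (by fun_prop)]
  have := integral_cexp_lin (fun i => t * a i)
  have e1 : ∀ z : ι → ℝ, (t : ℂ) * ((∑ i, a i * z i : ℝ) : ℂ) * Complex.I
     = ((∑ i, t * a i * z i : ℝ) : ℂ) * Complex.I := by
    intro z
    congr 1
    push_cast
    rw [Finset.mul_sum]
    exact Finset.sum_congr rfl fun i _ => by ring
  simp_rw [e1, this]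
  congr 1
  have h0 : (0:ℝ) ≤ ∑ i, a i ^ 2 := Finset.sum_nonneg fun i _ => sq_nonneg _
  simp only [NNReal.coe_mul, NNReal.coe_mk, NNReal.coe_one, Real.sq_sqrt h0, mul_zero, mul_one]
  push_cast
  simp_rw [mul_pow, ← Finset.mul_sum]
  ring

lemma integral_lin_gaussPi (a : ι → ℝ) (h : ℝ → ℝ) (hh : Continuous h) :
    ∫ z, h (∑ i, a i * z i) ∂gaussPi ι = ∫ g, h (√(∑ i, a i ^ 2) * g) ∂gaussianReal 0 1 := by
  rw [← integral_map (φ := fun z : ι → ℝ => ∑ i, a i * z i) (f := h) (Measurable.aemeasurable (by fun_prop))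
    hh.aestronglyMeasurable, map_lin_gaussPi, integral_map (by fun_prop) hh.aestronglyMeasurable]

lemma dual_eq_sum (L : StrongDual ℝ (ι → ℝ)) (z : ι → ℝ) [DecidableEq ι] :
    L z = ∑ i, L (Pi.single i 1) * z i := by
  conv_lhs => rw [← Finset.univ_sum_single z]
  rw [map_sum]
  refine Finset.sum_congr rfl fun i _ => ?_
  have : Pi.single i (z i) = z i • (Pi.single i 1 : ι → ℝ) := by
    ext j; by_cases h : j = i
    · subst h; simp
    · simp [h]
  rw [this, map_smul, smul_eq_mul, mul_comm]

lemma map_rot_gaussPi (α β : ℝ) (h : α ^ 2 + β ^ 2 = 1) :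
    Measure.map (fun p : (ι → ℝ) × (ι → ℝ) => α • p.1 + β • p.2) ((gaussPi ι).prod (gaussPi ι))
      = gaussPi ι := by
  classical
  have hm : Measurable (fun p : (ι → ℝ) × (ι → ℝ) => α • p.1 + β • p.2) := by fun_prop
  haveI : IsProbabilityMeasure (Measure.map (fun p : (ι → ℝ) × (ι → ℝ) => α • p.1 + β • p.2)
     ((gaussPi ι).prod (gaussPi ι))) :=
    Measure.isProbabilityMeasure_map hm.aemeasurable
  refine Measure.ext_of_charFunDual (funext fun L => ?_)
  rw [charFunDual_apply, charFunDual_apply, integral_map hm.aemeasurable (by fun_prop)]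
  have key : ∀ c : ℝ, ∫ u : ι → ℝ, Complex.exp (((c * L u : ℝ) : ℂ) * Complex.I) ∂gaussPi ι
      = Complex.exp (-((c^2 * ∑ i, (L (Pi.single i 1)) ^ 2 : ℝ) : ℂ) / 2) := by
    intro c
    have := integral_cexp_lin (fun i => c * L (Pi.single i 1))
    simp_rw [mul_pow, ← Finset.mul_sum] at this
    rw [← this]
    congr 1
    ext u
    rw [dual_eq_sum L u, Finset.mul_sum]
    congr 3
    exact Finset.sum_congr rfl fun i _ => by ring
  have e : ∀ p : (ι → ℝ) × (ι → ℝ), Complex.exp ((L (α • p.1 + β • p.2) : ℂ) * Complex.I)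
     = Complex.exp (((α * L p.1 : ℝ) : ℂ) * Complex.I) * Complex.exp (((β * L p.2 : ℝ) : ℂ) * Complex.I) := by
    intro p
    rw [← Complex.exp_add]
    congr 1
    rw [map_add, map_smul, map_smul]
    push_cast
    simp only [smul_eq_mul]
    push_cast
    ring
  simp_rw [e]
  rw [integral_prod_mul (f := fun u : ι → ℝ => Complex.exp (((α * L u : ℝ) : ℂ) * Complex.I))
    (g := fun u : ι → ℝ => Complex.exp (((β * L u : ℝ) : ℂ) * Complex.I)), key, key,
    ← Complex.exp_add]
  have := key 1
  simp only [one_mul] at this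
  rw [this]
  congr 1
  have h' : (α : ℂ) ^ 2 + (β : ℂ) ^ 2 = 1 := by exact_mod_cast h
  push_cast
  linear_combination (-(∑ i, ((L (Pi.single i 1) : ℝ) : ℂ) ^ 2) / 2) * h'

lemma integral_rot_gaussPi (α β : ℝ) (h : α ^ 2 + β ^ 2 = 1) (f : (ι → ℝ) → ℝ)
    (hf : Continuous f) :
    ∫ p, f (α • p.1 + β • p.2) ∂((gaussPi ι).prod (gaussPi ι)) = ∫ z, f z ∂gaussPi ι := by
  conv_rhs => rw [← map_rot_gaussPi α β h]
  rw [integral_map (by fun_prop) hf.aestronglyMeasurable]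

end GaussBasics

section Moments

lemma integrable_pow_gauss (n : ℕ) : Integrable (fun x : ℝ => x ^ n) (gaussianReal 0 1) := by
  have := (memLp_id_gaussianReal (μ := 0) (v := 1) n).integrable_norm_pow'
  simp only [id] at this
  refine this.mono' (by fun_prop) (Eventually.of_forall fun x => ?_)
  simp

lemma gauss_moment_succ (n : ℕ) :
    ∫ x : ℝ, x ^ (n + 2) ∂gaussianReal 0 1 = (n + 1) * ∫ x : ℝ, x ^ n ∂gaussianReal 0 1 := by
  have hi : ∀ k : ℕ, Integrable (fun x : ℝ => x ^ k * gaussianPDFReal 0 1 x) := by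
    intro k
    have := integrable_pow_gauss k
    rw [gaussianReal_of_var_ne_zero _ one_ne_zero] at this
    unfold gaussianPDF at this
    rw [integrable_withDensity_iff (by fun_prop) (by simp)] at this
    refine this.congr (Eventually.of_forall fun x => ?_)
    simp [ENNReal.toReal_ofReal (gaussianPDFReal_nonneg 0 1 x)]
  rw [integral_gaussianReal_eq_integral_smul one_ne_zero,
    integral_gaussianReal_eq_integral_smul one_ne_zero]
  simp only [smul_eq_mul]
  have hd : ∀ x : ℝ, HasDerivAt (fun x => -gaussianPDFReal 0 1 x) (x * gaussianPDFReal 0 1 x) x := by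
    intro x
    have : (fun x => -gaussianPDFReal 0 1 x) = fun x : ℝ => -((√(2 * Real.pi * 1))⁻¹ * Real.exp (-(x)^2 / (2 * 1))) := by
      ext y; simp [gaussianPDFReal]
    rw [this]
    have h1 : HasDerivAt (fun x : ℝ => -(x)^2 / (2 * 1)) (-x) x := by
      have := ((hasDerivAt_pow 2 x).neg).div_const (2 * 1)
      refine this.congr_deriv ?_
      norm_num
      try ring
    have := ((h1.exp).const_mul ((√(2 * Real.pi * 1))⁻¹)).neg
    refine this.congr_deriv ?_
    simp only [gaussianPDFReal, sub_zero, NNReal.coe_one]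
    ring
  have h := integral_mul_deriv_eq_deriv_mul_of_integrable
    (u := fun x : ℝ => x ^ (n+1)) (v := fun x => -gaussianPDFReal 0 1 x)
    (u' := fun x : ℝ => ((n : ℝ) + 1) * x ^ n) (v' := fun x => x * gaussianPDFReal 0 1 x)
    (fun x _ => by simpa using hasDerivAt_pow (n+1) x) (fun x _ => hd x)
    ?_ ?_ ?_
  · have e1 : ∀ x : ℝ, gaussianPDFReal 0 1 x * x ^ (n+2) = x ^ (n+1) * (x * gaussianPDFReal 0 1 x) := by
      intro x; ring
    rw [integral_congr_ae (Eventually.of_forall e1), h, ← integral_neg, ← integral_const_mul]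
    congr 1; ext x; ring
  · refine (hi (n+2)).congr (Eventually.of_forall fun x => ?_)
    dsimp; ring
  · refine ((hi n).const_mul (-((n:ℝ)+1))).congr (Eventually.of_forall fun x => ?_)
    dsimp; ring
  · refine ((hi (n+1)).neg).congr (Eventually.of_forall fun x => ?_)
    dsimp; ring

lemma gauss_moment_one : ∫ x : ℝ, x ∂gaussianReal 0 1 = 0 := integral_id_gaussianReal

lemma gauss_moment_two : ∫ x : ℝ, x ^ 2 ∂gaussianReal 0 1 = 1 := by
  have := gauss_moment_succ 0
  simpa using this

lemma gauss_moment_four : ∫ x : ℝ, x ^ 4 ∂gaussianReal 0 1 = 3 := by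
  have := gauss_moment_succ 2
  rw [gauss_moment_two] at this
  rw [this]; norm_num

variable {ι : Type} [Fintype ι]

lemma integral_lin_sq (a : ι → ℝ) : ∫ z, (∑ i, a i * z i) ^ 2 ∂gaussPi ι = ∑ i, a i ^ 2 := by
  rw [integral_lin_gaussPi a (fun t => t ^ 2) (by fun_prop)]
  simp_rw [mul_pow]
  rw [integral_const_mul, gauss_moment_two, Real.sq_sqrt (Finset.sum_nonneg fun i _ => sq_nonneg _), mul_one]

lemma integral_lin_four (a : ι → ℝ) :
    ∫ z, (∑ i, a i * z i) ^ 4 ∂gaussPi ι = 3 * (∑ i, a i ^ 2) ^ 2 := by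
  rw [integral_lin_gaussPi a (fun t => t ^ 4) (by fun_prop)]
  simp_rw [mul_pow]
  rw [integral_const_mul, gauss_moment_four]
  have := Real.sq_sqrt (Finset.sum_nonneg fun i (_ : i ∈ Finset.univ) => sq_nonneg (a i))
  rw [show (√(∑ i, a i ^ 2)) ^ 4 = ((√(∑ i, a i ^ 2)) ^ 2) ^ 2 by ring, this]
  ring

end Moments



section PolyCalc

variable {ι : Type} [Fintype ι]

lemma integrable_monomial_gauss (s : ι →₀ ℕ) (a : ℝ) :
    Integrable (fun x : ι → ℝ => eval x (monomial s a)) (gaussPi ι) := by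
  simp_rw [eval_monomial]
  refine Integrable.const_mul ?_ a
  have : (fun x : ι → ℝ => s.prod fun n e => x n ^ e) = fun x => ∏ i, x i ^ s i := by
    ext x
    rw [Finsupp.prod_fintype]; simp
  rw [this]
  unfold gaussPi
  exact Integrable.fintype_prod (f := fun i (x : ℝ) => x ^ s i) fun i => integrable_pow_gauss _

lemma integrable_poly (P : MvPolynomial ι ℝ) :
    Integrable (fun x : ι → ℝ => eval x P) (gaussPi ι) := by
  induction P using MvPolynomial.induction_on' with
  | monomial s a => exact integrable_monomial_gauss s a
  | add p q hp hq => simp only [map_add]; exact hp.add hq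

/-- Gaussian expectation of a polynomial. -/
noncomputable def Ex : MvPolynomial ι ℝ →ₗ[ℝ] ℝ where
  toFun P := ∫ x, eval x P ∂gaussPi ι
  map_add' P Q := by
    simp only [map_add]; exact integral_add (integrable_poly P) (integrable_poly Q)
  map_smul' c P := by
    simp only [smul_eval, RingHom.id_apply, smul_eq_mul]; exact integral_const_mul _ _

lemma Ex_apply (P : MvPolynomial ι ℝ) : Ex P = ∫ x, eval x P ∂gaussPi ι := rfl

lemma Ex_monomial (s : ι →₀ ℕ) (a : ℝ) :
    Ex (monomial s a) = a * ∏ i, ∫ x : ℝ, x ^ s i ∂gaussianReal 0 1 := by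
  rw [Ex_apply]
  simp_rw [eval_monomial]
  rw [integral_const_mul]
  congr 1
  have : (fun x : ι → ℝ => s.prod fun n e => x n ^ e) = fun x => ∏ i, x i ^ s i := by
    ext x
    rw [Finsupp.prod_fintype]; simp
  rw [this]
  unfold gaussPi
  exact integral_fintype_prod_eq_prod (f := fun i (x : ℝ) => x ^ s i)

lemma Ex_pderiv (i : ι) (P : MvPolynomial ι ℝ) : Ex (pderiv i P) = Ex (X i * P) := by
  classical
  induction P using MvPolynomial.induction_on' with
  | add p q hp hq => rw [map_add, map_add, mul_add, map_add, hp, hq]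
  | monomial s a =>
    rw [pderiv_monomial, X, monomial_mul, Ex_monomial, Ex_monomial, one_mul,
      ← Finset.mul_prod_erase _ _ (Finset.mem_univ i),
      ← Finset.mul_prod_erase (a := i) (f := fun j =>
        ∫ x : ℝ, x ^ ((Finsupp.single i 1 + s : ι →₀ ℕ) j) ∂gaussianReal 0 1) _ (Finset.mem_univ i)]
    have h1 : ∀ j ∈ Finset.univ.erase i, ∫ x : ℝ, x ^ ((s - Finsupp.single i 1 : ι →₀ ℕ) j) ∂gaussianReal 0 1
       = ∫ x : ℝ, x ^ ((Finsupp.single i 1 + s : ι →₀ ℕ) j) ∂gaussianReal 0 1 := by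
      intro j hj
      have hj' : i ≠ j := (Finset.ne_of_mem_erase hj).symm
      have e1 : (s - Finsupp.single i 1 : ι →₀ ℕ) j = s j := by simp [hj'.symm, hj']
      have e2 : (Finsupp.single i 1 + s : ι →₀ ℕ) j = s j := by simp [hj'.symm, hj']
      rw [e1, e2]
    rw [Finset.prod_congr rfl h1]
    have e1 : (s - Finsupp.single i 1 : ι →₀ ℕ) i = s i - 1 := by simp
    have e2 : (Finsupp.single i 1 + s : ι →₀ ℕ) i = s i + 1 := by simp [add_comm]
    rw [e1, e2]
    rcases hs : s i with _ | n
    · have := gauss_moment_one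
      simp [this]
    · rw [Nat.add_sub_cancel, gauss_moment_succ]
      push_cast
      ring

/-- Number operator. -/
noncomputable def Lop (P : MvPolynomial ι ℝ) : MvPolynomial ι ℝ :=
  ∑ i, (X i * pderiv i P - pderiv i (pderiv i P))

/-- carré du champ, as a polynomial. -/
noncomputable def Gam (P : MvPolynomial ι ℝ) : MvPolynomial ι ℝ := ∑ i, (pderiv i P) ^ 2

lemma Ex_mul_Lop (G F : MvPolynomial ι ℝ) :
    Ex (G * Lop F) = ∑ i, Ex (pderiv i G * pderiv i F) := by
  unfold Lop
  rw [Finset.mul_sum, map_sum]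
  refine Finset.sum_congr rfl fun i _ => ?_
  have h := Ex_pderiv i (G * pderiv i F)
  rw [pderiv_mul, map_add] at h
  rw [mul_sub, map_sub, show G * (X i * pderiv i F) = X i * (G * pderiv i F) by ring, ← h]
  ring

lemma Ex_sq_nonneg (P : MvPolynomial ι ℝ) : 0 ≤ Ex (P ^ 2) := by
  rw [Ex_apply]
  exact integral_nonneg fun x => by simp only [map_pow]; positivity

lemma Ex_cs (P Q : MvPolynomial ι ℝ) : Ex (P * Q) ^ 2 ≤ Ex (P ^ 2) * Ex (Q ^ 2) := by
  have h : ∀ t : ℝ, 0 ≤ Ex (Q ^ 2) * (t * t) + (2 * Ex (P * Q)) * t + Ex (P ^ 2) := by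
    intro t
    have := Ex_sq_nonneg (P + t • Q)
    have e : (P + t • Q) ^ 2 = P ^ 2 + (2 * t) • (P * Q) + (t * t) • Q ^ 2 := by
      simp only [MvPolynomial.smul_eq_C_mul, map_mul, map_ofNat]; ring
    rw [e, map_add, map_add, map_smul, map_smul, smul_eq_mul, smul_eq_mul] at this
    linarith
  have := discrim_le_zero h
  unfold discrim at this
  nlinarith

lemma pderiv_comm' (i j : ι) (P : MvPolynomial ι ℝ) :
    pderiv i (pderiv j P) = pderiv j (pderiv i P) := by
  classical
  induction P using MvPolynomial.induction_on with
  | C a => simp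
  | add p q hp hq => simp only [map_add, hp, hq]
  | mul_X p k hp =>
    simp only [pderiv_mul, map_add, hp, pderiv_X, Pi.single_apply]
    have : ∀ (u : Prop) [Decidable u] (l : ι), pderiv l (if u then (1 : MvPolynomial ι ℝ) else 0) = 0 := by
      intro u _ l; split_ifs <;> simp
    simp only [this]
    ring

lemma pderiv_Lop (i : ι) (P : MvPolynomial ι ℝ) :
    pderiv i (Lop P) = Lop (pderiv i P) + pderiv i P := by
  classical
  unfold Lop
  rw [map_sum]
  have : ∀ j, pderiv i (X j * pderiv j P - pderiv j (pderiv j P))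
     = (X j * pderiv j (pderiv i P) - pderiv j (pderiv j (pderiv i P)))
       + (if j = i then pderiv i P else 0) := by
    intro j
    rw [map_sub, pderiv_mul, pderiv_X, Pi.single_apply, pderiv_comm' i j, pderiv_comm' i j,
      pderiv_comm' i j]
    by_cases h : j = i
    · subst h; simp; ring
    · simp [h]
  simp_rw [this, Finset.sum_add_distrib]
  simp

/-- All derivatives of order `k+1` vanish. -/
def DegLE : ℕ → MvPolynomial ι ℝ → Prop
  | 0, P => ∀ i, pderiv i P = 0
  | (k+1), P => ∀ i, DegLE k (pderiv i P)

lemma DegLE.zero (k : ℕ) : DegLE k (0 : MvPolynomial ι ℝ) := by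
  induction k with
  | zero => intro i; simp
  | succ k ih => intro i; simpa using ih

lemma DegLE.add {k : ℕ} {P Q : MvPolynomial ι ℝ} (hP : DegLE k P) (hQ : DegLE k Q) :
    DegLE k (P + Q) := by
  induction k generalizing P Q with
  | zero => intro i; simp [hP i, hQ i]
  | succ k ih => intro i; rw [map_add]; exact ih (hP i) (hQ i)

lemma DegLE.smul {k : ℕ} {P : MvPolynomial ι ℝ} (c : ℝ) (hP : DegLE k P) :
    DegLE k (c • P) := by
  induction k generalizing P with
  | zero => intro i; rw [Derivation.map_smul, hP i, smul_zero]
  | succ k ih => intro i; rw [Derivation.map_smul]; exact ih (hP i)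

lemma DegLE.sum {k : ℕ} {κ : Type} (s : Finset κ) {P : κ → MvPolynomial ι ℝ}
    (hP : ∀ i ∈ s, DegLE k (P i)) : DegLE k (∑ i ∈ s, P i) := by
  classical
  induction s using Finset.induction_on with
  | empty => simpa using DegLE.zero k
  | insert a s ha ih =>
    rw [Finset.sum_insert ha]
    exact (hP a (by simp)).add (ih fun i hi => hP i (by simp [hi]))

lemma DegLE.succ {k : ℕ} {P : MvPolynomial ι ℝ} (hP : DegLE k P) : DegLE (k+1) P := by
  induction k generalizing P with
  | zero => intro i; rw [hP i]; exact DegLE.zero 0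
  | succ k ih => intro i; exact ih (hP i)

lemma DegLE.mono {k l : ℕ} (h : k ≤ l) {P : MvPolynomial ι ℝ} (hP : DegLE k P) : DegLE l P := by
  induction h with
  | refl => exact hP
  | step _ ih => exact ih.succ

lemma DegLE.mul {a b : ℕ} {P Q : MvPolynomial ι ℝ} (hP : DegLE a P) (hQ : DegLE b Q) :
    DegLE (a + b) (P * Q) := by
  induction h : a + b generalizing a b P Q with
  | zero =>
    obtain ⟨rfl, rfl⟩ : a = 0 ∧ b = 0 := by omega
    intro i
    rw [pderiv_mul, hP i, hQ i]; simp
  | succ n ih =>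
    intro i
    rw [pderiv_mul]
    refine DegLE.add ?_ ?_
    · rcases a with _ | a
      · rw [hP i, zero_mul]; exact DegLE.zero _
      · exact ih (hP i) hQ (by omega)
    · rcases b with _ | b
      · rw [hQ i, mul_zero]; exact DegLE.zero _
      · exact ih hP (hQ i) (by omega)

lemma const_of_DegLE_zero {P : MvPolynomial ι ℝ} (h : DegLE 0 P) : P = C (coeff 0 P) := by
  classical
  ext s
  rw [coeff_C]
  by_cases hs : 0 = s
  · simp [hs]
  · rw [if_neg hs]
    obtain ⟨i, hi⟩ : ∃ i, s i ≠ 0 := by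
      by_contra hcon
      push Not at hcon
      exact hs (Finsupp.ext fun i => by simp [hcon i])
    have h1 := congrArg (coeff (s - Finsupp.single i 1)) (h i)
    rw [coeff_zero, coeff_pderiv] at h1
    have e : s - Finsupp.single i 1 + Finsupp.single i 1 = s := by
      ext j
      by_cases hj : j = i
      · subst hj; simp; omega
      · simp [Finsupp.single_apply, Ne.symm hj]
    rw [e] at h1
    rcases mul_eq_zero.mp h1 with h2 | h2
    · exact h2
    · exfalso
      have : (0:ℝ) < (((s - Finsupp.single i 1 : ι →₀ ℕ) i : ℕ) : ℝ) + 1 := by positivity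
      linarith

lemma revPoincare (k : ℕ) (G : MvPolynomial ι ℝ) (h : DegLE k G) :
    ∑ i, Ex ((pderiv i G) ^ 2) ≤ k * Ex (G ^ 2)
    ∧ Ex ((Lop G) ^ 2) ≤ k * Ex (G * Lop G) := by
  have e1 : ∀ P : MvPolynomial ι ℝ, Ex (P * Lop P) = ∑ i, Ex ((pderiv i P) ^ 2) := by
    intro P; rw [Ex_mul_Lop]; simp_rw [sq]
  have e2 : ∀ P : MvPolynomial ι ℝ, Ex ((Lop P) ^ 2)
      = Ex (P * Lop P) + ∑ i, ∑ j, Ex ((pderiv j (pderiv i P)) ^ 2) := by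
    intro P
    rw [sq, mul_comm, Ex_mul_Lop, e1, ← Finset.sum_add_distrib]
    refine Finset.sum_congr rfl fun i _ => ?_
    rw [pderiv_Lop, add_mul, map_add, mul_comm, e1, sq, add_comm]
  induction k generalizing G with
  | zero =>
    have h0 : ∀ i, pderiv i G = 0 := h
    constructor
    · simp [h0]
    · rw [e2]; simp [h0, Lop]
  | succ k ih =>
    have h2 : Ex ((Lop G) ^ 2) ≤ ((k + 1 : ℕ) : ℝ) * Ex (G * Lop G) := by
      rw [e2, e1]
      have : ∑ i, ∑ j, Ex ((pderiv j (pderiv i G)) ^ 2) ≤ ∑ i, (k : ℝ) * Ex ((pderiv i G) ^ 2) :=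
        Finset.sum_le_sum fun i _ => (ih _ (h i)).1
      rw [← Finset.mul_sum] at this
      push_cast
      linarith
    refine ⟨?_, h2⟩
    rw [← e1]
    have hcs := Ex_cs G (Lop G)
    have hn : 0 ≤ Ex (G * Lop G) := by
      rw [e1]; exact Finset.sum_nonneg fun i _ => Ex_sq_nonneg _
    have hn2 := Ex_sq_nonneg G
    have h3 : Ex (G * Lop G) * Ex (G * Lop G) ≤ (((k + 1 : ℕ) : ℝ) * Ex (G ^ 2)) * Ex (G * Lop G) := by
      calc _ = Ex (G * Lop G) ^ 2 := by ring
        _ ≤ Ex (G ^ 2) * Ex (Lop G ^ 2) := hcs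
        _ ≤ Ex (G ^ 2) * (((k + 1 : ℕ) : ℝ) * Ex (G * Lop G)) := by gcongr
        _ = _ := by ring
    rcases hn.eq_or_lt with h0 | h0
    · rw [← h0]; positivity
    · exact le_of_mul_le_mul_right h3 h0

lemma Lop_sq (F : MvPolynomial ι ℝ) : Lop (F ^ 2) = 2 * (F * Lop F) - 2 * Gam F := by
  unfold Lop Gam
  rw [Finset.mul_sum, Finset.mul_sum, Finset.mul_sum, ← Finset.sum_sub_distrib]
  refine Finset.sum_congr rfl fun i _ => ?_
  simp only [sq, pderiv_mul, map_add]
  ring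

/-- Fourth moment inequality for eigenfunctions. -/
lemma fourth_ineq (m : ℕ) (F : MvPolynomial ι ℝ) (hd : DegLE m F) (hL : Lop F = (m : ℝ) • F) :
    3 * Ex ((Gam F) ^ 2) ≤ (m : ℝ) ^ 2 * Ex (F ^ 4) := by
  have h1 := (revPoincare (m + m) (F ^ 2) (by rw [sq]; exact hd.mul hd)).2
  have e0 : Lop (F ^ 2) = (2 * (m : ℝ)) • F ^ 2 - (2 : ℝ) • Gam F := by
    rw [Lop_sq, hL]
    simp only [MvPolynomial.smul_eq_C_mul, map_mul, map_ofNat]; ring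
  have e1 : (Lop (F ^ 2)) ^ 2 = (4 * (m : ℝ) ^ 2) • F ^ 4 - (8 * (m:ℝ)) • (F ^ 2 * Gam F)
      + (4 : ℝ) • (Gam F) ^ 2 := by
    rw [e0]; simp only [MvPolynomial.smul_eq_C_mul, map_mul, map_ofNat, map_pow]; ring
  have e2 : F ^ 2 * Lop (F ^ 2) = (2 * (m : ℝ)) • F ^ 4 - (2 : ℝ) • (F ^ 2 * Gam F) := by
    rw [e0]; simp only [MvPolynomial.smul_eq_C_mul, map_mul, map_ofNat]; ring
  rw [e1, e2] at h1
  simp only [map_add, map_sub, map_smul, smul_eq_mul] at h1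
  have h3 : Ex (F ^ 3 * Lop F) = 3 * Ex (F ^ 2 * Gam F) := by
    rw [Ex_mul_Lop]
    unfold Gam
    rw [Finset.mul_sum, map_sum, Finset.mul_sum]
    refine Finset.sum_congr rfl fun i _ => ?_
    rw [pderiv_pow, ← smul_eq_mul (3:ℝ), ← map_smul]
    congr 1
    simp only [MvPolynomial.smul_eq_C_mul, map_ofNat]
    push_cast
    ring
  have h4 : F ^ 3 * Lop F = (m : ℝ) • F ^ 4 := by
    rw [hL]; simp only [MvPolynomial.smul_eq_C_mul]; ring
  rw [h4, map_smul, smul_eq_mul] at h3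
  push_cast at h1
  nlinarith

lemma Ex_Gam (m : ℕ) (F : MvPolynomial ι ℝ) (hL : Lop F = (m : ℝ) • F) :
    Ex (Gam F) = m * Ex (F ^ 2) := by
  have := Ex_mul_Lop F F
  rw [hL, mul_smul_comm, map_smul, smul_eq_mul, ← sq] at this
  rw [this]
  unfold Gam
  rw [map_sum]
  simp_rw [sq]

end PolyCalc

section Chaos

open Polynomial in
lemma derivative_hermite_succ (n : ℕ) :
    derivative (hermite (n + 1)) = (n + 1 : ℤ[X]) * hermite n := by
  induction n with
  | zero => simp [hermite_succ]
  | succ n ih =>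
    rw [hermite_succ (n + 1), derivative_sub, derivative_mul, derivative_X, ih]
    rw [derivative_mul]
    have : derivative ((n : ℤ[X]) + 1) = 0 := by simp
    rw [this]
    rw [hermite_succ n]
    push_cast
    ring

variable {K : ℕ}

lemma pderiv_aeval_X (i j : Fin K) (p : Polynomial ℤ) :
    pderiv i (Polynomial.aeval (X j : MvPolynomial (Fin K) ℝ) p)
      = if j = i then Polynomial.aeval (X j : MvPolynomial (Fin K) ℝ) (Polynomial.derivative p) else 0 := by
  have := Derivation.map_aeval ((pderiv i : Derivation ℝ (MvPolynomial (Fin K) ℝ) _).restrictScalars ℤ) p (X j : MvPolynomial (Fin K) ℝ)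
  simp only [Derivation.restrictScalars_apply] at this
  rw [this, pderiv_X, Pi.single_apply]
  split_ifs <;> simp

lemma pderiv_rest (i : Fin K) (k : Fin K → ℕ) :
    pderiv i (∏ j ∈ Finset.univ.erase i,
      Polynomial.aeval (X j : MvPolynomial (Fin K) ℝ) (Polynomial.hermite (k j))) = 0 := by
  have gen : ∀ (s : Finset (Fin K)) (f : Fin K → MvPolynomial (Fin K) ℝ),
      (∀ j ∈ s, pderiv i (f j) = 0) → pderiv i (∏ j ∈ s, f j) = 0 := by
    intro s f
    induction s using Finset.induction_on with
    | empty => intro _; simp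
    | insert a s ha ih =>
      intro h
      rw [Finset.prod_insert ha, pderiv_mul, h a (by simp), ih fun j hj => h j (by simp [hj])]
      simp
  refine gen _ _ fun j hj => ?_
  rw [pderiv_aeval_X, if_neg (Finset.ne_of_mem_erase hj)]

lemma hermiteProd_split (i : Fin K) (k : Fin K → ℕ) :
    hermiteProd k = Polynomial.aeval (X i : MvPolynomial (Fin K) ℝ) (Polynomial.hermite (k i)) *
      ∏ j ∈ Finset.univ.erase i,
      Polynomial.aeval (X j : MvPolynomial (Fin K) ℝ) (Polynomial.hermite (k j)) := by
  unfold hermiteProd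
  exact (Finset.mul_prod_erase Finset.univ (fun j => Polynomial.aeval
    (X j : MvPolynomial (Fin K) ℝ) (Polynomial.hermite (k j))) (Finset.mem_univ i)).symm

lemma pderiv_hermiteProd_zero (i : Fin K) (k : Fin K → ℕ) (h : k i = 0) :
    pderiv i (hermiteProd k) = 0 := by
  rw [hermiteProd_split i k, pderiv_mul, pderiv_rest, pderiv_aeval_X, h]
  simp

lemma pderiv_hermiteProd_succ (i : Fin K) (k : Fin K → ℕ) (n : ℕ) (h : k i = n + 1) :
    pderiv i (hermiteProd k) = ((n : ℝ) + 1) • hermiteProd (Function.update k i n) := by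
  rw [hermiteProd_split i k, pderiv_mul, pderiv_rest, pderiv_aeval_X, h, if_pos rfl,
    derivative_hermite_succ, hermiteProd_split i (Function.update k i n)]
  have : ∏ j ∈ Finset.univ.erase i,
      Polynomial.aeval (X j : MvPolynomial (Fin K) ℝ) (Polynomial.hermite (Function.update k i n j))
      = ∏ j ∈ Finset.univ.erase i,
      Polynomial.aeval (X j : MvPolynomial (Fin K) ℝ) (Polynomial.hermite (k j)) :=
    Finset.prod_congr rfl fun j hj => by
      rw [Function.update_of_ne (Finset.ne_of_mem_erase hj)]
  rw [this]
  simp only [Function.update_self, mul_zero, add_zero, map_mul, map_add, map_natCast, map_one,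
    MvPolynomial.smul_eq_C_mul]
  ring

lemma Lop_hermiteProd (k : Fin K → ℕ) :
    Lop (hermiteProd k) = ((∑ i, k i : ℕ) : ℝ) • hermiteProd k := by
  unfold Lop
  have : ∀ i, X i * pderiv i (hermiteProd k) - pderiv i (pderiv i (hermiteProd k))
     = (k i : ℝ) • hermiteProd k := by
    intro i
    rcases h : k i with _ | n
    · simp [pderiv_hermiteProd_zero i k h]
    · rw [pderiv_hermiteProd_succ i k n h, Derivation.map_smul]
      have e : X i * hermiteProd (Function.update k i n) - pderiv i (hermiteProd (Function.update k i n))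
          = hermiteProd k := by
        rw [hermiteProd_split i (Function.update k i n), pderiv_mul, pderiv_rest, pderiv_aeval_X,
          if_pos rfl, Function.update_self, hermiteProd_split i k, h, Polynomial.hermite_succ]
        have : ∏ j ∈ Finset.univ.erase i,
            Polynomial.aeval (X j : MvPolynomial (Fin K) ℝ) (Polynomial.hermite (Function.update k i n j))
            = ∏ j ∈ Finset.univ.erase i,
            Polynomial.aeval (X j : MvPolynomial (Fin K) ℝ) (Polynomial.hermite (k j)) :=
          Finset.prod_congr rfl fun j hj => by
            rw [Function.update_of_ne (Finset.ne_of_mem_erase hj)]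
        rw [this]
        simp only [map_sub, map_mul, Polynomial.aeval_X]
        ring
      rw [mul_smul_comm, ← smul_sub, e]
      push_cast
      rfl
  simp_rw [this, ← Finset.sum_smul]
  push_cast
  rfl

lemma Lop_add (P Q : MvPolynomial (Fin K) ℝ) : Lop (P + Q) = Lop P + Lop Q := by
  unfold Lop
  rw [← Finset.sum_add_distrib]
  refine Finset.sum_congr rfl fun i _ => ?_
  simp only [map_add]; ring

lemma Lop_smul (c : ℝ) (P : MvPolynomial (Fin K) ℝ) : Lop (c • P) = c • Lop P := by
  unfold Lop
  rw [Finset.smul_sum]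
  refine Finset.sum_congr rfl fun i _ => ?_
  simp only [Derivation.map_smul, smul_sub, mul_smul_comm]

lemma chaos_Lop {m : ℕ} {P : MvPolynomial (Fin K) ℝ} (h : P ∈ chaos K m) :
    Lop P = (m : ℝ) • P := by
  unfold chaos at h
  induction h using Submodule.span_induction with
  | mem x hx => obtain ⟨k, hk, rfl⟩ := hx; rw [Lop_hermiteProd, hk]
  | zero => simp [Lop]
  | add x y _ _ hx hy => rw [Lop_add, hx, hy, smul_add]
  | smul a x _ hx => rw [Lop_smul, hx, smul_comm]

lemma chaos_pderiv {m : ℕ} {P : MvPolynomial (Fin K) ℝ} (h : P ∈ chaos K (m + 1)) (i : Fin K) :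
    pderiv i P ∈ chaos K m := by
  unfold chaos at h
  induction h using Submodule.span_induction with
  | mem x hx =>
    obtain ⟨k, hk, rfl⟩ := hx
    rcases h : k i with _ | n
    · rw [pderiv_hermiteProd_zero i k h]; exact Submodule.zero_mem _
    · rw [pderiv_hermiteProd_succ i k n h]
      refine Submodule.smul_mem _ _ (Submodule.subset_span ⟨_, ?_, rfl⟩)
      rw [Finset.sum_update_of_mem (Finset.mem_univ i)]
      rw [← Finset.add_sum_erase _ _ (Finset.mem_univ i), h] at hk
      rw [Finset.sdiff_singleton_eq_erase]
      omega
  | zero => simp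
  | add x y _ _ hx hy => rw [map_add]; exact Submodule.add_mem _ hx hy
  | smul a x _ hx => rw [Derivation.map_smul]; exact Submodule.smul_mem _ _ hx

lemma chaos_zero_pderiv {P : MvPolynomial (Fin K) ℝ} (h : P ∈ chaos K 0) (i : Fin K) :
    pderiv i P = 0 := by
  unfold chaos at h
  induction h using Submodule.span_induction with
  | mem x hx =>
    obtain ⟨k, hk, rfl⟩ := hx
    exact pderiv_hermiteProd_zero i k (by simpa using (Finset.sum_eq_zero_iff.mp hk) i)
  | zero => simp
  | add x y _ _ hx hy => rw [map_add, hx, hy, add_zero]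
  | smul a x _ hx => rw [Derivation.map_smul, hx, smul_zero]

lemma chaos_DegLE {m : ℕ} {P : MvPolynomial (Fin K) ℝ} (h : P ∈ chaos K m) : DegLE m P := by
  induction m generalizing P with
  | zero => exact fun i => chaos_zero_pderiv h i
  | succ m ih => exact fun i => ih (chaos_pderiv h i)

end Chaos



section Tools

/-- `j` independent Gaussian vectors. -/
noncomputable def gaussOm (j : ℕ) (ι : Type) [Fintype ι] : Measure (Fin j → ι → ℝ) :=
  Measure.pi fun _ => gaussPi ι

instance gaussOm_prob (j : ℕ) (ι : Type) [Fintype ι] : IsProbabilityMeasure (gaussOm j ι) := by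
  unfold gaussOm; infer_instance

variable {ι : Type} [Fintype ι]

lemma lintegral_gaussOm_succ (j : ℕ) (f : (Fin (j+1) → ι → ℝ) → ENNReal) (hf : Measurable f) :
    ∫⁻ w, f w ∂gaussOm (j+1) ι
      = ∫⁻ z, ∫⁻ w, f (Fin.cons z w) ∂gaussOm j ι ∂gaussPi ι := by
  have h := (measurePreserving_piFinSuccAbove (fun _ : Fin (j+1) => gaussPi ι) 0).symm
  have h2 := h.lintegral_comp hf
  unfold gaussOm
  rw [← h2]
  rw [lintegral_prod]
  · refine lintegral_congr fun z => lintegral_congr fun w => ?_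
    simp only [MeasurableEquiv.piFinSuccAbove_symm_apply, Fin.insertNthEquiv, Fin.insertNth_zero',
      Equiv.coe_fn_mk]
  · exact (hf.comp h.measurable).aemeasurable

/-- exponential weight -/
noncomputable def ee (t : ℝ) : ENNReal := ENNReal.ofReal (Real.exp (-t))

lemma measurable_ee : Measurable ee := by
  unfold ee; fun_prop

lemma ee_le_one {t : ℝ} (h : 0 ≤ t) : ee t ≤ 1 := by
  unfold ee
  rw [← ENNReal.ofReal_one]
  exact ENNReal.ofReal_le_ofReal (by rw [Real.exp_le_one_iff]; linarith)

lemma ee_anti {s t : ℝ} (h : s ≤ t) : ee t ≤ ee s :=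
  ENNReal.ofReal_le_ofReal (by gcongr)

lemma lintegral_ee {Ω : Type} [MeasurableSpace Ω] (μ : Measure Ω) [IsProbabilityMeasure μ]
    (X : Ω → ℝ) (hX : Measurable X) (h0 : ∀ x, 0 ≤ X x) :
    Integrable (fun x => Real.exp (-X x)) μ ∧
    ∫⁻ x, ee (X x) ∂μ = ENNReal.ofReal (∫ x, Real.exp (-X x) ∂μ) := by
  have hi : Integrable (fun x => Real.exp (-X x)) μ := by
    refine Integrable.of_bound (C := 1) (by fun_prop) (Filter.Eventually.of_forall fun x => ?_)
    rw [Real.norm_eq_abs, abs_of_pos (Real.exp_pos _), Real.exp_le_one_iff]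
    linarith [h0 x]
  refine ⟨hi, ?_⟩
  rw [ofReal_integral_eq_lintegral_ofReal hi (Filter.Eventually.of_forall fun x => (Real.exp_pos _).le)]
  rfl

lemma gauss_duality_real {κ : Type} [Fintype κ] (A : ι → κ → ℝ) :
    ∫ z, Real.exp (-(∑ k, (∑ i, z i * A i k) ^ 2) / 2) ∂gaussPi ι
     = ∫ y, Real.exp (-(∑ i, (∑ k, A i k * y k) ^ 2) / 2) ∂gaussPi κ := by
  simp_rw [← integral_cos_lin]
  rw [integral_integral_swap]
  · refine integral_congr_ae (Filter.Eventually.of_forall fun y => ?_)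
    refine integral_congr_ae (Filter.Eventually.of_forall fun z => ?_)
    simp only
    congr 1
    simp_rw [Finset.sum_mul]
    rw [Finset.sum_comm]
    refine Finset.sum_congr rfl fun i _ => ?_
    refine Finset.sum_congr rfl fun k _ => ?_
    ring
  · refine Integrable.of_bound (C := 1) ?_ (Filter.Eventually.of_forall fun x => ?_)
    · refine Continuous.aestronglyMeasurable ?_
      simp only [Function.uncurry_def]
      fun_prop
    · simp only [Function.uncurry, Real.norm_eq_abs]
      exact Real.abs_cos_le_one _

/-- Duality: the Laplace transform of a Gaussian quadratic form is invariant by transposition. -/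
lemma gauss_duality {κ : Type} [Fintype κ] (A : ι → κ → ℝ) (l : ℝ) (hl : 0 ≤ l) :
    ∫⁻ z, ee (l * ∑ k, (∑ i, z i * A i k) ^ 2) ∂gaussPi ι
     = ∫⁻ y, ee (l * ∑ i, (∑ k, A i k * y k) ^ 2) ∂gaussPi κ := by
  have h := gauss_duality_real (fun i k => √(2 * l) * A i k)
  have hs : √(2 * l) ^ 2 = 2 * l := Real.sq_sqrt (by positivity)
  rw [(lintegral_ee (gaussPi ι) _ (by fun_prop) (fun z => by positivity)).2,
    (lintegral_ee (gaussPi κ) _ (by fun_prop) (fun z => by positivity)).2]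
  have e1 : ∀ z : ι → ℝ, -(∑ k, (∑ i, z i * (√(2 * l) * A i k)) ^ 2) / 2
     = -(l * ∑ k, (∑ i, z i * A i k) ^ 2) := by
    intro z
    have : ∀ k, (∑ i, z i * (√(2 * l) * A i k)) ^ 2 = (2 * l) * (∑ i, z i * A i k) ^ 2 := by
      intro k
      conv_rhs => rw [← hs, ← mul_pow, Finset.mul_sum]
      congr 1
      exact Finset.sum_congr rfl fun i _ => by ring
    simp_rw [this, ← Finset.mul_sum]
    ring
  have e2 : ∀ y : κ → ℝ, -(∑ i, (∑ k, √(2 * l) * A i k * y k) ^ 2) / 2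
     = -(l * ∑ i, (∑ k, A i k * y k) ^ 2) := by
    intro z
    have : ∀ i, (∑ k, √(2 * l) * A i k * z k) ^ 2 = (2 * l) * (∑ k, A i k * z k) ^ 2 := by
      intro k
      conv_rhs => rw [← hs, ← mul_pow, Finset.mul_sum]
      congr 1
      exact Finset.sum_congr rfl fun i _ => by ring
    simp_rw [this, ← Finset.mul_sum]
    ring
  simp_rw [e1, e2] at h
  rw [h]

/-- linear combinations of independent Gaussian vectors -/
lemma map_comb_gaussOm (r : ℕ) (c : Fin r → ℝ) (h : ∑ l, c l ^ 2 = 1) :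
    Measure.map (fun U : Fin r → ι → ℝ => ∑ l, c l • U l) (gaussOm r ι) = gaussPi ι := by
  classical
  have hm : Measurable (fun U : Fin r → ι → ℝ => ∑ l, c l • U l) := by fun_prop
  haveI : IsProbabilityMeasure (Measure.map (fun U : Fin r → ι → ℝ => ∑ l, c l • U l)
     (gaussOm r ι)) :=
    Measure.isProbabilityMeasure_map hm.aemeasurable
  refine Measure.ext_of_charFunDual (funext fun L => ?_)
  rw [charFunDual_apply, charFunDual_apply, integral_map hm.aemeasurable (by fun_prop)]
  have key : ∀ c : ℝ, ∫ u : ι → ℝ, Complex.exp (((c * L u : ℝ) : ℂ) * Complex.I) ∂gaussPi ι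
      = Complex.exp (-((c^2 * ∑ i, (L (Pi.single i 1)) ^ 2 : ℝ) : ℂ) / 2) := by
    intro c
    have := integral_cexp_lin (fun i => c * L (Pi.single i 1))
    simp_rw [mul_pow, ← Finset.mul_sum] at this
    rw [← this]
    congr 1
    ext u
    rw [dual_eq_sum L u, Finset.mul_sum]
    congr 3
    exact Finset.sum_congr rfl fun i _ => by ring
  have e : ∀ p : Fin r → ι → ℝ, Complex.exp ((L (∑ l, c l • p l) : ℂ) * Complex.I)
     = ∏ l, Complex.exp (((c l * L (p l) : ℝ) : ℂ) * Complex.I) := by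
    intro p
    rw [← Complex.exp_sum]
    congr 1
    rw [map_sum]
    push_cast
    rw [Finset.sum_mul]
    refine Finset.sum_congr rfl fun l _ => ?_
    rw [map_smul]
    simp only [smul_eq_mul]
    push_cast
    ring
  simp_rw [e]
  unfold gaussOm
  rw [integral_fintype_prod_eq_prod (f := fun l (u : ι → ℝ) =>
    Complex.exp (((c l * L u : ℝ) : ℂ) * Complex.I))]
  simp_rw [key]
  have := key 1
  simp only [one_mul] at this
  rw [this, ← Complex.exp_sum]
  congr 1
  rw [← Finset.sum_div, Finset.sum_neg_distrib, ← Complex.ofReal_sum, ← Finset.sum_mul, h]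
  norm_num

lemma lintegral_comb_gaussOm (r : ℕ) (c : Fin r → ℝ) (h : ∑ l, c l ^ 2 = 1)
    (f : (ι → ℝ) → ENNReal) (hf : Measurable f) :
    ∫⁻ U, f (∑ l, c l • U l) ∂gaussOm r ι = ∫⁻ z, f z ∂gaussPi ι := by
  conv_rhs => rw [← map_comb_gaussOm r c h]
  rw [lintegral_map hf (by fun_prop)]

lemma lintegral_coord_gaussOm (r : ℕ) (l : Fin r)
    (f : (ι → ℝ) → ENNReal) (hf : Measurable f) :
    ∫⁻ U, f (U l) ∂gaussOm r ι = ∫⁻ z, f z ∂gaussPi ι := by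
  classical
  rw [← lintegral_comb_gaussOm r (Pi.single l 1) (by simp [Pi.single_apply]) f hf]
  simp [Pi.single_apply]

/-- Jensen step. -/
lemma jensen_step (r : ℕ) (hr : 0 < r) (b : ι → ℝ) (l : ℝ) (hl : 0 ≤ l)
    (G : Set (Fin r → ι → ℝ)) (hG : MeasurableSet G) (hG2 : (1:ℝ) / 2 ≤ (gaussOm r ι).real G) :
    ee (l * ∑ i, b i ^ 2)
      ≤ 2 * ∫⁻ U in G, ee (l / (2 * r) * ∑ a, (∑ i, U a i * b i) ^ 2) ∂gaussOm r ι := by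
  set t := l * ∑ i, b i ^ 2 with ht
  have ht0 : 0 ≤ t := by positivity
  set X : (Fin r → ι → ℝ) → ℝ := fun U => l / (2 * r) * ∑ a, (∑ i, U a i * b i) ^ 2 with hX
  have hX0 : ∀ U, 0 ≤ X U := fun U => by positivity
  have hXm : Measurable X := by fun_prop
  have hX2 : ∫⁻ U, ENNReal.ofReal (X U) ∂gaussOm r ι = ENNReal.ofReal (t / 2) := by
    have e1 : ∀ U, ENNReal.ofReal (X U) = ENNReal.ofReal (l / (2 * r)) *
        ∑ a, ENNReal.ofReal ((∑ i, U a i * b i) ^ 2) := by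
      intro U
      rw [hX]
      simp only
      rw [ENNReal.ofReal_mul (by positivity), ENNReal.ofReal_sum_of_nonneg fun i _ => by positivity]
    simp_rw [e1]
    rw [lintegral_const_mul _ (by fun_prop), lintegral_finsetSum _ (fun i _ => by fun_prop)]
    have e2 : ∀ a : Fin r, ∫⁻ U, ENNReal.ofReal ((∑ i, U a i * b i) ^ 2) ∂gaussOm r ι
        = ENNReal.ofReal (∑ i, b i ^ 2) := by
      intro a
      rw [lintegral_coord_gaussOm r a (fun z => ENNReal.ofReal ((∑ i, z i * b i) ^ 2)) (by fun_prop)]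
      rw [← integral_lin_sq, ofReal_integral_eq_lintegral_ofReal]
      · simp_rw [mul_comm]
      · have := integrable_poly ((∑ i, C (b i) * MvPolynomial.X i) ^ 2 : MvPolynomial ι ℝ)
        simpa using this
      · exact Filter.Eventually.of_forall fun z => by positivity
    simp_rw [e2]
    simp only [Finset.sum_const, Finset.card_univ, Fintype.card_fin, nsmul_eq_mul]
    rw [← ENNReal.ofReal_natCast, ← ENNReal.ofReal_mul (by positivity), ← ENNReal.ofReal_mul (by positivity)]
    congr 1
    have : (r:ℝ) ≠ 0 := by positivity
    rw [ht]
    field_simp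
  have hXi : Integrable X (gaussOm r ι) := by
    refine ⟨hXm.aestronglyMeasurable, ?_⟩
    rw [hasFiniteIntegral_iff_ofReal (Filter.Eventually.of_forall hX0), hX2]
    exact ENNReal.ofReal_lt_top
  have hXint : ∫ U, X U ∂gaussOm r ι = t / 2 := by
    rw [integral_eq_lintegral_of_nonneg_ae (Filter.Eventually.of_forall hX0) hXm.aestronglyMeasurable,
      hX2, ENNReal.toReal_ofReal (by positivity)]
  have hei := (lintegral_ee (gaussOm r ι) X hXm hX0).1
  have hmain : Real.exp (-t) ≤ 2 * ∫ U in G, Real.exp (-X U) ∂gaussOm r ι := by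
    have h1 : ∫ U in G, Real.exp (-t) * (1 + t - X U) ∂gaussOm r ι
       ≤ ∫ U in G, Real.exp (-X U) ∂gaussOm r ι := by
      refine integral_mono ?_ hei.integrableOn ?_
      · exact (((integrable_const (1+t)).sub hXi).const_mul _).integrableOn
      · intro U
        simp only
        have : Real.exp (-X U) = Real.exp (-t) * Real.exp (t - X U) := by
          rw [← Real.exp_add]; congr 1; ring
        rw [this]
        have := Real.add_one_le_exp (t - X U)
        gcongr
        linarith
    have h2 : ∫ U in G, Real.exp (-t) * (1 + t - X U) ∂gaussOm r ι
        = Real.exp (-t) * ((1 + t) * (gaussOm r ι).real G - ∫ U in G, X U ∂gaussOm r ι) := by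
      rw [integral_const_mul, integral_sub (integrable_const _).integrableOn hXi.integrableOn,
        setIntegral_const, smul_eq_mul]
      ring
    have h3 : ∫ U in G, X U ∂gaussOm r ι ≤ t / 2 := by
      rw [← hXint]
      exact setIntegral_le_integral hXi (Filter.Eventually.of_forall hX0)
    have h4 : (1:ℝ)/2 ≤ (1 + t) * (gaussOm r ι).real G - ∫ U in G, X U ∂gaussOm r ι := by
      nlinarith
    have h5 := Real.exp_pos (-t)
    nlinarith
  calc ee t = ENNReal.ofReal (Real.exp (-t)) := rfl
    _ ≤ ENNReal.ofReal (2 * ∫ U in G, Real.exp (-X U) ∂gaussOm r ι) := ENNReal.ofReal_le_ofReal hmain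
    _ = 2 * ∫⁻ U in G, ee (X U) ∂gaussOm r ι := by
      rw [ENNReal.ofReal_mul (by norm_num), ofReal_integral_eq_lintegral_ofReal hei.integrableOn
        (Filter.Eventually.of_forall fun x => (Real.exp_pos _).le)]
      simp [ee]

lemma lintegral_rpow_gauss : Integrable (fun x : ℝ => |x| ^ (-(1/2 : ℝ))) (gaussianReal 0 1) := by
  have hm : Measurable (fun x : ℝ => |x| ^ (-(1/2 : ℝ))) := by fun_prop
  rw [gaussianReal_of_var_ne_zero _ (by norm_num)]
  have hd : Measurable (gaussianPDF 0 1) := measurable_gaussianPDF 0 1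
  have h1 : IntegrableOn (fun x : ℝ => |x| ^ (-(1/2 : ℝ))) (Set.Icc (-1) 1) volume := by
    have ha : IntervalIntegrable (fun x : ℝ => |x| ^ (-(1/2 : ℝ))) volume 0 1 := by
      refine (intervalIntegral.intervalIntegrable_rpow' (a := 0) (b := 1) (r := -(1/2:ℝ)) (by norm_num)).congr ?_
      intro x hx
      rw [Set.uIoc_of_le (by norm_num)] at hx
      simp only
      rw [abs_of_pos hx.1]
    have hb : IntervalIntegrable (fun x : ℝ => |x| ^ (-(1/2 : ℝ))) volume (-1) 0 := by
      have := (IntervalIntegrable.iff_comp_neg (f := fun x : ℝ => |x| ^ (-(1/2 : ℝ))) (a := 0) (b := 1)).mp ha |>.symm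
      simpa using this
    have := hb.trans ha
    rwa [intervalIntegrable_iff_integrableOn_Icc_of_le (by norm_num)] at this
  refine ⟨hm.aestronglyMeasurable, ?_⟩
  unfold HasFiniteIntegral
  have e : ∫⁻ x in (Set.Icc (-1:ℝ) 1), ‖|x| ^ (-(1/2 : ℝ))‖ₑ ∂(volume.withDensity (gaussianPDF 0 1)) 
     ≤ ∫⁻ x in (Set.Icc (-1:ℝ) 1), ‖|x| ^ (-(1/2 : ℝ))‖ₑ ∂volume := by
    rw [setLIntegral_withDensity_eq_setLIntegral_mul _ hd (by fun_prop) measurableSet_Icc]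
    refine lintegral_mono fun x => ?_
    simp only [Pi.mul_apply]
    have : gaussianPDF 0 1 x ≤ 1 := by
      unfold gaussianPDF gaussianPDFReal
      rw [← ENNReal.ofReal_one]
      refine ENNReal.ofReal_le_ofReal ?_
      refine mul_le_one₀ ?_ (Real.exp_pos _).le ?_
      · rw [inv_le_one_iff₀]; right
        rw [Real.one_le_sqrt]
        simp only [NNReal.coe_one, mul_one]
        linarith [Real.pi_gt_three]
      · rw [Real.exp_le_one_iff]
        simp only [NNReal.coe_one, mul_one, neg_div]
        have : 0 ≤ (x - 0) ^ 2 / 2 := by positivity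
        linarith
    calc _ ≤ 1 * ‖|x| ^ (-(1/2 : ℝ))‖ₑ := by gcongr
      _ = _ := one_mul _
  have hp : IsProbabilityMeasure (volume.withDensity (gaussianPDF 0 1)) := by
    rw [← gaussianReal_of_var_ne_zero _ (by norm_num)]; infer_instance
  have e2 : ∫⁻ x in (Set.Icc (-1:ℝ) 1)ᶜ, ‖|x| ^ (-(1/2 : ℝ))‖ₑ ∂(volume.withDensity (gaussianPDF 0 1)) 
     ≤ 1 := by
    calc _ ≤ ∫⁻ x in (Set.Icc (-1:ℝ) 1)ᶜ, 1 ∂(volume.withDensity (gaussianPDF 0 1)) := by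
          refine setLIntegral_mono measurable_const fun x hx => ?_
          have hx1 : 1 ≤ |x| := by
            by_contra hc
            push Not at hc
            exact hx (by rw [Set.mem_Icc]; exact abs_le.mp hc.le)
          rw [Real.enorm_eq_ofReal (by positivity), ← ENNReal.ofReal_one]
          refine ENNReal.ofReal_le_ofReal ?_
          exact Real.rpow_le_one_of_one_le_of_nonpos hx1 (by norm_num)
      _ ≤ 1 := by rw [setLIntegral_const, one_mul]; exact prob_le_one
  rw [← lintegral_add_compl _ (measurableSet_Icc (a := (-1:ℝ)) (b := 1))]
  refine ENNReal.add_lt_top.mpr ⟨e.trans_lt h1.2, e2.trans_lt ENNReal.one_lt_top⟩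

/-- Negative moments of the norm of a Gaussian vector in high dimension. -/
lemma neg_moment_norm (q : ℕ) :
    ∫⁻ s, (ENNReal.ofReal (∑ l, s l ^ 2) ^ q)⁻¹ ∂gaussPi (Fin (4 * q)) < ⊤ := by
  have h : Integrable (fun s : Fin (4*q) → ℝ => ∏ l, |s l| ^ (-(1/2 : ℝ))) (gaussPi (Fin (4*q))) := by
    unfold gaussPi
    exact Integrable.fintype_prod (f := fun _ (x : ℝ) => |x| ^ (-(1/2 : ℝ))) fun i => lintegral_rpow_gauss
  have hz : ∀ᵐ s ∂gaussPi (Fin (4*q)), ∀ l, s l ≠ 0 := by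
    rw [ae_all_iff]
    intro l
    have hp := measurePreserving_eval (fun _ : Fin (4*q) => gaussianReal 0 1) l
    have hna : ∀ᵐ x ∂(gaussianReal 0 1), x ≠ 0 := by
      haveI := noAtoms_gaussianReal (μ := 0) (v := 1) (by norm_num)
      exact Measure.ae_ne _ _
    exact hp.quasiMeasurePreserving.ae hna
  refine lt_of_le_of_lt (lintegral_mono_ae ?_) h.2
  filter_upwards [hz] with s hs
  have hprod : 0 ≤ ∏ l, |s l| ^ (-(1/2 : ℝ)) := Finset.prod_nonneg fun l _ => by positivity
  rw [Real.enorm_eq_ofReal hprod, ← ENNReal.ofReal_pow (by positivity)]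
  rcases Nat.eq_zero_or_pos q with rfl | hq
  · simp
  have hpos : 0 < ∑ l, s l ^ 2 := by
    have l0 : Fin (4 * q) := ⟨0, by omega⟩
    calc 0 < s l0 ^ 2 := by have := hs l0; positivity
      _ ≤ _ := Finset.single_le_sum (f := fun l => s l ^ 2) (fun l _ => sq_nonneg _) (Finset.mem_univ l0)
  rw [← ENNReal.ofReal_inv_of_pos (by positivity)]
  refine ENNReal.ofReal_le_ofReal ?_
  have e1 : ((∑ l, s l ^ 2) ^ q)⁻¹ = ∏ l : Fin (4 * q), (∑ l, s l ^ 2) ^ (-(1/4 : ℝ)) := by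
    rw [Finset.prod_const, Finset.card_univ, Fintype.card_fin, ← Real.rpow_natCast, ← Real.rpow_natCast,
      ← Real.rpow_mul hpos.le, ← Real.rpow_neg hpos.le]
    congr 1
    push_cast
    ring
  rw [e1]
  refine Finset.prod_le_prod (fun l _ => by positivity) fun l _ => ?_
  have e2 : |s l| ^ (-(1/2 : ℝ)) = (s l ^ 2) ^ (-(1/4 : ℝ)) := by
    rw [← sq_abs, ← Real.rpow_natCast, ← Real.rpow_mul (abs_nonneg _)]
    congr 1
    push_cast
    ring
  rw [e2]
  refine Real.rpow_le_rpow_of_nonpos (by have := hs l; positivity) ?_ (by norm_num)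
  exact Finset.single_le_sum (f := fun l => s l ^ 2) (fun l _ => sq_nonneg _) (Finset.mem_univ l)

end Tools



section Decoupled

variable {ι : Type} [Fintype ι]

/-- directional derivative -/
noncomputable def ddL (z : ι → ℝ) : MvPolynomial ι ℝ →ₗ[ℝ] MvPolynomial ι ℝ :=
  ∑ i, z i • (pderiv i : Derivation ℝ (MvPolynomial ι ℝ) (MvPolynomial ι ℝ)).toLinearMap

lemma ddL_apply (z : ι → ℝ) (P : MvPolynomial ι ℝ) : ddL z P = ∑ i, z i • pderiv i P := by
  simp [ddL]

lemma ddL_add (y z : ι → ℝ) (P : MvPolynomial ι ℝ) : ddL (y + z) P = ddL y P + ddL z P := by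
  simp [ddL_apply, add_smul, Finset.sum_add_distrib]

lemma ddL_smul (c : ℝ) (z : ι → ℝ) (P : MvPolynomial ι ℝ) : ddL (c • z) P = c • ddL z P := by
  simp [ddL_apply, Finset.smul_sum, mul_smul]

lemma ddL_sum {κ : Type} (s : Finset κ) (z : κ → ι → ℝ) (P : MvPolynomial ι ℝ) :
    ddL (∑ l ∈ s, z l) P = ∑ l ∈ s, ddL (z l) P := by
  classical
  induction s using Finset.induction_on with
  | empty => simp [ddL_apply]
  | insert a s ha ih => rw [Finset.sum_insert ha, Finset.sum_insert ha, ddL_add, ih]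

/-- `tv j w P` is the gradient at zero of the `j`-fold directional derivative of `P`. -/
noncomputable def tv : (j : ℕ) → (Fin j → ι → ℝ) → MvPolynomial ι ℝ →ₗ[ℝ] (ι → ℝ)
  | 0, _ => LinearMap.pi fun k => (MvPolynomial.aeval (0 : ι → ℝ)).toLinearMap ∘ₗ
      (pderiv k : Derivation ℝ (MvPolynomial ι ℝ) (MvPolynomial ι ℝ)).toLinearMap
  | (j+1), w => tv j (Fin.tail w) ∘ₗ ddL (w 0)

lemma tv_zero (w : Fin 0 → ι → ℝ) (P : MvPolynomial ι ℝ) (k : ι) :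
    tv 0 w P k = eval 0 (pderiv k P) := by
  simp [tv, MvPolynomial.coe_aeval_eq_eval]

lemma tv_succ (j : ℕ) (w : Fin (j+1) → ι → ℝ) (P : MvPolynomial ι ℝ) :
    tv (j+1) w P = tv j (Fin.tail w) (ddL (w 0) P) := rfl

lemma tv_cons (j : ℕ) (z : ι → ℝ) (w : Fin j → ι → ℝ) (P : MvPolynomial ι ℝ) :
    tv (j+1) (Fin.cons z w) P = tv j w (ddL z P) := by
  rw [tv_succ, Fin.tail_cons, Fin.cons_zero]

lemma tv_ddL (j : ℕ) (w : Fin j → ι → ℝ) (z : ι → ℝ) (P : MvPolynomial ι ℝ) (k : ι) :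
    tv j w (ddL z P) k = ∑ i, z i * tv j w (pderiv i P) k := by
  rw [ddL_apply, map_sum, Finset.sum_apply]
  exact Finset.sum_congr rfl fun i _ => by rw [map_smul, Pi.smul_apply, smul_eq_mul]

lemma continuous_tv (j : ℕ) (P : MvPolynomial ι ℝ) (k : ι) :
    Continuous fun w : Fin j → ι → ℝ => tv j w P k := by
  induction j generalizing P with
  | zero => simp_rw [tv_zero]; exact continuous_const
  | succ j ih =>
    simp_rw [tv_succ, tv_ddL]
    refine continuous_finset_sum _ fun i _ => Continuous.mul (by fun_prop) ?_
    refine (ih (pderiv i P)).comp ?_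
    unfold Fin.tail
    fun_prop

/-- inner product of the top derivatives -/
noncomputable def Dg (j : ℕ) (w : Fin j → ι → ℝ) (P Q : MvPolynomial ι ℝ) : ℝ :=
  ∑ k, tv j w P k * tv j w Q k

noncomputable def Nn (j : ℕ) (w : Fin j → ι → ℝ) (P : MvPolynomial ι ℝ) : ℝ :=
  ∑ k, (tv j w P k) ^ 2

lemma Nn_eq (j : ℕ) (w : Fin j → ι → ℝ) (P : MvPolynomial ι ℝ) : Nn j w P = Dg j w P P := by
  unfold Nn Dg; simp_rw [sq]

lemma Nn_nonneg (j : ℕ) (w : Fin j → ι → ℝ) (P : MvPolynomial ι ℝ) : 0 ≤ Nn j w P := by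
  unfold Nn; positivity

lemma Nn_smul (j : ℕ) (w : Fin j → ι → ℝ) (c : ℝ) (P : MvPolynomial ι ℝ) :
    Nn j w (c • P) = c ^ 2 * Nn j w P := by
  unfold Nn
  rw [Finset.mul_sum]
  exact Finset.sum_congr rfl fun k _ => by rw [map_smul, Pi.smul_apply, smul_eq_mul]; ring

lemma Nn_cons (j : ℕ) (z : ι → ℝ) (w : Fin j → ι → ℝ) (P : MvPolynomial ι ℝ) :
    Nn (j+1) (Fin.cons z w) P = Nn j w (ddL z P) := by
  unfold Nn; rw [tv_cons]

lemma continuous_Dg (j : ℕ) (P Q : MvPolynomial ι ℝ) :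
    Continuous fun w : Fin j → ι → ℝ => Dg j w P Q := by
  unfold Dg
  exact continuous_finset_sum _ fun k _ => (continuous_tv j P k).mul (continuous_tv j Q k)

lemma continuous_Nn (j : ℕ) (P : MvPolynomial ι ℝ) :
    Continuous fun w : Fin j → ι → ℝ => Nn j w P := by
  simp_rw [Nn_eq]; exact continuous_Dg j P P

lemma continuous_Dg_ddL {E : Type} [TopologicalSpace E] (j : ℕ) (P Q : MvPolynomial ι ℝ)
    (y z : E → ι → ℝ) (hy : Continuous y) (hz : Continuous z) (w : E → Fin j → ι → ℝ)
    (hw : Continuous w) :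
    Continuous fun e => Dg j (w e) (ddL (y e) P) (ddL (z e) Q) := by
  unfold Dg
  simp_rw [tv_ddL]
  refine continuous_finset_sum _ fun k _ => Continuous.mul ?_ ?_
  · refine continuous_finset_sum _ fun i _ => Continuous.mul (by fun_prop) ?_
    exact (continuous_tv j _ k).comp hw
  · refine continuous_finset_sum _ fun i _ => Continuous.mul (by fun_prop) ?_
    exact (continuous_tv j _ k).comp hw

lemma continuous_Nn_ddL {E : Type} [TopologicalSpace E] (j : ℕ) (P : MvPolynomial ι ℝ)
    (y : E → ι → ℝ) (hy : Continuous y) (w : E → Fin j → ι → ℝ)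
    (hw : Continuous w) :
    Continuous fun e => Nn j (w e) (ddL (y e) P) := by
  simp_rw [Nn_eq]; exact continuous_Dg_ddL j P P y y hy hy w hw

/-- variance-like quantity -/
noncomputable def Vv (j : ℕ) (P : MvPolynomial ι ℝ) : ENNReal :=
  ∫⁻ w, ENNReal.ofReal ((Nn j w P - 1) ^ 2) ∂gaussOm j ι

lemma Vv_succ (j : ℕ) (P : MvPolynomial ι ℝ) :
    Vv (j+1) P = ∫⁻ z, ∫⁻ w, ENNReal.ofReal ((Nn j w (ddL z P) - 1) ^ 2) ∂gaussOm j ι ∂gaussPi ι := by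
  unfold Vv
  rw [lintegral_gaussOm_succ]
  · simp_rw [Nn_cons]
  · have := (continuous_Nn (j+1) P).measurable
    fun_prop

noncomputable def Wd (j : ℕ) (P Q : MvPolynomial ι ℝ) (c : ℝ) : ENNReal :=
  ∫⁻ w, ENNReal.ofReal ((Dg j w P Q - c) ^ 2) ∂gaussOm j ι

lemma Wd_diag (j : ℕ) (P : MvPolynomial ι ℝ) : Wd j P P 1 = Vv j P := by
  unfold Wd Vv; simp_rw [Nn_eq]

lemma Dg_comb {κ : Type} [Fintype κ] (j : ℕ) (w : Fin j → ι → ℝ) (s : κ → ℝ)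
    (f : κ → MvPolynomial ι ℝ) :
    Nn j w (∑ l, s l • f l) = ∑ l, ∑ l', s l * s l' * Dg j w (f l) (f l') := by
  unfold Nn Dg
  simp_rw [Finset.mul_sum]
  simp_rw [Finset.sum_comm (s := (Finset.univ : Finset κ)) (t := (Finset.univ : Finset ι))]
  refine Finset.sum_congr rfl fun k _ => ?_
  rw [map_sum, Finset.sum_apply, sq, Finset.sum_mul_sum]
  refine Finset.sum_congr rfl fun l _ => Finset.sum_congr rfl fun l' _ => ?_
  simp only [map_smul, Pi.smul_apply, smul_eq_mul]
  ring

lemma Vv_comb {κ : Type} [Fintype κ] [DecidableEq κ] (j : ℕ) (s : κ → ℝ) (hs : ∑ l, s l ^ 2 = 1)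
    (f : κ → MvPolynomial ι ℝ) :
    Vv j (∑ l, s l • f l) ≤ ∑ l, ∑ l', Wd j (f l) (f l') (if l = l' then 1 else 0) := by
  have hm : ∀ l l', Measurable fun w : Fin j → ι → ℝ =>
      ENNReal.ofReal ((Dg j w (f l) (f l') - (if l = l' then 1 else 0)) ^ 2) := by
    intro l l'
    have := (continuous_Dg j (f l) (f l')).measurable
    fun_prop
  unfold Vv Wd
  simp_rw [← lintegral_finsetSum Finset.univ (fun l' _ => hm _ l')]
  rw [← lintegral_finsetSum Finset.univ (fun l _ => Finset.measurable_fun_sum _ fun l' _ => hm l l')]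
  refine lintegral_mono fun w => ?_
  simp_rw [← ENNReal.ofReal_sum_of_nonneg (fun l' _ => sq_nonneg _)]
  rw [← ENNReal.ofReal_sum_of_nonneg (fun l _ => Finset.sum_nonneg fun l' _ => sq_nonneg _)]
  refine ENNReal.ofReal_le_ofReal ?_
  have e : Nn j w (∑ l, s l • f l) - 1
      = ∑ p : κ × κ, (s p.1 * s p.2) * (Dg j w (f p.1) (f p.2) - (if p.1 = p.2 then 1 else 0)) := by
    rw [Dg_comb, Fintype.sum_prod_type]
    simp_rw [mul_sub, Finset.sum_sub_distrib]
    congr 1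
    simp only [mul_ite, mul_one, mul_zero, Finset.sum_ite_eq, Finset.mem_univ, if_true]
    rw [← hs]; simp_rw [sq]
  rw [e]
  refine (Finset.sum_mul_sq_le_sq_mul_sq _ _ _).trans ?_
  have e2 : ∑ p : κ × κ, (s p.1 * s p.2) ^ 2 = 1 := by
    rw [Fintype.sum_prod_type]
    simp_rw [mul_pow, ← Finset.mul_sum, hs, mul_one, hs]
  rw [e2, one_mul, Fintype.sum_prod_type]

lemma inv_sqrt_two_sq : ((√2)⁻¹ : ℝ) ^ 2 = 1 / 2 := by
  rw [inv_pow, Real.sq_sqrt (by norm_num)]; norm_num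

lemma Dg_polar (j : ℕ) (w : Fin j → ι → ℝ) (P Q : MvPolynomial ι ℝ) :
    Dg j w P Q ^ 2 ≤ (Nn j w ((√2)⁻¹ • P + (√2)⁻¹ • Q) - 1) ^ 2
      + (Nn j w ((√2)⁻¹ • P + (-(√2)⁻¹) • Q) - 1) ^ 2 := by
  have e : Nn j w ((√2)⁻¹ • P + (√2)⁻¹ • Q) - Nn j w ((√2)⁻¹ • P + (-(√2)⁻¹) • Q)
      = 2 * Dg j w P Q := by
    unfold Nn Dg
    rw [← Finset.sum_sub_distrib, Finset.mul_sum]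
    refine Finset.sum_congr rfl fun k _ => ?_
    simp only [map_add, map_smul, Pi.add_apply, Pi.smul_apply, smul_eq_mul]
    linear_combination (4 * tv j w P k * tv j w Q k) * inv_sqrt_two_sq
  generalize Nn j w ((√2)⁻¹ • P + (√2)⁻¹ • Q) = a at *
  generalize Nn j w ((√2)⁻¹ • P + (-(√2)⁻¹) • Q) = b at *
  have e' : Dg j w P Q = (a - b) / 2 := by linarith
  rw [e']
  nlinarith [sq_nonneg ((a - 1) + (b - 1)), sq_nonneg (a - 1), sq_nonneg (b - 1)]

lemma Wd_offdiag (j : ℕ) (P Q : MvPolynomial ι ℝ) :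
    Wd j P Q 0 ≤ Vv j ((√2)⁻¹ • P + (√2)⁻¹ • Q) + Vv j ((√2)⁻¹ • P + (-(√2)⁻¹) • Q) := by
  unfold Wd Vv
  rw [← lintegral_add_left]
  · refine lintegral_mono fun w => ?_
    simp only [sub_zero]
    rw [← ENNReal.ofReal_add (sq_nonneg _) (sq_nonneg _)]
    exact ENNReal.ofReal_le_ofReal (Dg_polar j w P Q)
  · have := (continuous_Nn j ((√2)⁻¹ • P + (√2)⁻¹ • Q)).measurable
    fun_prop

lemma measurable_Vv_ddL {E : Type} [TopologicalSpace E] [MeasurableSpace E] [BorelSpace E]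
    [SecondCountableTopology E] (j : ℕ) (P : MvPolynomial ι ℝ) (y : E → ι → ℝ) (hy : Continuous y) :
    Measurable fun e => Vv j (ddL (y e) P) := by
  unfold Vv
  have : Measurable fun p : E × (Fin j → ι → ℝ) => ENNReal.ofReal ((Nn j p.2 (ddL (y p.1) P) - 1) ^ 2) := by
    have := (continuous_Nn_ddL j P (fun p : E × (Fin j → ι → ℝ) => y p.1) (by fun_prop) (fun p => p.2)
      (by fun_prop)).measurable
    fun_prop
  exact this.lintegral_prod_right'

lemma measurable_Wd_ddL {E : Type} [TopologicalSpace E] [MeasurableSpace E] [BorelSpace E]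
    [SecondCountableTopology E] (j : ℕ) (P : MvPolynomial ι ℝ) (y z : E → ι → ℝ)
    (hy : Continuous y) (hz : Continuous z) (c : ℝ) :
    Measurable fun e => Wd j (ddL (y e) P) (ddL (z e) P) c := by
  unfold Wd
  have : Measurable fun p : E × (Fin j → ι → ℝ) =>
      ENNReal.ofReal ((Dg j p.2 (ddL (y p.1) P) (ddL (z p.1) P) - c) ^ 2) := by
    have := (continuous_Dg_ddL j P P (fun p : E × (Fin j → ι → ℝ) => y p.1) (fun p => z p.1)
      (by fun_prop) (by fun_prop) (fun p => p.2)
      (by fun_prop)).measurable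
    fun_prop
  exact this.lintegral_prod_right'

lemma lintegral_Vv_comb (r : ℕ) (c : Fin r → ℝ) (h : ∑ l, c l ^ 2 = 1) (j : ℕ) (P : MvPolynomial ι ℝ) :
    ∫⁻ U, Vv j (ddL (∑ l, c l • U l) P) ∂gaussOm r ι = Vv (j+1) P := by
  rw [Vv_succ]
  exact lintegral_comb_gaussOm r c h (fun z => Vv j (ddL z P))
    (measurable_Vv_ddL j P (fun z => z) continuous_id)

lemma lintegral_Wd (r : ℕ) (l l' : Fin r) (j : ℕ) (P : MvPolynomial ι ℝ) :
    ∫⁻ U, Wd j (ddL (U l) P) (ddL (U l') P) (if l = l' then 1 else 0) ∂gaussOm r ι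
      ≤ 2 * Vv (j+1) P := by
  by_cases hll : l = l'
  · subst hll
    simp only [if_true, Wd_diag]
    have := lintegral_Vv_comb r (Pi.single l 1) (by simp [Pi.single_apply]) j P
    simp only [Pi.single_apply, ite_smul, one_smul, zero_smul, Finset.sum_ite_eq', Finset.mem_univ, if_true] at this
    rw [this, two_mul]
    exact le_self_add
  · simp only [hll, if_false]
    have hc : ∀ ε : ℝ, ε ^ 2 = 1 → 
        ∫⁻ U, Vv j ((√2)⁻¹ • ddL (U l) P + (ε * (√2)⁻¹) • ddL (U l') P) ∂gaussOm r ι = Vv (j+1) P := by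
      intro ε hε
      rw [← lintegral_Vv_comb r (fun a => if a = l then (√2)⁻¹ else if a = l' then ε * (√2)⁻¹ else 0) ?_ j P]
      · refine lintegral_congr fun U => ?_
        congr 1
        have : ∑ a, (if a = l then (√2)⁻¹ else if a = l' then ε * (√2)⁻¹ else 0) • U a
            = (√2)⁻¹ • U l + (ε * (√2)⁻¹) • U l' := by
          have e : ∀ a, (if a = l then (√2)⁻¹ else if a = l' then ε * (√2)⁻¹ else 0) • U a
            = (if a = l then (√2)⁻¹ • U l else 0) + (if a = l' then (ε * (√2)⁻¹) • U l' else 0) := by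
            intro a
            by_cases h1 : a = l
            · subst h1; simp [hll]
            · by_cases h2 : a = l'
              · subst h2; simp [h1]
              · simp [h1, h2]
          simp_rw [e, Finset.sum_add_distrib]
          simp
        rw [this, ddL_add, ddL_smul, ddL_smul]
      · have e : ∀ a : Fin r, (if a = l then (√2)⁻¹ else if a = l' then ε * (√2)⁻¹ else 0 : ℝ) ^ 2
            = (if a = l then 1/2 else 0) + (if a = l' then 1/2 else 0) := by
            intro a
            by_cases h1 : a = l
            · subst h1; simp only [if_true, hll, if_false, inv_sqrt_two_sq]; norm_num
            · by_cases h2 : a = l'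
              · subst h2; simp only [h1, if_true, if_false, mul_pow, inv_sqrt_two_sq, hε]; norm_num
              · simp [h1, h2]
        simp_rw [e, Finset.sum_add_distrib]
        simp
        norm_num
    calc _ ≤ ∫⁻ U, (Vv j ((√2)⁻¹ • ddL (U l) P + (√2)⁻¹ • ddL (U l') P)
            + Vv j ((√2)⁻¹ • ddL (U l) P + (-(√2)⁻¹) • ddL (U l') P)) ∂gaussOm r ι :=
          lintegral_mono fun U => Wd_offdiag j _ _
      _ = Vv (j+1) P + Vv (j+1) P := by
          rw [lintegral_add_left]
          · have h1 := hc 1 (by norm_num)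
            have h2 := hc (-1) (by norm_num)
            simp only [one_mul, neg_mul] at h1 h2
            rw [h1, h2]
          · have := measurable_Vv_ddL j P (fun U : Fin r → ι → ℝ => (√2)⁻¹ • U l + (√2)⁻¹ • U l')
              (by fun_prop)
            simpa only [ddL_add, ddL_smul] using this
      _ = _ := (two_mul _).symm

end Decoupled



section ThmA

lemma ee_le_pow (q : ℕ) (c l : ℝ) (hc : 0 < c) (hl : 0 < l) :
    ee (l * c) ≤ ENNReal.ofReal (q.factorial / c ^ q) * (ENNReal.ofReal l ^ q)⁻¹ := by
  unfold ee
  rw [← ENNReal.ofReal_pow hl.le, ← ENNReal.ofReal_inv_of_pos (by positivity),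
    ← ENNReal.ofReal_mul (by positivity)]
  refine ENNReal.ofReal_le_ofReal ?_
  have h := Real.pow_div_factorial_le_exp (l * c) (by positivity) q
  rw [Real.exp_neg, mul_pow] at *
  have h2 : (0:ℝ) < l ^ q * c ^ q / q.factorial := by positivity
  calc _ ≤ (l ^ q * c ^ q / q.factorial)⁻¹ := by gcongr
    _ = _ := by field_simp

/-- The good set estimate. -/
lemma good_set {ι : Type} [Fintype ι] (r : ℕ) (hr : 0 < r) (j : ℕ) (δ : ℝ) (hδ : 0 < δ)
    (P : MvPolynomial ι ℝ) (hV : Vv (j+1) P ≤ ENNReal.ofReal (δ / (4 * r ^ 2))) :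
    ∃ G : Set (Fin r → ι → ℝ), MeasurableSet G ∧ (1:ℝ)/2 ≤ (gaussOm r ι).real G ∧
      ∀ U ∈ G, ∀ s : Fin r → ℝ, ∑ l, s l ^ 2 = 1 →
        Vv j (ddL (∑ l, s l • U l) P) ≤ ENNReal.ofReal δ := by
  classical
  set S : (Fin r → ι → ℝ) → ENNReal := fun U =>
    ∑ l, ∑ l', Wd j (ddL (U l) P) (ddL (U l') P) (if l = l' then 1 else 0) with hS
  have hSm1 : ∀ l l', Measurable fun U : Fin r → ι → ℝ =>
      Wd j (ddL (U l) P) (ddL (U l') P) (if l = l' then 1 else 0) := fun l l' =>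
    measurable_Wd_ddL j P (fun U : Fin r → ι → ℝ => U l) (fun U => U l') (by fun_prop) (by fun_prop) _
  have hSm : Measurable S :=
    Finset.measurable_fun_sum _ fun l _ => Finset.measurable_fun_sum _ fun l' _ => hSm1 l l'
  have hSint : ∫⁻ U, S U ∂gaussOm r ι ≤ ENNReal.ofReal (δ / 2) := by
    rw [hS]
    simp only
    rw [lintegral_finsetSum _ (fun l _ => Finset.measurable_fun_sum _ fun l' _ => hSm1 l l')]
    simp_rw [lintegral_finsetSum Finset.univ (fun l' _ => hSm1 _ l')]
    calc _ ≤ ∑ l : Fin r, ∑ l' : Fin r, 2 * ENNReal.ofReal (δ / (4 * r ^ 2)) := by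
          gcongr with l _ l' _
          exact (lintegral_Wd r l l' j P).trans (by gcongr)
      _ = ENNReal.ofReal (δ / 2) := by
          simp only [Finset.sum_const, Finset.card_univ, Fintype.card_fin, nsmul_eq_mul]
          rw [← ENNReal.ofReal_natCast, ← ENNReal.ofReal_ofNat, ← ENNReal.ofReal_mul (by positivity),
            ← ENNReal.ofReal_mul (by positivity), ← ENNReal.ofReal_mul (by positivity)]
          congr 1
          have : (r:ℝ) ≠ 0 := by positivity
          field_simp
          norm_num
  refine ⟨{U | S U < ENNReal.ofReal δ}, measurableSet_lt hSm measurable_const, ?_, ?_⟩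
  · have hM := mul_meas_ge_le_lintegral (μ := gaussOm r ι) hSm (ENNReal.ofReal δ)
    have h2 : ENNReal.ofReal δ * (gaussOm r ι) {U | ENNReal.ofReal δ ≤ S U} ≤ ENNReal.ofReal (δ / 2) :=
      hM.trans hSint
    have h3 := ENNReal.toReal_mono ENNReal.ofReal_ne_top h2
    rw [ENNReal.toReal_mul, ENNReal.toReal_ofReal hδ.le, ENNReal.toReal_ofReal (by positivity)] at h3
    have hc : {U | S U < ENNReal.ofReal δ} = {U | ENNReal.ofReal δ ≤ S U}ᶜ := by
      ext U; simp
    rw [hc, probReal_compl_eq_one_sub (measurableSet_le measurable_const hSm)]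
    have h4 : (gaussOm r ι).real {U | ENNReal.ofReal δ ≤ S U} ≤ 1/2 := by
      unfold Measure.real
      by_contra hcon
      push Not at hcon
      nlinarith
    linarith
  · intro U hU s hs
    rw [ddL_sum]
    simp_rw [ddL_smul]
    exact (Vv_comb j s hs _).trans (le_of_lt hU)

theorem thmA (j q : ℕ) : ∃ δ : ℝ, 0 < δ ∧ ∃ C : ENNReal, C ≠ ⊤ ∧ ∀ (ι : Type) [Fintype ι]
    (P : MvPolynomial ι ℝ), Vv j P ≤ ENNReal.ofReal δ → ∀ l : ℝ, 0 < l →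
    ∫⁻ w, ee (l * Nn j w P) ∂gaussOm j ι ≤ C * (ENNReal.ofReal l ^ q)⁻¹ := by
  induction j with
  | zero =>
    refine ⟨1/4, by norm_num, ENNReal.ofReal (q.factorial / (1/2) ^ q), ENNReal.ofReal_ne_top, ?_⟩
    intro ι _ P hV l hl
    have hconst : ∀ w : Fin 0 → ι → ℝ, Nn 0 w P = Nn 0 (fun _ => 0) P := fun w => by
      congr 1; exact Subsingleton.elim _ _
    unfold Vv at hV
    simp_rw [hconst] at hV ⊢
    rw [lintegral_const, measure_univ, mul_one] at *
    rw [ENNReal.ofReal_le_ofReal_iff (by norm_num)] at hV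
    have : 1/2 ≤ Nn 0 (fun _ => 0) P := by
      by_contra hc
      push Not at hc
      nlinarith
    refine (ee_anti ?_).trans (ee_le_pow q (1/2) l (by norm_num) hl)
    gcongr
  | succ j ih =>
    rcases Nat.eq_zero_or_pos q with rfl | hq
    · refine ⟨1, one_pos, 1, ENNReal.one_ne_top, ?_⟩
      intro ι _ P _ l hl
      simp only [pow_zero, inv_one, mul_one]
      calc _ ≤ ∫⁻ w, 1 ∂gaussOm (j+1) ι :=
            lintegral_mono fun w => ee_le_one (mul_nonneg hl.le (Nn_nonneg _ _ _))
        _ = 1 := by simp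
    obtain ⟨δ, hδ, C0, hC0, H0⟩ := ih
    obtain ⟨C, hC, hCpos, H⟩ : ∃ C : ENNReal, C ≠ ⊤ ∧ C ≠ 0 ∧ ∀ (ι : Type) [Fintype ι]
        (P : MvPolynomial ι ℝ), Vv j P ≤ ENNReal.ofReal δ → ∀ l : ℝ, 0 < l →
        ∫⁻ w, ee (l * Nn j w P) ∂gaussOm j ι ≤ C * (ENNReal.ofReal l ^ q)⁻¹ :=
      ⟨C0 + 1, by simp [hC0], by simp, fun ι _ P hP l hl => (H0 ι P hP l hl).trans (by
        gcongr; exact le_self_add)⟩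
    set r := 4 * q with hr
    have hr0 : 0 < r := by omega
    set M := ∫⁻ s, (ENNReal.ofReal (∑ l, s l ^ 2) ^ q)⁻¹ ∂gaussPi (Fin r) with hM
    have hMt : M < ⊤ := neg_moment_norm q
    refine ⟨δ / (4 * r ^ 2), by positivity, 2 * (C * (ENNReal.ofReal (1 / (2 * r)) ^ q)⁻¹ * M), ?_, ?_⟩
    · refine ENNReal.mul_ne_top (by norm_num) (ENNReal.mul_ne_top (ENNReal.mul_ne_top hC ?_) hMt.ne)
      rw [ENNReal.inv_ne_top]
      have : 0 < ENNReal.ofReal (1 / (2 * r)) := ENNReal.ofReal_pos.mpr (by positivity)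
      exact pow_ne_zero _ this.ne'
    intro ι _ P hV l hl
    obtain ⟨G, hGm, hG2, hG3⟩ := good_set r hr0 j δ hδ P hV
    set l' := l / (2 * r) with hl'
    have hl'0 : 0 < l' := by positivity
    set B : (Fin j → ι → ℝ) → ι → ι → ℝ := fun w i k => tv j w (pderiv i P) k with hB
    have hBc : ∀ i k, Continuous fun w => B w i k := fun i k => continuous_tv j _ k
    have hBm : ∀ i k, Measurable fun w => B w i k := fun i k => (hBc i k).measurable
    -- step 1
    have s1 : ∫⁻ w, ee (l * Nn (j+1) w P) ∂gaussOm (j+1) ι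
        = ∫⁻ w, ∫⁻ z, ee (l * ∑ k, (∑ i, z i * B w i k) ^ 2) ∂gaussPi ι ∂gaussOm j ι := by
      rw [lintegral_gaussOm_succ]
      · rw [lintegral_lintegral_swap]
        · refine lintegral_congr fun w => lintegral_congr fun z => ?_
          rw [Nn_cons]
          unfold Nn
          simp_rw [tv_ddL]
          rfl
        · simp_rw [Nn_cons]
          refine (measurable_ee.comp ?_).aemeasurable
          refine Measurable.const_mul ?_ _
          exact (continuous_Nn_ddL j P (fun p : (ι → ℝ) × (Fin j → ι → ℝ) => p.1) (by fun_prop) (fun p => p.2)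
            (by fun_prop)).measurable
      · exact measurable_ee.comp ((continuous_Nn (j+1) P).measurable.const_mul _)
    -- step 2 : duality and Jensen
    have s2 : ∀ w, ∫⁻ z, ee (l * ∑ k, (∑ i, z i * B w i k) ^ 2) ∂gaussPi ι
        ≤ 2 * ∫⁻ U in G, ∫⁻ s, ee (l' * Nn j w (ddL (∑ a, s a • U a) P)) ∂gaussPi (Fin r) ∂gaussOm r ι := by
      intro w
      rw [gauss_duality _ l hl.le]
      calc _ ≤ ∫⁻ y, 2 * ∫⁻ U in G, ee (l' * ∑ a, (∑ i, U a i * (∑ k, B w i k * y k)) ^ 2) ∂gaussOm r ι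
              ∂gaussPi ι := lintegral_mono fun y => jensen_step r hr0 _ l hl.le G hGm hG2
        _ = 2 * ∫⁻ U in G, ∫⁻ y, ee (l' * ∑ a, (∑ i, U a i * (∑ k, B w i k * y k)) ^ 2) ∂gaussPi ι
              ∂gaussOm r ι := by
            have hmm : Measurable fun p : (ι → ℝ) × (Fin r → ι → ℝ) =>
                ee (l' * ∑ a, (∑ i, p.2 a i * (∑ k, B w i k * p.1 k)) ^ 2) :=
              measurable_ee.comp (by fun_prop)
            rw [lintegral_const_mul _ hmm.lintegral_prod_right', lintegral_lintegral_swap]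
            exact hmm.aemeasurable
        _ = _ := by
            congr 1
            refine lintegral_congr fun U => ?_
            have e : ∀ y : ι → ℝ, ∀ a, ∑ i, U a i * (∑ k, B w i k * y k)
                = ∑ k, (∑ i, U a i * B w i k) * y k := by
              intro y a
              simp_rw [Finset.mul_sum, Finset.sum_mul]
              rw [Finset.sum_comm]
              exact Finset.sum_congr rfl fun k _ => Finset.sum_congr rfl fun i _ => by ring
            simp_rw [e]
            rw [← gauss_duality (fun a k => ∑ i, U a i * B w i k) l' hl'0.le]
            refine lintegral_congr fun s => ?_
            congr 2
            unfold Nn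
            refine Finset.sum_congr rfl fun k _ => ?_
            rw [ddL_sum, map_sum, Finset.sum_apply]
            congr 1
            refine Finset.sum_congr rfl fun a _ => ?_
            rw [ddL_smul, map_smul, Pi.smul_apply, smul_eq_mul, tv_ddL]
    -- step 3 : induction hypothesis
    have s3 : ∀ U ∈ G, ∀ s : Fin r → ℝ, ∫⁻ w, ee (l' * Nn j w (ddL (∑ a, s a • U a) P)) ∂gaussOm j ι
        ≤ C * (ENNReal.ofReal l' ^ q)⁻¹ * (ENNReal.ofReal (∑ a, s a ^ 2) ^ q)⁻¹ := by
      intro U hU s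
      by_cases hs : ∑ a, s a ^ 2 = 0
      · rw [hs]
        have : C * (ENNReal.ofReal l' ^ q)⁻¹ * (ENNReal.ofReal 0 ^ q)⁻¹ = ⊤ := by
          rw [ENNReal.ofReal_zero, zero_pow hq.ne', ENNReal.inv_zero]
          refine ENNReal.mul_top (mul_ne_zero hCpos ?_)
          rw [ENNReal.inv_ne_zero]
          exact ENNReal.pow_ne_top ENNReal.ofReal_ne_top
        rw [this]
        exact le_top
      have hpos : 0 < ∑ a, s a ^ 2 := lt_of_le_of_ne (by positivity) (Ne.symm hs)
      set t := √(∑ a, s a ^ 2) with ht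
      have ht0 : 0 < t := Real.sqrt_pos.mpr hpos
      have ht2 : t ^ 2 = ∑ a, s a ^ 2 := Real.sq_sqrt hpos.le
      have e : ∀ w, l' * Nn j w (ddL (∑ a, s a • U a) P)
          = (l' * ∑ a, s a ^ 2) * Nn j w (ddL (∑ a, (t⁻¹ * s a) • U a) P) := by
        intro w
        have : ∑ a, s a • U a = t • ∑ a, (t⁻¹ * s a) • U a := by
          rw [Finset.smul_sum]
          refine Finset.sum_congr rfl fun a _ => ?_
          rw [smul_smul, mul_inv_cancel_left₀ ht0.ne']
        rw [this, ddL_smul, Nn_smul, ht2]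
        ring
      simp_rw [e]
      refine (H ι _ (hG3 U hU _ ?_) _ (by positivity)).trans ?_
      · simp_rw [mul_pow, ← Finset.mul_sum, ← ht2]
        field_simp
      · rw [ENNReal.ofReal_mul hl'0.le, mul_pow, ENNReal.mul_inv, mul_assoc]
        · right; exact ENNReal.pow_ne_top ENNReal.ofReal_ne_top
        · right
          exact pow_ne_zero _ (ENNReal.ofReal_pos.mpr hpos).ne'
    have hm3 : Measurable fun p : (Fin j → ι → ℝ) × ((Fin r → ι → ℝ) × (Fin r → ℝ)) =>
        ee (l' * Nn j p.1 (ddL (∑ a, p.2.2 a • p.2.1 a) P)) := by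
      refine measurable_ee.comp (Measurable.const_mul ?_ _)
      exact (continuous_Nn_ddL j P (fun p : (Fin j → ι → ℝ) × ((Fin r → ι → ℝ) × (Fin r → ℝ)) =>
        ∑ a, p.2.2 a • p.2.1 a) (by fun_prop) (fun p => p.1) (by fun_prop)).measurable
    rw [s1]
    calc _ ≤ ∫⁻ w, 2 * ∫⁻ U in G, ∫⁻ s, ee (l' * Nn j w (ddL (∑ a, s a • U a) P)) ∂gaussPi (Fin r)
            ∂gaussOm r ι ∂gaussOm j ι := lintegral_mono s2
      _ = 2 * ∫⁻ U in G, ∫⁻ s, ∫⁻ w, ee (l' * Nn j w (ddL (∑ a, s a • U a) P)) ∂gaussOm j ι 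
            ∂gaussPi (Fin r) ∂gaussOm r ι := by
          have hm4 : Measurable fun p : (Fin j → ι → ℝ) × (Fin r → ι → ℝ) =>
              ∫⁻ s, ee (l' * Nn j p.1 (ddL (∑ a, s a • p.2 a) P)) ∂gaussPi (Fin r) := by
            have : Measurable fun p : ((Fin j → ι → ℝ) × (Fin r → ι → ℝ)) × (Fin r → ℝ) =>
                ee (l' * Nn j p.1.1 (ddL (∑ a, p.2 a • p.1.2 a) P)) :=
              hm3.comp (f := fun p : ((Fin j → ι → ℝ) × (Fin r → ι → ℝ)) × (Fin r → ℝ) =>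
                (p.1.1, (p.1.2, p.2))) (by fun_prop)
            exact this.lintegral_prod_right'
          rw [lintegral_const_mul _ hm4.lintegral_prod_right', lintegral_lintegral_swap hm4.aemeasurable]
          congr 1
          refine lintegral_congr fun U => ?_
          rw [lintegral_lintegral_swap]
          refine Measurable.aemeasurable ?_
          exact hm3.comp (f := fun p : (Fin j → ι → ℝ) × (Fin r → ℝ) => (p.1, (U, p.2))) (by fun_prop)
      _ ≤ 2 * ∫⁻ U in G, ∫⁻ s, C * (ENNReal.ofReal l' ^ q)⁻¹ * (ENNReal.ofReal (∑ a, s a ^ 2) ^ q)⁻¹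
            ∂gaussPi (Fin r) ∂gaussOm r ι := by
          gcongr 2 * ?_
          refine setLIntegral_mono' hGm fun U hU => lintegral_mono fun s => s3 U hU s
      _ ≤ 2 * (C * (ENNReal.ofReal l' ^ q)⁻¹ * M) := by
          gcongr
          have hmq : Measurable fun s : Fin r → ℝ => (ENNReal.ofReal (∑ a, s a ^ 2) ^ q)⁻¹ := by fun_prop
          rw [lintegral_const_mul _ hmq, ← hM, setLIntegral_const]
          calc _ ≤ C * (ENNReal.ofReal l' ^ q)⁻¹ * M * 1 := by gcongr; exact prob_le_one
            _ = _ := mul_one _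
      _ = _ := by
          have : ENNReal.ofReal l' = ENNReal.ofReal (1 / (2 * r)) * ENNReal.ofReal l := by
            rw [← ENNReal.ofReal_mul (by positivity)]
            congr 1
            rw [hl']; ring
          rw [this, mul_pow, ENNReal.mul_inv]
          · ring
          · right; exact ENNReal.pow_ne_top ENNReal.ofReal_ne_top
          · right
            exact pow_ne_zero _ (ENNReal.ofReal_pos.mpr hl).ne'

end ThmA



section Weyl

lemma sq_integral_le {Ω : Type} [MeasurableSpace Ω] (μ : Measure Ω) [IsProbabilityMeasure μ]
    (c : Ω → ℝ) (hc : Integrable c μ) (hc2 : Integrable (fun x => c x ^ 2) μ) :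
    (∫ x, c x ∂μ) ^ 2 ≤ ∫ x, c x ^ 2 ∂μ := by
  set m := ∫ x, c x ∂μ with hm
  have h : 0 ≤ ∫ x, (c x - m) ^ 2 ∂μ := integral_nonneg fun x => sq_nonneg _
  have e : ∀ x, (c x - m) ^ 2 = c x ^ 2 - (2 * m) * c x + m ^ 2 := fun x => by ring
  simp_rw [e] at h
  have h1 : Integrable (fun x => c x ^ 2 - (2 * m) * c x) μ := hc2.sub (hc.const_mul _)
  rw [integral_add h1 (integrable_const _), integral_sub hc2 (hc.const_mul _),
    integral_const_mul, integral_const, ← hm] at h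
  simp at h
  nlinarith

lemma lintegral_pow_le_pow {Ω : Type} [MeasurableSpace Ω] (μ : Measure Ω) [IsProbabilityMeasure μ]
    (f : Ω → ENNReal) (hf : AEMeasurable f μ) (n : ℕ) (hn : 1 ≤ n) :
    (∫⁻ x, f x ∂μ) ^ n ≤ ∫⁻ x, f x ^ n ∂μ := by
  have h := eLpNorm'_le_eLpNorm'_of_exponent_le (μ := μ) (f := f) (p := 1) (q := n) (by norm_num)
    (by exact_mod_cast hn) hf.aestronglyMeasurable
  unfold eLpNorm' at h
  simp only [enorm_eq_self, ENNReal.rpow_one, ne_eq, one_ne_zero, not_false_eq_true, div_self,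
    ENNReal.rpow_natCast] at h
  have hn0 : (n:ℝ) ≠ 0 := by positivity
  calc _ ≤ ((∫⁻ x, f x ^ n ∂μ) ^ (1 / (n:ℝ))) ^ n := by gcongr
    _ = _ := by
      rw [← ENNReal.rpow_natCast, ← ENNReal.rpow_mul, one_div, inv_mul_cancel₀ hn0, ENNReal.rpow_one]

variable {ι : Type} [Fintype ι]

lemma weyl_cs_real {Ω : Type} [MeasurableSpace Ω] (μ : Measure Ω) [IsProbabilityMeasure μ]
    (h : Ω → ι → ℝ) (hh : Measurable h) :
    (∫ v, Real.exp (-(∑ i, h v i ^ 2) / 2) ∂μ) ^ 2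
      ≤ ∫ v, ∫ v', Real.exp (-(∑ i, (h v i - h v' i) ^ 2) / 2) ∂μ ∂μ := by
  have hbdd : ∀ {Ω' : Type} [MeasurableSpace Ω'] (ν : Measure Ω') [IsProbabilityMeasure ν] (g : Ω' → ℝ),
      Measurable g → (∀ x, |g x| ≤ 1) → Integrable g ν := fun ν _ g hg hb =>
    Integrable.of_bound (C := 1) hg.aestronglyMeasurable (Filter.Eventually.of_forall hb)
  have hhi : ∀ i, Measurable fun v => h v i := fun i => by fun_prop
  set c : (ι → ℝ) → ℝ := fun z => ∫ v, Real.cos (∑ i, h v i * z i) ∂μ with hc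
  set s : (ι → ℝ) → ℝ := fun z => ∫ v, Real.sin (∑ i, h v i * z i) ∂μ with hs
  have hcm : Measurable c := by
    have : StronglyMeasurable fun p : (ι → ℝ) × Ω => Real.cos (∑ i, h p.2 i * p.1 i) :=
      Measurable.stronglyMeasurable (by fun_prop)
    exact this.integral_prod_right'.measurable
  have hsm : Measurable s := by
    have : StronglyMeasurable fun p : (ι → ℝ) × Ω => Real.sin (∑ i, h p.2 i * p.1 i) :=
      Measurable.stronglyMeasurable (by fun_prop)
    exact this.integral_prod_right'.measurable
  have habs : ∀ g : Ω → ℝ, (∀ v, |g v| ≤ 1) → |∫ v, g v ∂μ| ≤ 1 := by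
    intro g hg
    have := norm_integral_le_of_norm_le_const (μ := μ) (f := g) (C := 1) (Filter.Eventually.of_forall hg)
    simpa using this
  have hcb : ∀ z, |c z| ≤ 1 := fun z => habs _ fun v => Real.abs_cos_le_one _
  have hsb : ∀ z, |s z| ≤ 1 := fun z => habs _ fun v => Real.abs_sin_le_one _
  have hsq : ∀ x : ℝ, |x| ≤ 1 → |x ^ 2| ≤ 1 := fun x hx => by
    rw [abs_pow]; exact pow_le_one₀ (abs_nonneg _) hx
  have hci := hbdd (gaussPi ι) c hcm hcb
  have hc2 := hbdd (gaussPi ι) (fun z => c z ^ 2) (by fun_prop) (fun z => hsq _ (hcb z))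
  have hs2 := hbdd (gaussPi ι) (fun z => s z ^ 2) (by fun_prop) (fun z => hsq _ (hsb z))
  have e1 : ∫ v, Real.exp (-(∑ i, h v i ^ 2) / 2) ∂μ = ∫ z, c z ∂gaussPi ι := by
    simp_rw [← integral_cos_lin, hc]
    rw [integral_integral_swap]
    exact hbdd _ _ (by simp only [Function.uncurry_def]; fun_prop) fun x => Real.abs_cos_le_one _
  have e2 : ∀ z, c z ^ 2 + s z ^ 2
      = ∫ p, Real.cos (∑ i, (h p.1 i - h p.2 i) * z i) ∂(μ.prod μ) := by
    intro z
    have hcc := integral_prod_mul (μ := μ) (ν := μ) (fun v => Real.cos (∑ i, h v i * z i))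
      (fun v => Real.cos (∑ i, h v i * z i))
    have hss := integral_prod_mul (μ := μ) (ν := μ) (fun v => Real.sin (∑ i, h v i * z i))
      (fun v => Real.sin (∑ i, h v i * z i))
    rw [sq, sq, hc, hs]
    simp only
    rw [← hcc, ← hss, ← integral_add]
    · refine integral_congr_ae (Filter.Eventually.of_forall fun p => ?_)
      simp only
      rw [← Real.cos_sub]
      congr 1
      rw [← Finset.sum_sub_distrib]
      exact Finset.sum_congr rfl fun i _ => by ring
    · refine hbdd _ _ (by fun_prop) fun p => ?_
      rw [abs_mul]
      exact mul_le_one₀ (Real.abs_cos_le_one _) (abs_nonneg _) (Real.abs_cos_le_one _)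
    · refine hbdd _ _ (by fun_prop) fun p => ?_
      rw [abs_mul]
      exact mul_le_one₀ (Real.abs_sin_le_one _) (abs_nonneg _) (Real.abs_sin_le_one _)
  have hexp : ∀ a : ι → ℝ, |Real.exp (-(∑ i, a i ^ 2) / 2)| ≤ 1 := by
    intro a
    rw [abs_of_pos (Real.exp_pos _), Real.exp_le_one_iff]
    have : 0 ≤ ∑ i, a i ^ 2 := by positivity
    linarith
  rw [e1]
  calc _ ≤ ∫ z, c z ^ 2 ∂gaussPi ι := sq_integral_le _ c hci hc2
    _ ≤ ∫ z, (c z ^ 2 + s z ^ 2) ∂gaussPi ι :=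
        integral_mono hc2 (hc2.add hs2) fun z => by simp only; nlinarith [sq_nonneg (s z)]
    _ = ∫ p, ∫ z, Real.cos (∑ i, (h p.1 i - h p.2 i) * z i) ∂gaussPi ι ∂(μ.prod μ) := by
        simp_rw [e2]
        rw [integral_integral_swap]
        exact hbdd _ _ (by simp only [Function.uncurry_def]; fun_prop) fun x => Real.abs_cos_le_one _
    _ = _ := by
        simp_rw [integral_cos_lin]
        rw [integral_prod]
        exact hbdd _ _ (by fun_prop) fun p => hexp _

lemma weyl_cs {Ω : Type} [MeasurableSpace Ω] (μ : Measure Ω) [IsProbabilityMeasure μ]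
    (h : Ω → ι → ℝ) (hh : Measurable h) (l : ℝ) (hl : 0 ≤ l) :
    (∫⁻ v, ee (l * ∑ i, h v i ^ 2) ∂μ) ^ 2
      ≤ ∫⁻ v, ∫⁻ v', ee (l * ∑ i, (h v i - h v' i) ^ 2) ∂μ ∂μ := by
  have hr := weyl_cs_real μ (fun v i => √(2 * l) * h v i) (by fun_prop)
  have hs : √(2 * l) ^ 2 = 2 * l := Real.sq_sqrt (by positivity)
  have e1 : ∀ v, -(∑ i, (√(2 * l) * h v i) ^ 2) / 2 = -(l * ∑ i, h v i ^ 2) := by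
    intro v
    simp_rw [mul_pow, hs, ← Finset.mul_sum]; ring
  have e2 : ∀ v v', -(∑ i, (√(2 * l) * h v i - √(2 * l) * h v' i) ^ 2) / 2
      = -(l * ∑ i, (h v i - h v' i) ^ 2) := by
    intro v v'
    simp_rw [← mul_sub, mul_pow, hs, ← Finset.mul_sum]; ring
  simp_rw [e1, e2] at hr
  have hm2 : Measurable fun p : Ω × Ω => l * ∑ i, (h p.1 i - h p.2 i) ^ 2 := by fun_prop
  have h2 := lintegral_ee (μ.prod μ) _ hm2 (fun p => by positivity)
  have h1 := lintegral_ee μ (fun v => l * ∑ i, h v i ^ 2) (by fun_prop) (fun p => by positivity)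
  rw [h1.2, ← ENNReal.ofReal_pow (integral_nonneg fun v => (Real.exp_pos _).le)]
  have h3 : ∫⁻ v, ∫⁻ v', ee (l * ∑ i, (h v i - h v' i) ^ 2) ∂μ ∂μ
      = ∫⁻ p, ee (l * ∑ i, (h p.1 i - h p.2 i) ^ 2) ∂(μ.prod μ) := by
    rw [lintegral_prod]
    exact (measurable_ee.comp hm2).aemeasurable
  rw [h3, h2.2, integral_prod _ h2.1]
  exact ENNReal.ofReal_le_ofReal hr

/-- affine substitution -/
noncomputable def aff (α : ℝ) (b : ι → ℝ) : MvPolynomial ι ℝ →ₐ[ℝ] MvPolynomial ι ℝ :=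
  aeval fun i => C α * X i + C (b i)

lemma eval_aff (α : ℝ) (b u : ι → ℝ) (F : MvPolynomial ι ℝ) :
    eval u (aff α b F) = eval (α • u + b) F := by
  induction F using MvPolynomial.induction_on with
  | C a => simp [aff]
  | add p q hp hq => simp [map_add, hp, hq]
  | mul_X p i hp =>
    rw [map_mul, map_mul, hp, map_mul]
    simp [aff]

lemma pderiv_aff (α : ℝ) (b : ι → ℝ) (i : ι) (F : MvPolynomial ι ℝ) :
    pderiv i (aff α b F) = α • aff α b (pderiv i F) := by
  classical
  induction F using MvPolynomial.induction_on with
  | C a => simp [aff]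
  | add p q hp hq => simp [map_add, hp, hq]
  | mul_X p k hp =>
    have e : pderiv i (aff α b (X k)) = α • aff α b (pderiv i (X k)) := by
      by_cases h : k = i
      · subst h; simp [aff, pderiv_mul, MvPolynomial.smul_eq_C_mul]
      · simp [aff, pderiv_mul, MvPolynomial.smul_eq_C_mul, pderiv_X_of_ne h]
    rw [map_mul, pderiv_mul, pderiv_mul, hp, e, map_add, map_mul, map_mul, smul_add, smul_mul_assoc,
      mul_smul_comm]

lemma DegLE_aff_sub (k : ℕ) (α : ℝ) (b b' : ι → ℝ) (F : MvPolynomial ι ℝ) (hF : DegLE (k+1) F) :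
    DegLE k (aff α b F - aff α b' F) := by
  induction k generalizing F with
  | zero =>
    intro i
    rw [map_sub, pderiv_aff, pderiv_aff, const_of_DegLE_zero (hF i)]
    simp [aff]
  | succ k ih =>
    intro i
    rw [map_sub, pderiv_aff, pderiv_aff, ← smul_sub]
    exact (ih _ (hF i)).smul α

lemma eval_sub_of_DegLE_one (Q : MvPolynomial ι ℝ) (h : DegLE 1 Q) (b b' : ι → ℝ) :
    eval b Q - eval b' Q = ∑ l, (b l - b' l) * eval 0 (pderiv l Q) := by
  classical
  set R : MvPolynomial ι ℝ := Q - ∑ l, C (coeff 0 (pderiv l Q)) * X l with hR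
  have hc : ∀ l, pderiv l Q = C (coeff 0 (pderiv l Q)) := fun l => const_of_DegLE_zero (h l)
  have hR0 : DegLE 0 R := by
    intro i
    rw [hR, map_sub, map_sum, sub_eq_zero]
    simp only [pderiv_mul, pderiv_C, zero_mul, zero_add, pderiv_X, Pi.single_apply, mul_ite, mul_one, mul_zero]
    simp only [Finset.sum_ite_eq', Finset.mem_univ, if_true]
    exact hc i
  have e := const_of_DegLE_zero hR0
  have hQ : Q = C (coeff 0 R) + ∑ l, C (coeff 0 (pderiv l Q)) * X l := by
    rw [← e, hR]; ring
  have he : ∀ x : ι → ℝ, eval x Q = coeff 0 R + ∑ l, coeff 0 (pderiv l Q) * x l := by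
    intro x
    have := congrArg (eval x) hQ
    simpa using this
  rw [he b, he b', add_sub_add_left_eq_sub, ← Finset.sum_sub_distrib]
  refine Finset.sum_congr rfl fun l _ => ?_
  have : eval 0 (pderiv l Q) = coeff 0 (pderiv l Q) := by
    conv_lhs => rw [hc l]
    simp
  rw [this]; ring

lemma ddL_comm (y z : ι → ℝ) (F : MvPolynomial ι ℝ) : ddL y (ddL z F) = ddL z (ddL y F) := by
  simp only [ddL_apply, map_sum, Derivation.map_smul, Finset.smul_sum]
  rw [Finset.sum_comm]
  refine Finset.sum_congr rfl fun i _ => Finset.sum_congr rfl fun j _ => ?_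
  rw [smul_comm, pderiv_comm']

lemma DegLE.ddL {k : ℕ} {F : MvPolynomial ι ℝ} (h : DegLE (k+1) F) (z : ι → ℝ) :
    DegLE k (ddL z F) := by
  rw [ddL_apply]
  exact DegLE.sum _ fun i _ => (h i).smul _

lemma tv_aff (k : ℕ) (w : Fin k → ι → ℝ) (α : ℝ) (b b' : ι → ℝ) (F : MvPolynomial ι ℝ)
    (hF : DegLE (k+2) F) :
    tv k w (aff α b F - aff α b' F) = α ^ (k+1) • tv k w (ddL (b - b') F) := by
  induction k generalizing F with
  | zero =>
    ext i
    rw [Pi.smul_apply, tv_zero, tv_zero, map_sub, pderiv_aff, pderiv_aff, ← smul_sub, smul_eval, map_sub,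
      eval_aff, eval_aff, smul_zero, zero_add, zero_add, eval_sub_of_DegLE_one _ (hF i), ddL_apply]
    simp only [map_sum, Derivation.map_smul, smul_eval, zero_add, pow_one, smul_eq_mul, Pi.sub_apply]
    congr 1
    exact Finset.sum_congr rfl fun l _ => by rw [pderiv_comm']
  | succ k ih =>
    have e : ∀ c, ddL (w 0) (aff α c F) = α • aff α c (ddL (w 0) F) := by
      intro c
      simp only [ddL_apply, pderiv_aff, map_sum, map_smul, Finset.smul_sum]
      exact Finset.sum_congr rfl fun i _ => smul_comm _ _ _
    rw [tv_succ, map_sub, e, e, ← smul_sub, map_smul, ih _ _ (hF.ddL _), smul_smul, tv_succ, ddL_comm,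
      pow_succ' α (k+1)]

end Weyl



section Weyl2

variable {ι : Type} [Fintype ι]

noncomputable def phi (l : ℝ) (F : MvPolynomial ι ℝ) : ENNReal :=
  ∫⁻ x, ee (l * sqField F x) ∂gaussPi ι

lemma continuous_eval_poly (F : MvPolynomial ι ℝ) : Continuous fun x : ι → ℝ => eval x F :=
  MvPolynomial.continuous_eval F

lemma continuous_sqField (F : MvPolynomial ι ℝ) : Continuous fun x => sqField F x := by
  unfold sqField
  exact continuous_finset_sum _ fun i _ => (continuous_eval_poly _).pow 2

lemma sqField_nonneg (F : MvPolynomial ι ℝ) (x : ι → ℝ) : 0 ≤ sqField F x := by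
  unfold sqField; positivity

lemma lintegral_rot (α β : ℝ) (h : α ^ 2 + β ^ 2 = 1) (f : (ι → ℝ) → ENNReal) (hf : Measurable f) :
    ∫⁻ u, ∫⁻ v, f (α • u + β • v) ∂gaussPi ι ∂gaussPi ι = ∫⁻ z, f z ∂gaussPi ι := by
  conv_rhs => rw [← map_rot_gaussPi α β h]
  rw [lintegral_map hf (by fun_prop), lintegral_prod]
  exact (hf.comp (by fun_prop)).aemeasurable

lemma phi_sq_le (l : ℝ) (hl : 0 ≤ l) (F : MvPolynomial ι ℝ) :
    phi l F ^ 2 ≤ ∫⁻ v, ∫⁻ v', phi (2 * l) (aff (√2)⁻¹ ((√2)⁻¹ • v) F - aff (√2)⁻¹ ((√2)⁻¹ • v') F)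
      ∂gaussPi ι ∂gaussPi ι := by
  set α : ℝ := (√2)⁻¹ with hα
  have hα2 : α ^ 2 = 1 / 2 := inv_sqrt_two_sq
  have hcont : ∀ i, Continuous fun x : ι → ℝ => eval x (pderiv i F) := fun i => continuous_eval_poly _
  have hmF : ∀ i, Measurable fun x : ι → ℝ => eval x (pderiv i F) := fun i => (hcont i).measurable
  have hme : Measurable fun x => ee (l * sqField F x) :=
    measurable_ee.comp ((continuous_sqField F).measurable.const_mul _)
  have e0 : phi l F = ∫⁻ u, ∫⁻ v, ee (l * sqField F (α • u + α • v)) ∂gaussPi ι ∂gaussPi ι := by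
    unfold phi
    rw [lintegral_rot α α (by rw [hα2]; norm_num) _ hme]
  have hm1 : Measurable fun u : ι → ℝ => ∫⁻ v, ee (l * sqField F (α • u + α • v)) ∂gaussPi ι := by
    have : Measurable fun p : (ι → ℝ) × (ι → ℝ) => ee (l * sqField F (α • p.1 + α • p.2)) :=
      hme.comp (f := fun p : (ι → ℝ) × (ι → ℝ) => α • p.1 + α • p.2) (by fun_prop)
    exact this.lintegral_prod_right'
  rw [e0]
  refine (lintegral_pow_le_pow _ _ hm1.aemeasurable 2 (by norm_num)).trans ?_
  have hstep : ∀ u : ι → ℝ, (∫⁻ v, ee (l * sqField F (α • u + α • v)) ∂gaussPi ι) ^ 2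
      ≤ ∫⁻ v, ∫⁻ v', ee (l * ∑ i, (eval (α • u + α • v) (pderiv i F)
        - eval (α • u + α • v') (pderiv i F)) ^ 2) ∂gaussPi ι ∂gaussPi ι := by
    intro u
    refine weyl_cs (gaussPi ι) (fun v i => eval (α • u + α • v) (pderiv i F)) ?_ l hl
    refine measurable_pi_lambda _ fun i => (hmF i).comp (by fun_prop)
  refine (lintegral_mono hstep).trans ?_
  have hm3 : Measurable fun p : (ι → ℝ) × (ι → ℝ) × (ι → ℝ) =>
      ee (l * ∑ i, (eval (α • p.1 + α • p.2.1) (pderiv i F)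
        - eval (α • p.1 + α • p.2.2) (pderiv i F)) ^ 2) := by
    refine measurable_ee.comp (Continuous.measurable ?_)
    refine Continuous.mul continuous_const (continuous_finset_sum _ fun i _ => ?_)
    refine ((hcont i).comp ?_ |>.sub ((hcont i).comp ?_)).pow 2 <;> fun_prop
  rw [lintegral_lintegral_swap]
  · refine lintegral_mono fun v => ?_
    rw [lintegral_lintegral_swap]
    · refine lintegral_mono fun v' => ?_
      unfold phi
      refine lintegral_mono fun u => ?_
      refine ee_anti (le_of_eq ?_)
      unfold sqField
      rw [mul_comm 2 l, mul_assoc, Finset.mul_sum]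
      congr 1
      refine Finset.sum_congr rfl fun i _ => ?_
      rw [map_sub, pderiv_aff, pderiv_aff, ← smul_sub, smul_eval, map_sub, eval_aff, eval_aff, mul_pow, hα2]
      ring
    · exact (hm3.comp (f := fun p : (ι → ℝ) × (ι → ℝ) => (p.1, v, p.2)) (by fun_prop)).aemeasurable
  · have : Measurable fun p : ((ι → ℝ) × (ι → ℝ)) × (ι → ℝ) => ee (l * ∑ i, (eval (α • p.1.1 + α • p.1.2) (pderiv i F)
        - eval (α • p.1.1 + α • p.2) (pderiv i F)) ^ 2) :=
      hm3.comp (f := fun p : ((ι → ℝ) × (ι → ℝ)) × (ι → ℝ) => (p.1.1, p.1.2, p.2)) (by fun_prop)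
    exact (this.lintegral_prod_right' (ν := gaussPi ι)).aemeasurable

/-- Weyl differencing. -/
theorem weyl (k : ℕ) : ∃ c : ℝ, 0 < c ∧ ∀ (ι : Type) [Fintype ι] (F : MvPolynomial ι ℝ),
    DegLE (k+1) F → ∀ l : ℝ, 0 ≤ l →
      phi l F ^ (2 ^ k) ≤ ∫⁻ w, ee (l * c * Nn k w F) ∂gaussOm k ι := by
  induction k with
  | zero =>
    refine ⟨1, one_pos, ?_⟩
    intro ι _ F hF l hl
    have h1 : ∀ x, sqField F x = Nn 0 (fun _ => 0) F := by
      intro x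
      unfold sqField Nn
      refine Finset.sum_congr rfl fun i _ => ?_
      rw [tv_zero, const_of_DegLE_zero (hF i)]
      simp
    have h2 : ∀ w : Fin 0 → ι → ℝ, Nn 0 w F = Nn 0 (fun _ => 0) F := fun w => by
      congr 1; exact Subsingleton.elim _ _
    unfold phi
    simp_rw [h1, h2]
    simp
  | succ k ih =>
    obtain ⟨c, hc, H⟩ := ih
    refine ⟨c * (1/2) ^ k, by positivity, ?_⟩
    intro ι _ F hF l hl
    set α : ℝ := (√2)⁻¹ with hα
    have hα2 : α ^ 2 = 1 / 2 := inv_sqrt_two_sq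
    have hcontN : Continuous fun p : (ι → ℝ) × (Fin k → ι → ℝ) => Nn k p.2 (ddL p.1 F) :=
      continuous_Nn_ddL k F _ (by fun_prop) _ (by fun_prop)
    set l2 := l * (c * (1/2) ^ k) with hl2
    have hmN : Measurable fun p : (ι → ℝ) × (Fin k → ι → ℝ) => ee (l2 * Nn k p.2 (ddL p.1 F)) :=
      measurable_ee.comp (hcontN.measurable.const_mul _)
    set Y : (ι → ℝ) → ENNReal := fun y => ∫⁻ w, ee (l2 * Nn k w (ddL y F)) ∂gaussOm k ι with hY
    have hYm : Measurable Y := hmN.lintegral_prod_right'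
    have hpt : ∀ v v' : ι → ℝ, phi (2 * l) (aff α (α • v) F - aff α (α • v') F) ^ (2 ^ k)
        ≤ Y (α • v + (-α) • v') := by
      intro v v'
      refine (H ι _ (DegLE_aff_sub (k+1) α _ _ F hF) (2 * l) (by positivity)).trans ?_
      refine lintegral_mono fun w => ?_
      refine ee_anti (le_of_eq ?_)
      have : Nn k w (aff α (α • v) F - aff α (α • v') F)
          = (1/2) ^ (k+1) * Nn k w (ddL (α • v + (-α) • v') F) := by
        unfold Nn
        rw [tv_aff k w α _ _ F hF, Finset.mul_sum]
        refine Finset.sum_congr rfl fun i _ => ?_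
        rw [Pi.smul_apply, smul_eq_mul, mul_pow, ← pow_mul, mul_comm (k+1) 2, pow_mul, hα2, neg_smul,
          sub_eq_add_neg]
      rw [this, hl2]
      ring
    have hphim : Measurable fun p : (ι → ℝ) × (ι → ℝ) =>
        phi (2 * l) (aff α (α • p.1) F - aff α (α • p.2) F) := by
      unfold phi
      have : Measurable fun p : ((ι → ℝ) × (ι → ℝ)) × (ι → ℝ) =>
          ee (2 * l * sqField (aff α (α • p.1.1) F - aff α (α • p.1.2) F) p.2) := by
        refine measurable_ee.comp (Measurable.const_mul ?_ _)
        refine Continuous.measurable ?_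
        unfold sqField
        simp only [map_sub, pderiv_aff, smul_eval, eval_aff]
        refine continuous_finset_sum _ fun i _ => ?_
        refine (Continuous.sub (Continuous.mul continuous_const ?_) (Continuous.mul continuous_const ?_)).pow 2
        · exact (continuous_eval_poly _).comp (by fun_prop)
        · exact (continuous_eval_poly _).comp (by fun_prop)
      exact this.lintegral_prod_right'
    have h1 : phi l F ^ (2 ^ (k+1))
        ≤ ∫⁻ v, ∫⁻ v', Y (α • v + (-α) • v') ∂gaussPi ι ∂gaussPi ι := by
      rw [pow_succ', pow_mul]
      calc _ ≤ (∫⁻ v, ∫⁻ v', phi (2 * l) (aff α (α • v) F - aff α (α • v') F)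
              ∂gaussPi ι ∂gaussPi ι) ^ (2 ^ k) := by
            gcongr; exact phi_sq_le l hl F
        _ ≤ ∫⁻ v, (∫⁻ v', phi (2 * l) (aff α (α • v) F - aff α (α • v') F) ∂gaussPi ι) ^ (2 ^ k)
              ∂gaussPi ι :=
            lintegral_pow_le_pow _ _ hphim.lintegral_prod_right'.aemeasurable _ Nat.one_le_two_pow
        _ ≤ ∫⁻ v, ∫⁻ v', Y (α • v + (-α) • v') ∂gaussPi ι ∂gaussPi ι := by
            refine lintegral_mono fun v => ?_
            refine (lintegral_pow_le_pow _ _ ?_ _ Nat.one_le_two_pow).trans (lintegral_mono fun v' => hpt v v')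
            exact (hphim.comp (f := fun v' : ι → ℝ => (v, v')) (by fun_prop)).aemeasurable
    refine h1.trans (le_of_eq ?_)
    rw [lintegral_rot α (-α) (by rw [neg_sq, hα2]; norm_num) Y hYm, lintegral_gaussOm_succ]
    · simp_rw [Nn_cons]
      rfl
    · exact measurable_ee.comp ((continuous_Nn _ _).measurable.const_mul _)

end Weyl2



section Moments

variable {ι : Type} [Fintype ι]

lemma Ex_lint (G : MvPolynomial ι ℝ) (h : ∀ x, 0 ≤ eval x G) :
    ENNReal.ofReal (Ex G) = ∫⁻ x, ENNReal.ofReal (eval x G) ∂gaussPi ι := by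
  rw [Ex_apply, ofReal_integral_eq_lintegral_ofReal (integrable_poly G)]
  exact Filter.Eventually.of_forall h

lemma lint_lin_pow (a : ι → ℝ) (n : ℕ) (hn : Even n) :
    ∫⁻ z, ENNReal.ofReal ((∑ i, a i * z i) ^ n) ∂gaussPi ι
      = ENNReal.ofReal (∫ z, (∑ i, a i * z i) ^ n ∂gaussPi ι) := by
  have := integrable_poly (ι := ι) ((∑ i, C (a i) * X i) ^ n)
  simp only [map_pow, map_sum, map_mul, eval_C, eval_X] at this
  rw [ofReal_integral_eq_lintegral_ofReal this]
  exact Filter.Eventually.of_forall fun z => hn.pow_nonneg _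

lemma eval_Gam (F : MvPolynomial ι ℝ) (x : ι → ℝ) : eval x (Gam F) = sqField F x := by
  simp [Gam, sqField]

lemma eval_ddL (z x : ι → ℝ) (F : MvPolynomial ι ℝ) :
    eval x (ddL z F) = ∑ i, eval x (pderiv i F) * z i := by
  simp [ddL_apply, smul_eval, mul_comm]

lemma meas_ddL_pow (F : MvPolynomial ι ℝ) (n : ℕ) :
    Measurable fun p : (ι → ℝ) × (ι → ℝ) => ENNReal.ofReal (eval p.2 (ddL p.1 F ^ n)) := by
  simp only [map_pow, eval_ddL]
  refine ENNReal.measurable_ofReal.comp (Continuous.measurable ?_)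
  refine (continuous_finset_sum _ fun i _ => ?_).pow n
  exact ((continuous_eval_poly _).comp continuous_snd).mul (by fun_prop)

lemma lint_Ex_ddL_two (F : MvPolynomial ι ℝ) :
    ∫⁻ z, ENNReal.ofReal (Ex (ddL z F ^ 2)) ∂gaussPi ι = ENNReal.ofReal (Ex (Gam F)) := by
  rw [Ex_lint (Gam F) (fun x => by rw [eval_Gam]; exact sqField_nonneg F x)]
  have h1 : ∀ z, ENNReal.ofReal (Ex (ddL z F ^ 2))
      = ∫⁻ x, ENNReal.ofReal (eval x (ddL z F ^ 2)) ∂gaussPi ι := fun z =>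
    Ex_lint _ (fun x => by rw [map_pow]; positivity)
  simp_rw [h1]
  rw [lintegral_lintegral_swap (meas_ddL_pow F 2).aemeasurable]
  refine lintegral_congr fun x => ?_
  simp only [map_pow, eval_ddL]
  rw [lint_lin_pow _ 2 (by decide), integral_lin_sq, eval_Gam]
  rfl

lemma lint_Ex_ddL_four (F : MvPolynomial ι ℝ) :
    ∫⁻ z, ENNReal.ofReal (Ex (ddL z F ^ 4)) ∂gaussPi ι = ENNReal.ofReal (3 * Ex (Gam F ^ 2)) := by
  have e : 3 * Ex (Gam F ^ 2) = Ex ((3:ℝ) • Gam F ^ 2) := by rw [map_smul, smul_eq_mul]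
  rw [e, Ex_lint _ (fun x => by rw [smul_eval, map_pow]; positivity)]
  have h1 : ∀ z, ENNReal.ofReal (Ex (ddL z F ^ 4))
      = ∫⁻ x, ENNReal.ofReal (eval x (ddL z F ^ 4)) ∂gaussPi ι := fun z =>
    Ex_lint _ (fun x => by rw [map_pow]; positivity)
  simp_rw [h1]
  rw [lintegral_lintegral_swap (meas_ddL_pow F 4).aemeasurable]
  refine lintegral_congr fun x => ?_
  simp only [map_pow, eval_ddL]
  rw [lint_lin_pow _ 4 (by decide), integral_lin_four, smul_eval, map_pow, eval_Gam]
  rfl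

lemma chaos_ddL {K m : ℕ} {F : MvPolynomial (Fin K) ℝ} (h : F ∈ chaos K (m+1)) (z : Fin K → ℝ) :
    ddL z F ∈ chaos K m := by
  rw [ddL_apply]
  exact Submodule.sum_mem _ fun i _ => Submodule.smul_mem _ _ (chaos_pderiv h i)

lemma Nn_zero_eq {F : MvPolynomial ι ℝ} (hF : DegLE 1 F) (w : Fin 0 → ι → ℝ) (x : ι → ℝ) :
    Nn 0 w F = eval x (Gam F) := by
  rw [eval_Gam]
  unfold sqField Nn
  refine Finset.sum_congr rfl fun i _ => ?_
  rw [tv_zero, const_of_DegLE_zero (hF i)]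
  simp

lemma moment_one (j : ℕ) {K : ℕ} (F : MvPolynomial (Fin K) ℝ) (h : F ∈ chaos K (j+1)) :
    ∫⁻ w, ENNReal.ofReal (Nn j w F) ∂gaussOm j (Fin K)
      = ENNReal.ofReal ((j+1).factorial * Ex (F ^ 2)) := by
  induction j generalizing F with
  | zero =>
    have e : Ex (F ^ 2) = Ex (Gam F) := by rw [Ex_Gam _ _ (chaos_Lop h)]; simp
    have h1 : ∀ w : Fin 0 → Fin K → ℝ, Nn 0 w F = Nn 0 (fun _ => 0) F := fun w => by
      congr 1; exact Subsingleton.elim _ _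
    simp_rw [h1]
    rw [e]
    simp only [zero_add, Nat.factorial_one, Nat.cast_one, one_mul]
    rw [Ex_lint _ (fun x => by rw [eval_Gam]; exact sqField_nonneg F x)]
    simp_rw [← Nn_zero_eq (chaos_DegLE h) (fun _ => 0)]
    haveI := gaussPi_prob (ι := Fin K)
    simp
  | succ j ih =>
    rw [lintegral_gaussOm_succ]
    · simp_rw [Nn_cons]
      simp_rw [fun z => ih (ddL z F) (chaos_ddL h z)]
      simp_rw [ENNReal.ofReal_mul (Nat.cast_nonneg (α := ℝ) (j+1).factorial)]
      rw [lintegral_const_mul', lint_Ex_ddL_two, Ex_Gam _ _ (chaos_Lop h),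
        ← ENNReal.ofReal_mul (by positivity)]
      · congr 1
        rw [Nat.factorial_succ (j+1)]; push_cast; ring
      · exact ENNReal.ofReal_ne_top
    · exact ENNReal.measurable_ofReal.comp (continuous_Nn _ _).measurable

lemma Ex_four_nonneg (F : MvPolynomial ι ℝ) : 0 ≤ Ex (F ^ 4) := by
  rw [show F ^ 4 = (F ^ 2) ^ 2 by ring]; exact Ex_sq_nonneg _

lemma moment_two (j : ℕ) {K : ℕ} (F : MvPolynomial (Fin K) ℝ) (h : F ∈ chaos K (j+1)) :
    ∫⁻ w, ENNReal.ofReal (Nn j w F ^ 2) ∂gaussOm j (Fin K)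
      ≤ ENNReal.ofReal (((j+1).factorial ^ 2 / 3 : ℝ) * Ex (F ^ 4)) := by
  induction j generalizing F with
  | zero =>
    have e := fourth_ineq 1 F (chaos_DegLE h) (chaos_Lop h)
    have h1 : ∀ w : Fin 0 → Fin K → ℝ, Nn 0 w F = Nn 0 (fun _ => 0) F := fun w => by
      congr 1; exact Subsingleton.elim _ _
    simp_rw [h1]
    have h2 : ((0+1).factorial ^ 2 / 3 : ℝ) * Ex (F ^ 4) ≥ Ex (Gam F ^ 2) := by
      simp only [zero_add, Nat.factorial_one, Nat.cast_one]
      push_cast at e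
      linarith
    refine le_trans (le_of_eq ?_) (ENNReal.ofReal_le_ofReal h2)
    rw [Ex_lint _ (fun x => by rw [map_pow]; positivity)]
    simp_rw [map_pow, ← Nn_zero_eq (chaos_DegLE h) (fun _ => 0)]
    haveI := gaussPi_prob (ι := Fin K)
    simp
  | succ j ih =>
    rw [lintegral_gaussOm_succ]
    · simp_rw [Nn_cons]
      refine (lintegral_mono fun z => ih (ddL z F) (chaos_ddL h z)).trans ?_
      simp_rw [ENNReal.ofReal_mul (show (0:ℝ) ≤ ((j+1).factorial ^ 2 / 3 : ℝ) by positivity)]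
      rw [lintegral_const_mul', lint_Ex_ddL_four, ← ENNReal.ofReal_mul (by positivity)]
      · refine ENNReal.ofReal_le_ofReal ?_
        have e := fourth_ineq (j+2) F (chaos_DegLE h) (chaos_Lop h)
        rw [Nat.factorial_succ (j+1)]; push_cast at e ⊢
        have h3 : (0:ℝ) ≤ ((j+1).factorial ^ 2 / 3 : ℝ) := by positivity
        refine (mul_le_mul_of_nonneg_left e h3).trans (le_of_eq ?_)
        ring
      · exact ENNReal.ofReal_ne_top
    · exact ENNReal.measurable_ofReal.comp ((continuous_Nn _ _).pow 2).measurable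

/-- The variance-type functional of a normalised chaos element is controlled by moments. -/
lemma Vv_le (j : ℕ) {K : ℕ} (F : MvPolynomial (Fin K) ℝ) (h : F ∈ chaos K (j+1)) :
    Vv j ((√((j+1).factorial : ℝ))⁻¹ • F)
      ≤ ENNReal.ofReal (Ex (F ^ 4) / 3 - 2 * Ex (F ^ 2) + 1) := by
  set f : ℝ := ((j+1).factorial : ℝ) with hf
  have hf0 : 0 < f := by positivity
  have hc : ((√f)⁻¹) ^ 2 = f⁻¹ := by rw [inv_pow, Real.sq_sqrt hf0.le]
  have hm : Measurable fun w : Fin j → Fin K → ℝ => Nn j w F := (continuous_Nn _ _).measurable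
  have e1 := moment_one j F h
  have e2 := moment_two j F h
  have i1 : Integrable (fun w => Nn j w F) (gaussOm j (Fin K)) := by
    refine ⟨hm.aestronglyMeasurable, ?_⟩
    rw [hasFiniteIntegral_iff_ofReal (Filter.Eventually.of_forall fun w => Nn_nonneg j w F), e1]
    exact ENNReal.ofReal_lt_top
  have i2 : Integrable (fun w => Nn j w F ^ 2) (gaussOm j (Fin K)) := by
    refine ⟨(hm.pow_const 2).aestronglyMeasurable, ?_⟩
    rw [hasFiniteIntegral_iff_ofReal (Filter.Eventually.of_forall fun w => sq_nonneg _)]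
    exact e2.trans_lt ENNReal.ofReal_lt_top
  rw [← ofReal_integral_eq_lintegral_ofReal i1 (Filter.Eventually.of_forall fun w => Nn_nonneg j w F),
    ENNReal.ofReal_eq_ofReal_iff (integral_nonneg fun w => Nn_nonneg j w F)
    (mul_nonneg hf0.le (Ex_sq_nonneg F))] at e1
  rw [← ofReal_integral_eq_lintegral_ofReal i2 (Filter.Eventually.of_forall fun w => sq_nonneg _),
    ENNReal.ofReal_le_ofReal_iff (mul_nonneg (by positivity) (Ex_four_nonneg F))] at e2
  unfold Vv
  simp_rw [Nn_smul, hc]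
  have hexp : ∀ w, (f⁻¹ * Nn j w F - 1) ^ 2 = f⁻¹ ^ 2 * Nn j w F ^ 2 - 2 * f⁻¹ * Nn j w F + 1 :=
    fun w => by ring
  simp_rw [hexp]
  rw [← ofReal_integral_eq_lintegral_ofReal]
  · refine ENNReal.ofReal_le_ofReal ?_
    rw [integral_add, integral_sub, integral_const_mul, integral_const_mul, e1]
    · simp only [integral_const, probReal_univ, smul_eq_mul, mul_one]
      have : f⁻¹ ^ 2 * ∫ w, Nn j w F ^ 2 ∂gaussOm j (Fin K) ≤ Ex (F ^ 4) / 3 := by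
        refine (mul_le_mul_of_nonneg_left e2 (by positivity)).trans (le_of_eq ?_)
        rw [← hf]; field_simp
      have h2 : 2 * f⁻¹ * (f * Ex (F ^ 2)) = 2 * Ex (F ^ 2) := by field_simp
      linarith
    · exact i2.const_mul _
    · exact i1.const_mul _
    · exact (i2.const_mul _).sub (i1.const_mul _)
    · exact integrable_const _
  · exact ((i2.const_mul _).sub (i1.const_mul _)).add (integrable_const _)
  · refine Filter.Eventually.of_forall fun w => ?_
    have := hexp w
    simp only [Pi.zero_apply]
    rw [← this]; positivity

end Moments



section Hyper

lemma Ex_mono {ι : Type} [Fintype ι] (P Q : MvPolynomial ι ℝ) (h : ∀ x, eval x P ≤ eval x Q) :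
    Ex P ≤ Ex Q := by
  rw [Ex_apply, Ex_apply]
  exact integral_mono (integrable_poly P) (integrable_poly Q) h

lemma Ex_even_nonneg {ι : Type} [Fintype ι] (P : MvPolynomial ι ℝ) (p : ℕ) : 0 ≤ Ex (P ^ (2 * p)) := by
  rw [pow_mul, ← pow_mul, mul_comm, pow_mul]; exact Ex_sq_nonneg _

lemma young_pow (a b T : ℝ) (ha : 0 ≤ a) (hb : 0 ≤ b) (hT : 0 < T) (p : ℕ) :
    a ^ p * b ≤ a ^ (p+1) / T + T ^ p * b ^ (p+1) := by
  by_cases h : b ≤ a / T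
  · have : a ^ p * b ≤ a ^ (p+1) / T := by
      calc a ^ p * b ≤ a ^ p * (a / T) := by gcongr
        _ = _ := by ring
    have : 0 ≤ T ^ p * b ^ (p+1) := by positivity
    linarith
  · have h' : a ≤ T * b := by
      rw [not_le, div_lt_iff₀ hT] at h; linarith
    have : a ^ p * b ≤ T ^ p * b ^ (p+1) := by
      calc a ^ p * b ≤ (T * b) ^ p * b := by gcongr
        _ = _ := by ring
    have : 0 ≤ a ^ (p+1) / T := by positivity
    linarith

lemma Ex_Gam_pow_le {K : ℕ} (p : ℕ) (C : ℝ) (hC : 0 ≤ C) (F : MvPolynomial (Fin K) ℝ)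
    (h : ∀ k, Ex (pderiv k F ^ (2 * p)) ≤ C * Ex (pderiv k F ^ 2) ^ p) (hp : 1 ≤ p) :
    Ex (Gam F ^ p) ≤ C * Ex (Gam F) ^ p := by
  rcases Nat.eq_zero_or_pos K with hK | hK
  · subst hK
    simp [Gam, zero_pow (by omega : p ≠ 0)]
  haveI : Nonempty (Fin K) := ⟨⟨0, hK⟩⟩
  set v : Fin K → ℝ := fun k => Ex (pderiv k F ^ 2) with hv
  have hv0 : ∀ k, 0 ≤ v k := fun k => Ex_sq_nonneg _
  have hV : Ex (Gam F) = ∑ k, v k := by rw [Gam, map_sum]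
  have key : ∀ ε : ℝ, 0 < ε → Ex (Gam F ^ p) ≤ C * (∑ k, (v k + ε)) ^ p := by
    intro ε hε
    set u : Fin K → ℝ := fun k => v k + ε with hu
    have hu0 : ∀ k, 0 < u k := fun k => by have := hv0 k; simp only [hu]; linarith
    set V := ∑ k, u k with hVd
    have hvu : ∀ k, Ex (pderiv k F ^ 2) ≤ u k := fun k => by simp only [hu, hv]; linarith
    clear_value V u
    have hV0 : 0 < V := by rw [hVd]; exact Finset.sum_pos (fun k _ => hu0 k) Finset.univ_nonempty
    have hpt : Ex (Gam F ^ p) ≤ Ex (∑ k, (V ^ p * (u k / V) / u k ^ p) • pderiv k F ^ (2 * p)) := by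
      refine Ex_mono _ _ fun x => ?_
      have := Real.pow_arith_mean_le_arith_mean_pow Finset.univ (fun k => u k / V)
        (fun k => eval x (pderiv k F) ^ 2 / u k) (fun k _ => (div_pos (hu0 k) hV0).le)
        (by rw [← Finset.sum_div, ← hVd, div_self hV0.ne']) (fun k _ => by have := hu0 k; positivity) p
      have h2 : eval x (Gam F ^ p) = V ^ p * (∑ k, u k / V * (eval x (pderiv k F) ^ 2 / u k)) ^ p := by
        rw [← mul_pow, map_pow, Finset.mul_sum, eval_Gam]
        unfold sqField
        congr 1
        refine Finset.sum_congr rfl fun k _ => ?_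
        have := (hu0 k).ne'
        field_simp
      rw [h2]
      refine (mul_le_mul_of_nonneg_left this (by positivity)).trans (le_of_eq ?_)
      rw [map_sum, Finset.mul_sum]
      refine Finset.sum_congr rfl fun k _ => ?_
      rw [smul_eval, map_pow, div_pow, ← pow_mul]
      ring
    refine hpt.trans ?_
    rw [map_sum]
    calc ∑ k, Ex ((V ^ p * (u k / V) / u k ^ p) • pderiv k F ^ (2 * p))
        ≤ ∑ k, C * V ^ p * (u k / V) := by
          refine Finset.sum_le_sum fun k _ => ?_
          have hk := hu0 k
          rw [map_smul, smul_eq_mul]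
          have h1 : Ex (pderiv k F ^ (2 * p)) ≤ C * u k ^ p := by
            refine (h k).trans ?_
            have h0 := Ex_sq_nonneg (pderiv k F)
            exact mul_le_mul_of_nonneg_left (pow_le_pow_left₀ h0 (hvu k) p) hC
          refine (mul_le_mul_of_nonneg_left h1 (div_nonneg (mul_nonneg (pow_nonneg hV0.le _) (div_nonneg hk.le hV0.le)) (pow_nonneg hk.le _))).trans (le_of_eq ?_)
          field_simp
      _ = C * V ^ p := by rw [← Finset.mul_sum, ← Finset.sum_div, ← hVd, div_self hV0.ne', mul_one]
  have ht : Tendsto (fun ε : ℝ => C * (∑ k, (v k + ε)) ^ p) (𝓝[>] 0) (𝓝 (C * (∑ k, (v k + 0)) ^ p)) := by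
    refine Tendsto.mono_left ?_ nhdsWithin_le_nhds
    refine Continuous.tendsto ?_ 0
    fun_prop
  simp only [add_zero] at ht
  rw [hV]
  exact ge_of_tendsto ht (eventually_mem_nhdsWithin.mono fun ε hε => key ε hε)

theorem hyper (m p : ℕ) : ∃ C : ℝ, 0 < C ∧ ∀ (K : ℕ) (F : MvPolynomial (Fin K) ℝ), F ∈ chaos K m →
    Ex (F ^ (2 * (p+1))) ≤ C * Ex (F ^ 2) ^ (p+1) ∧ Ex (Gam F ^ (p+1)) ≤ C * Ex (F ^ 2) ^ (p+1) := by
  induction m with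
  | zero =>
    refine ⟨1, one_pos, fun K F hF => ?_⟩
    haveI := gaussPi_prob (ι := Fin K)
    have h0 : Gam F = 0 := by
      unfold Gam
      exact Finset.sum_eq_zero fun i _ => by rw [chaos_zero_pderiv hF i]; simp
    have h1 := const_of_DegLE_zero (chaos_DegLE hF)
    have hEC : ∀ a : ℝ, ∀ n : ℕ, Ex ((C a : MvPolynomial (Fin K) ℝ) ^ n) = a ^ n := by
      intro a n
      rw [Ex_apply]; simp
    constructor
    · rw [h1, hEC, hEC, pow_mul, one_mul]
    · rw [h0]
      have := Ex_sq_nonneg F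
      simp only [ne_eq, Nat.add_eq_zero_iff, one_ne_zero, and_false, not_false_eq_true, zero_pow, map_zero]
      positivity
  | succ m ih =>
    obtain ⟨C, hC, H⟩ := ih
    set T : ℝ := 2 * (2 * p + 1) with hT
    have hT0 : 0 < T := by positivity
    set D : ℝ := C * (m+1) ^ (p+1) with hD
    refine ⟨D + T * T ^ p * D, by positivity, fun K F hF => ?_⟩
    have hG : Ex (Gam F ^ (p+1)) ≤ D * Ex (F ^ 2) ^ (p+1) := by
      refine (Ex_Gam_pow_le (p+1) C hC.le F (fun k => (H K _ (chaos_pderiv hF k)).1) (by omega)).trans ?_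
      rw [Ex_Gam _ _ (chaos_Lop hF), hD, mul_pow]
      push_cast
      exact le_of_eq (by ring)
    have hF2 := Ex_sq_nonneg F
    have hX := Ex_even_nonneg F (p+1)
    have e1 : (m+1 : ℝ) * Ex (F ^ (2 * (p+1))) = (2 * p + 1) * Ex ((F ^ 2) ^ p * Gam F) := by
      have := Ex_mul_Lop (F ^ (2 * p + 1)) F
      rw [chaos_Lop hF, mul_smul_comm, map_smul, smul_eq_mul, ← pow_succ] at this
      rw [show 2 * (p+1) = 2 * p + 1 + 1 by ring]
      push_cast at this
      rw [this, Gam, Finset.mul_sum, map_sum, Finset.mul_sum]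
      refine Finset.sum_congr rfl fun i _ => ?_
      rw [pderiv_pow, ← smul_eq_mul (2 * (p:ℝ) + 1), ← map_smul]
      congr 1
      rw [MvPolynomial.smul_eq_C_mul]
      simp only [map_add, map_mul, map_one, map_ofNat, map_natCast]
      push_cast
      try simp only [Nat.add_sub_cancel]
      ring
    have e2 : Ex ((F ^ 2) ^ p * Gam F) ≤ Ex (T⁻¹ • F ^ (2 * (p+1)) + T ^ p • Gam F ^ (p+1)) := by
      refine Ex_mono _ _ fun x => ?_
      simp only [map_add, map_mul, map_pow, smul_eval]
      have := young_pow (eval x F ^ 2) (eval x (Gam F)) T (by positivity)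
        (by rw [eval_Gam]; exact sqField_nonneg F x) hT0 p
      refine this.trans (le_of_eq ?_)
      rw [← pow_mul]; ring
    rw [map_add, map_smul, map_smul, smul_eq_mul, smul_eq_mul] at e2
    have e3 : Ex (F ^ (2 * (p+1))) ≤ T * T ^ p * Ex (Gam F ^ (p+1)) := by
      have h1 : Ex (F ^ (2 * (p+1))) ≤ (m+1 : ℝ) * Ex (F ^ (2 * (p+1))) := by
        have : (0:ℝ) ≤ m * Ex (F ^ (2 * (p+1))) := by positivity
        linarith
      rw [e1] at h1
      have h2 := mul_le_mul_of_nonneg_left e2 (show (0:ℝ) ≤ 2 * p + 1 by positivity)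
      have h3 : (2 * (p:ℝ) + 1) * (T⁻¹ * Ex (F ^ (2 * (p + 1)))) = Ex (F ^ (2 * (p + 1))) / 2 := by
        rw [hT]; field_simp
      rw [mul_add, h3] at h2
      have h4 : T * T ^ p * Ex (Gam F ^ (p+1)) = 2 * ((2 * (p:ℝ) + 1) * (T ^ p * Ex (Gam F ^ (p + 1)))) := by
        rw [hT]; ring
      rw [h4]
      linarith
    have hnn : 0 ≤ Ex (F ^ 2) ^ (p+1) := by positivity
    constructor
    · refine e3.trans ((mul_le_mul_of_nonneg_left hG (by positivity)).trans ?_)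
      have : 0 ≤ D * Ex (F ^ 2) ^ (p+1) := by positivity
      rw [add_mul]
      nlinarith
    · refine hG.trans ?_
      have : 0 ≤ T * T ^ p * D * Ex (F ^ 2) ^ (p+1) := by positivity
      rw [add_mul]
      linarith

end Hyper



section Weak

/-- Weak convergence of the law of a polynomial functional to the standard Gaussian. -/
def ScalConv (K : ℕ → ℕ) (F : (n : ℕ) → MvPolynomial (Fin (K n)) ℝ) : Prop :=
  ∀ f : BoundedContinuousFunction ℝ ℝ, Tendsto (fun n => ∫ x, f (eval x (F n)) ∂gaussPi (Fin (K n)))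
    atTop (𝓝 (∫ x, f x ∂gaussianReal 0 1))

/-- truncated even power -/
noncomputable def truncf (p : ℕ) (R : ℝ) (hR : 0 ≤ R) : BoundedContinuousFunction ℝ ℝ :=
  BoundedContinuousFunction.ofNormedAddCommGroup (fun x => min (x ^ (2 * p)) R) (by fun_prop) R
    (fun x => by
      rw [Real.norm_eq_abs, abs_of_nonneg (le_min (by rw [pow_mul]; positivity) hR)]
      exact min_le_right _ _)

lemma truncf_apply (p : ℕ) (R : ℝ) (hR : 0 ≤ R) (x : ℝ) : truncf p R hR x = min (x ^ (2 * p)) R := rfl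

lemma tendsto_of_trunc (a : ℕ → ℝ) (b : ℝ → ℕ → ℝ) (α : ℝ) (β : ℝ → ℝ) (M : ℝ) (hM : 0 ≤ M)
    (hb : ∀ R, 0 < R → Tendsto (b R) atTop (𝓝 (β R)))
    (h1 : ∀ R, 0 < R → ∀ᶠ n in atTop, b R n ≤ a n ∧ a n ≤ b R n + M / R)
    (h2 : ∀ R, 0 < R → β R ≤ α ∧ α ≤ β R + M / R) : Tendsto a atTop (𝓝 α) := by
  rw [Metric.tendsto_atTop']
  intro ε hε
  set R := (M + 1) * (4 / ε) with hR
  have hR0 : 0 < R := by positivity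
  have hMR : M / R ≤ ε / 4 := by
    rw [div_le_iff₀ hR0, hR]
    have : ε / 4 * ((M + 1) * (4 / ε)) = M + 1 := by field_simp
    linarith
  have h3 := (Metric.tendsto_nhds.1 (hb R hR0)) (ε / 4) (by positivity)
  obtain ⟨N, hN⟩ := eventually_atTop.1 (h3.and (h1 R hR0))
  refine ⟨N, fun n hn => ?_⟩
  obtain ⟨h4, h5, h6⟩ := hN n hn.le
  obtain ⟨h7, h8⟩ := h2 R hR0
  rw [Real.dist_eq, abs_lt] at *
  constructor <;> linarith [h4.1, h4.2]

lemma trunc_bound (X R : ℝ) (hR : 0 < R) : X ≤ min X R + X ^ 2 / (4 * R) := by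
  rcases le_total X R with h | h
  · rw [min_eq_left h]
    have : 0 ≤ X ^ 2 / (4 * R) := by positivity
    linarith
  · rw [min_eq_right h]
    have : X - R ≤ X ^ 2 / (4 * R) := by
      rw [le_div_iff₀ (by positivity)]
      nlinarith [sq_nonneg (X - 2 * R)]
    linarith

lemma trunc_bound2 (X R A : ℝ) (hX : 0 ≤ X) (hR : 0 < R) (hA : 0 < A) :
    X ≤ min X R + X ^ 2 / (2 * A) + A / (2 * R) * min X R := by
  rcases le_total X R with h | h
  · rw [min_eq_left h]
    have : 0 ≤ X ^ 2 / (2 * A) := by positivity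
    have : 0 ≤ A / (2 * R) * X := by positivity
    linarith
  · rw [min_eq_right h]
    have h1 : A / (2 * R) * R = A / 2 := by field_simp
    have : X ≤ X ^ 2 / (2 * A) + A / 2 := by
      have h3 : X ^ 2 / (2 * A) + A / 2 - X = (X - A) ^ 2 / (2 * A) := by field_simp; ring
      have h4 : 0 ≤ (X - A) ^ 2 / (2 * A) := by positivity
      linarith
    linarith

lemma integrable_trunc {ι : Type} [Fintype ι] (F : MvPolynomial ι ℝ) (p : ℕ) (R : ℝ) (hR : 0 ≤ R) :
    Integrable (fun x => truncf p R hR (eval x F)) (gaussPi ι) := by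
  refine Integrable.of_bound (C := R) ?_ (Filter.Eventually.of_forall fun x => ?_)
  · exact ((truncf p R hR).continuous.comp (continuous_eval_poly F)).aestronglyMeasurable
  · rw [truncf_apply, Real.norm_eq_abs, abs_of_nonneg (le_min (by rw [pow_mul]; positivity) hR)]
    exact min_le_right _ _

lemma Ex_le_trunc {ι : Type} [Fintype ι] (F : MvPolynomial ι ℝ) (p : ℕ) (R : ℝ) (hR : 0 < R) :
    ∫ x, truncf p R hR.le (eval x F) ∂gaussPi ι ≤ Ex (F ^ (2 * p)) ∧
    Ex (F ^ (2 * p)) ≤ ∫ x, truncf p R hR.le (eval x F) ∂gaussPi ι + Ex (F ^ (4 * p)) / (4 * R) := by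
  have i1 := integrable_trunc F p R hR.le
  have i2 := integrable_poly (F ^ (2 * p))
  have i4 := integrable_poly (F ^ (4 * p))
  simp only [Ex_apply]
  constructor
  · refine integral_mono i1 i2 fun x => ?_
    simp only [truncf_apply, map_pow]
    exact min_le_left _ _
  · rw [← integral_div, ← integral_add i1 (i4.div_const _)]
    refine integral_mono i2 (i1.add (i4.div_const _)) fun x => ?_
    simp only [truncf_apply, map_pow, Pi.add_apply]
    refine (trunc_bound _ R hR).trans (le_of_eq ?_)
    rw [← pow_mul]; congr 3; ring

lemma gauss_le_trunc (p : ℕ) (R : ℝ) (hR : 0 < R) :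
    ∫ x, truncf p R hR.le x ∂gaussianReal 0 1 ≤ ∫ x, x ^ (2 * p) ∂gaussianReal 0 1 ∧
    ∫ x, x ^ (2 * p) ∂gaussianReal 0 1
      ≤ ∫ x, truncf p R hR.le x ∂gaussianReal 0 1 + (∫ x, x ^ (4 * p) ∂gaussianReal 0 1) / (4 * R) := by
  have i1 : Integrable (fun x => truncf p R hR.le x) (gaussianReal 0 1) :=
    BoundedContinuousFunction.integrable _ _
  have i2 := integrable_pow_gauss (2 * p)
  have i4 := integrable_pow_gauss (4 * p)
  constructor
  · refine integral_mono i1 i2 fun x => ?_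
    simp only [truncf_apply]
    exact min_le_left _ _
  · rw [← integral_div, ← integral_add i1 (i4.div_const _)]
    refine integral_mono i2 (i1.add (i4.div_const _)) fun x => ?_
    simp only [truncf_apply, Pi.add_apply]
    refine (trunc_bound _ R hR).trans (le_of_eq ?_)
    rw [← pow_mul]; congr 3; ring

variable {K : ℕ → ℕ} {F : (n : ℕ) → MvPolynomial (Fin (K n)) ℝ} {m : ℕ}

lemma ScalConv.bdd (h : ScalConv K F) (hc : ∀ n, F n ∈ chaos (K n) m) :
    ∀ᶠ n in atTop, Ex (F n ^ 2) ≤ 4 := by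
  obtain ⟨C, hC, H⟩ := hyper m 1
  set R : ℝ := 8 * C with hR
  have hR0 : 0 < R := by positivity
  have h1 := h (truncf 1 R hR0.le)
  have h2 : ∫ x, truncf 1 R hR0.le x ∂gaussianReal 0 1 < 2 := by
    have := (gauss_le_trunc 1 R hR0).1
    simp only [mul_one] at this
    rw [gauss_moment_two] at this
    linarith
  filter_upwards [h1.eventually_lt_const h2] with n hn
  have h4 : Ex (F n ^ 4) ≤ C * Ex (F n ^ 2) ^ 2 := (H _ _ (hc n)).1
  set v := Ex (F n ^ 2) with hv
  set b := ∫ x, truncf 1 R hR0.le (eval x (F n)) ∂gaussPi (Fin (K n)) with hb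
  have hv0 : 0 ≤ v := Ex_sq_nonneg _
  have hb0 : 0 ≤ b := integral_nonneg fun x => by
    simp only [truncf_apply, Pi.zero_apply]
    exact le_min (by rw [mul_one]; positivity) hR0.le
  rcases hv0.eq_or_lt with h0 | h0
  · linarith
  set A := 2 * C * v with hA
  have hA0 : 0 < A := by positivity
  have key : v ≤ b + Ex (F n ^ 4) / (2 * A) + A / (2 * R) * b := by
    have i1 := integrable_trunc (F n) 1 R hR0.le
    have i2 := integrable_poly (F n ^ 2)
    have i4 := integrable_poly (F n ^ 4)
    rw [hv, hb, Ex_apply, Ex_apply, ← integral_div, ← integral_const_mul, ← integral_add i1 (i4.div_const _),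
      ← integral_add (f := fun x => truncf 1 R hR0.le (eval x (F n)) + eval x (F n ^ 4) / (2 * A)) (i1.add (i4.div_const _)) (i1.const_mul _)]
    refine integral_mono i2 ((i1.add (i4.div_const _)).add (i1.const_mul _)) fun x => ?_
    simp only [truncf_apply, map_pow, Pi.add_apply, mul_one]
    refine (trunc_bound2 (eval x (F n) ^ 2) R A (by positivity) hR0 hA0).trans (le_of_eq ?_)
    rw [← pow_mul]
  have e1 : Ex (F n ^ 4) / (2 * A) ≤ v / 4 := by
    rw [div_le_iff₀ (by positivity), hA]
    nlinarith
  have e2 : A / (2 * R) * b = v * b / 8 := by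
    rw [hA, hR]; field_simp
  have : v * b ≤ v * 2 := by gcongr
  linarith

lemma ScalConv.moment (h : ScalConv K F) (hc : ∀ n, F n ∈ chaos (K n) m) (p : ℕ) (hp : 1 ≤ p) :
    Tendsto (fun n => Ex (F n ^ (2 * p))) atTop (𝓝 (∫ x, x ^ (2 * p) ∂gaussianReal 0 1)) := by
  obtain ⟨C, hC, H⟩ := hyper m (2 * p - 1)
  have hg : 0 ≤ ∫ x, x ^ (4 * p) ∂gaussianReal 0 1 :=
    integral_nonneg fun x => by
      simp only [Pi.zero_apply]
      rw [show 4 * p = 2 * (2 * p) by ring, pow_mul]; positivity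
  set M : ℝ := C * 4 ^ (2 * p) + ∫ x, x ^ (4 * p) ∂gaussianReal 0 1 with hM
  refine tendsto_of_trunc _ (fun R n => if hR : 0 < R then
      ∫ x, truncf p R hR.le (eval x (F n)) ∂gaussPi (Fin (K n)) else 0) _ (fun R => if hR : 0 < R then
      ∫ x, truncf p R hR.le x ∂gaussianReal 0 1 else 0) M (by positivity) ?_ ?_ ?_
  · intro R hR
    simp only [dif_pos hR]
    exact h _
  · intro R hR
    filter_upwards [h.bdd hc] with n hn
    simp only [dif_pos hR]
    have := Ex_le_trunc (F n) p R hR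
    refine ⟨this.1, this.2.trans ?_⟩
    refine add_le_add le_rfl ?_
    have h4 := (H _ _ (hc n)).1
    rw [show 2 * (2 * p - 1 + 1) = 4 * p by omega, show 2 * p - 1 + 1 = 2 * p by omega] at h4
    have h5 : Ex (F n ^ (4 * p)) ≤ C * 4 ^ (2 * p) := by
      refine h4.trans ?_
      have := Ex_sq_nonneg (F n)
      gcongr
    have h6 : Ex (F n ^ (4 * p)) ≤ M := by linarith
    rw [div_le_div_iff₀ (by positivity) hR]
    have hM0 : 0 ≤ M := by positivity
    nlinarith
  · intro R hR
    simp only [dif_pos hR]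
    have := gauss_le_trunc p R hR
    refine ⟨this.1, this.2.trans ?_⟩
    refine add_le_add le_rfl ?_
    have hCC : 0 ≤ C * 4 ^ (2 * p) := by positivity
    rw [div_le_div_iff₀ (by positivity) hR, hM]
    nlinarith [mul_nonneg hCC hR.le, mul_nonneg hg hR.le]

lemma ScalConv.Vv {j : ℕ} (h : ScalConv K F) (hc : ∀ n, F n ∈ chaos (K n) (j+1)) :
    Tendsto (fun n => Vv j ((√((j+1).factorial : ℝ))⁻¹ • F n)) atTop (𝓝 0) := by
  have h2 := h.moment hc 1 le_rfl
  have h4 := h.moment hc 2 (by norm_num)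
  simp only [mul_one] at h2
  norm_num at h4
  rw [gauss_moment_two] at h2
  rw [gauss_moment_four] at h4
  have h5 : Tendsto (fun n => Ex (F n ^ 4) / 3 - 2 * Ex (F n ^ 2) + 1) atTop (𝓝 (3 / 3 - 2 * 1 + 1)) :=
    ((h4.div_const 3).sub (h2.const_mul 2)).add_const 1
  have h6 := ENNReal.tendsto_ofReal h5
  norm_num at h6
  exact tendsto_of_tendsto_of_tendsto_of_le_of_le tendsto_const_nhds h6 (fun n => zero_le) (fun n => Vv_le j _ (hc n))

lemma ScalConv.deg_pos (h : ScalConv K F) (hc : ∀ n, F n ∈ chaos (K n) m) : m ≠ 0 := by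
  rintro rfl
  have h2 := h.moment hc 1 le_rfl
  have h4 := h.moment hc 2 (by norm_num)
  simp only [mul_one] at h2
  norm_num at h4
  rw [gauss_moment_two] at h2
  rw [gauss_moment_four] at h4
  have e : ∀ n, Ex (F n ^ 4) = Ex (F n ^ 2) ^ 2 := by
    intro n
    have h1 := const_of_DegLE_zero (chaos_DegLE (hc n))
    have hEC : ∀ a : ℝ, ∀ k : ℕ, Ex ((C a : MvPolynomial (Fin (K n)) ℝ) ^ k) = a ^ k := by
      intro a k
      rw [Ex_apply]; simp
    rw [h1, hEC, hEC]; ring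
  simp_rw [e] at h4
  have := tendsto_nhds_unique h4 (h2.pow 2)
  norm_num at this

end Weak

section WeakVec

variable {d : ℕ} {K : ℕ → ℕ} {P : (n : ℕ) → Fin d → MvPolynomial (Fin (K n)) ℝ}

lemma scal_conv (hlaw : TendstoInLaw
      (fun n => Measure.map (fun x i => eval x (P n i)) (gaussPi (Fin (K n)))) (gaussPi (Fin d)))
    (a : Fin d → ℝ) (ha : ∑ i, a i ^ 2 = 1) : ScalConv K (fun n => ∑ i, a i • P n i) := by
  intro f
  have hg : Continuous fun z : Fin d → ℝ => ∑ i, a i * z i := by fun_prop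
  have := hlaw (f.compContinuous ⟨_, hg⟩)
  simp only [BoundedContinuousFunction.compContinuous_apply, ContinuousMap.coe_mk] at this
  rw [integral_lin_gaussPi a f f.continuous, ha] at this
  simp only [Real.sqrt_one, one_mul] at this
  refine this.congr fun n => ?_
  rw [integral_map]
  · simp [smul_eval]
  · refine Measurable.aemeasurable (measurable_pi_lambda _ fun i => (continuous_eval_poly _).measurable)
  · exact (f.continuous.comp hg).aestronglyMeasurable

lemma sum_pair_smul {M : Type} [AddCommGroup M] [Module ℝ M] (i j : Fin d) (α β : ℝ) (f : Fin d → M) :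
    ∑ l, (Pi.single i α + Pi.single j β : Fin d → ℝ) l • f l = α • f i + β • f j := by
  simp [Pi.single_apply, add_smul, Finset.sum_add_distrib, ite_smul]

lemma sum_single_smul {M : Type} [AddCommGroup M] [Module ℝ M] (i : Fin d) (α : ℝ) (f : Fin d → M) :
    ∑ l, (Pi.single i α : Fin d → ℝ) l • f l = α • f i := by
  simp [Pi.single_apply, ite_smul]

variable {m : Fin d → ℕ}

lemma top_Vv (hchaos : ∀ n i, P n i ∈ chaos (K n) (m i)) (hlaw : TendstoInLaw
      (fun n => Measure.map (fun x i => eval x (P n i)) (gaussPi (Fin (K n)))) (gaussPi (Fin d)))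
    (k : ℕ) (δ : ℝ) (hδ : 0 < δ) :
    ∀ᶠ n in atTop, ∀ s : {i // m i = k+1} → ℝ, ∑ l, s l ^ 2 = 1 →
      Vv k (∑ l, s l • (√((k+1).factorial : ℝ))⁻¹ • P n l) ≤ ENNReal.ofReal δ := by
  set c : ℝ := (√((k+1).factorial : ℝ))⁻¹ with hc
  have hpair : ∀ i j, m i = k+1 → m j = k+1 → i ≠ j → ∀ α β : ℝ, α ^ 2 = 1/2 → β ^ 2 = 1/2 →
      Tendsto (fun n => Vv k (α • (c • P n i) + β • (c • P n j))) atTop (𝓝 0) := by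
    intro i j hi hj hij α β hα hβ
    have h1 := scal_conv hlaw (Pi.single i α + Pi.single j β) (by
      simp only [Pi.add_apply, add_sq, Finset.sum_add_distrib]
      simp only [Pi.single_apply, ite_pow, mul_ite, mul_zero, ite_mul, zero_mul]
      simp [hα, hβ, hij, Ne.symm hij]
      norm_num)
    simp_rw [sum_pair_smul] at h1
    have h2 := h1.Vv (j := k) (fun n => Submodule.add_mem _ (Submodule.smul_mem _ _ (hi ▸ hchaos n i))
      (Submodule.smul_mem _ _ (hj ▸ hchaos n j)))
    refine h2.congr fun n => ?_
    rw [smul_add, smul_comm _ α, smul_comm _ β]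
  have hsingle : ∀ i, m i = k+1 → Tendsto (fun n => Vv k (c • P n i)) atTop (𝓝 0) := by
    intro i hi
    have h1 := scal_conv hlaw (Pi.single i 1) (by simp [Pi.single_apply, ite_pow])
    simp_rw [sum_single_smul, one_smul] at h1
    exact h1.Vv (j := k) (fun n => hi ▸ hchaos n i)
  have hW : ∀ l l' : {i // m i = k+1}, Tendsto (fun n => Wd k (c • P n l) (c • P n l') (if l = l' then 1 else 0))
      atTop (𝓝 0) := by
    intro l l'
    by_cases hll : l = l'
    · subst hll
      simp only [if_true, Wd_diag]
      exact hsingle l l.2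
    · simp only [if_neg hll]
      have hne : (l : Fin d) ≠ l' := fun h => hll (Subtype.ext h)
      have h1 := (hpair l l' l.2 l'.2 hne _ _ inv_sqrt_two_sq inv_sqrt_two_sq).add
        (hpair l l' l.2 l'.2 hne _ (-(√2)⁻¹) inv_sqrt_two_sq (by rw [neg_sq]; exact inv_sqrt_two_sq))
      rw [add_zero] at h1
      exact tendsto_of_tendsto_of_tendsto_of_le_of_le tendsto_const_nhds h1 (fun n => zero_le) (fun n => Wd_offdiag k _ _)
  have hS : Tendsto (fun n => ∑ l : {i // m i = k+1}, ∑ l' : {i // m i = k+1},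
      Wd k (c • P n l) (c • P n l') (if l = l' then 1 else 0)) atTop (𝓝 0) := by
    have := tendsto_finsetSum (Finset.univ : Finset {i // m i = k+1}) (fun l _ =>
      tendsto_finsetSum (Finset.univ : Finset {i // m i = k+1}) (fun l' _ => hW l l'))
    simpa using this
  filter_upwards [hS.eventually_lt_const (ENNReal.ofReal_pos.2 hδ)] with n hn s hs
  exact (Vv_comb k s hs _).trans hn.le

end WeakVec



section Assembly

lemma tv_kill {ι : Type} [Fintype ι] (j : ℕ) (w : Fin j → ι → ℝ) (P : MvPolynomial ι ℝ) (h : DegLE j P) :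
    tv j w P = 0 := by
  induction j generalizing P with
  | zero =>
    funext i
    have h' : ∀ i, pderiv i P = 0 := h
    rw [tv_zero, h' i]; simp
  | succ j ih =>
    rw [tv_succ]
    exact ih _ _ (DegLE.ddL h _)

lemma Nn_add_low {ι : Type} [Fintype ι] (j : ℕ) (w : Fin j → ι → ℝ) (P Q : MvPolynomial ι ℝ) (h : DegLE j P) :
    Nn j w (P + Q) = Nn j w Q := by
  unfold Nn
  rw [map_add, tv_kill j w P h, zero_add]

noncomputable def Gs {d K : ℕ} (P : Fin d → MvPolynomial (Fin K) ℝ) (s : Fin d → ℝ) :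
    MvPolynomial (Fin K) ℝ := ∑ i, s i • P i

variable {d : ℕ} {m : Fin d → ℕ}

noncomputable def Gtop {K : ℕ} (m : Fin d → ℕ) (k : ℕ) (P : Fin d → MvPolynomial (Fin K) ℝ) (s : Fin d → ℝ) :
    MvPolynomial (Fin K) ℝ := ∑ l : {i // m i = k+1}, s l • P l

noncomputable def tau (m : Fin d → ℕ) (k : ℕ) (s : Fin d → ℝ) : ℝ := ∑ l : {i // m i = k+1}, s l ^ 2

noncomputable def lowv (m : Fin d → ℕ) (k : ℕ) (s : Fin d → ℝ) : Fin d → ℝ :=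
  fun i => if m i = k+1 then 0 else s i

lemma Gs_split {K : ℕ} (k : ℕ) (P : Fin d → MvPolynomial (Fin K) ℝ) (s : Fin d → ℝ) :
    Gs P s = Gs P (lowv m k s) + Gtop m k P s := by
  unfold Gs Gtop
  rw [← Fintype.sum_subtype_add_sum_subtype (fun i => m i = k+1) (fun i => s i • P i),
    ← Fintype.sum_subtype_add_sum_subtype (fun i => m i = k+1) (fun i => lowv m k s i • P i)]
  have h1 : ∀ l : {i // m i = k+1}, lowv m k s l = 0 := fun l => by simp [lowv, l.2]
  have h2 : ∀ l : {i // ¬ m i = k+1}, lowv m k s l = s l := fun l => by simp [lowv, l.2]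
  simp_rw [h1, h2]
  simp [add_comm]

lemma sig_split (k : ℕ) (s : Fin d → ℝ) :
    ∑ i, s i ^ 2 = ∑ i, lowv m k s i ^ 2 + tau m k s := by
  unfold tau
  rw [← Fintype.sum_subtype_add_sum_subtype (fun i => m i = k+1) (fun i => s i ^ 2),
    ← Fintype.sum_subtype_add_sum_subtype (fun i => m i = k+1) (fun i => lowv m k s i ^ 2)]
  have h1 : ∀ l : {i // m i = k+1}, lowv m k s l = 0 := fun l => by simp [lowv, l.2]
  have h2 : ∀ l : {i // ¬ m i = k+1}, lowv m k s l = s l := fun l => by simp [lowv, l.2]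
  simp_rw [h1, h2]
  simp [add_comm]

lemma Gs_DegLE {K : ℕ} (k : ℕ) (P : Fin d → MvPolynomial (Fin K) ℝ) (hP : ∀ i, P i ∈ chaos K (m i))
    (s : Fin d → ℝ) (hs : ∀ i, k < m i → s i = 0) : DegLE k (Gs P s) := by
  unfold Gs
  refine DegLE.sum _ fun i _ => ?_
  by_cases h : k < m i
  · rw [hs i h, zero_smul]; exact DegLE.zero _
  · exact DegLE.smul _ (DegLE.mono (not_lt.1 h) (chaos_DegLE (hP i)))

lemma lowv_supp (k : ℕ) (s : Fin d → ℝ) (hs : ∀ i, k + 1 < m i → s i = 0) :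
    ∀ i, k < m i → lowv m k s i = 0 := by
  intro i hi
  unfold lowv
  split_ifs with h
  · rfl
  · exact hs i (by omega)

lemma Gtop_mem {K : ℕ} (k : ℕ) (P : Fin d → MvPolynomial (Fin K) ℝ) (hP : ∀ i, P i ∈ chaos K (m i))
    (s : Fin d → ℝ) : Gtop m k P s ∈ chaos K (k+1) := by
  unfold Gtop
  exact Submodule.sum_mem _ fun l _ => Submodule.smul_mem _ _ (by have := hP l; rwa [l.2] at this)

lemma phi_le_one {ι : Type} [Fintype ι] (F : MvPolynomial ι ℝ) : phi 1 F ≤ 1 := by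
  unfold phi
  calc _ ≤ ∫⁻ _, 1 ∂gaussPi ι := lintegral_mono fun x => ee_le_one (by have := sqField_nonneg F x; linarith)
    _ = 1 := by simp

variable {K : ℕ → ℕ} {P : (n : ℕ) → Fin d → MvPolynomial (Fin (K n)) ℝ}

lemma caseA (hchaos : ∀ n i, P n i ∈ chaos (K n) (m i)) (hlaw : TendstoInLaw
      (fun n => Measure.map (fun x i => eval x (P n i)) (gaussPi (Fin (K n)))) (gaussPi (Fin d)))
    (k q : ℕ) : ∃ C : ℝ, 0 < C ∧ ∀ᶠ n in atTop, ∀ s : Fin d → ℝ, (∀ i, k + 1 < m i → s i = 0) →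
      0 < tau m k s →
      ENNReal.ofReal (tau m k s ^ (4 * q)) * phi 1 (Gs (P n) s) ≤ ENNReal.ofReal C := by
  obtain ⟨c, hc, HW⟩ := weyl k
  obtain ⟨δ, hδ, C0, hC0, HT⟩ := thmA k (4 * q * 2 ^ k)
  set f : ℝ := ((k+1).factorial : ℝ) with hf
  have hf0 : 0 < f := by positivity
  set C1 : ENNReal := C0 * (ENNReal.ofReal (c * f) ^ (4 * q * 2 ^ k))⁻¹ with hC1
  have hC1t : C1 ≠ ⊤ := by
    refine ENNReal.mul_ne_top hC0 (ENNReal.inv_ne_top.2 (pow_ne_zero _ ?_))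
    exact (ENNReal.ofReal_pos.2 (by positivity)).ne'
  have hmt : max 1 C1 ≠ ⊤ := by
    rcases max_choice 1 C1 with h | h <;> rw [h]
    · exact ENNReal.one_ne_top
    · exact hC1t
  refine ⟨(max 1 C1).toReal, ENNReal.toReal_pos (lt_of_lt_of_le one_pos (le_max_left _ _)).ne' hmt, ?_⟩
  filter_upwards [top_Vv hchaos hlaw k δ hδ] with n hn s hs hτ
  rw [ENNReal.ofReal_toReal hmt]
  set τ := tau m k s with hτd
  set ω : {i // m i = k+1} → ℝ := fun l => (√τ)⁻¹ * s l with hω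
  have hsτ : √τ ^ 2 = τ := Real.sq_sqrt hτ.le
  have hsf : √f ^ 2 = f := Real.sq_sqrt hf0.le
  have hω1 : ∑ l, ω l ^ 2 = 1 := by
    simp only [hω, mul_pow, ← Finset.mul_sum, inv_pow, hsτ]
    rw [show (∑ l : {i // m i = k+1}, s l ^ 2) = τ from rfl]
    exact inv_mul_cancel₀ hτ.ne'
  have hV := hn ω hω1
  set Q := ∑ l : {i // m i = k+1}, ω l • (√f)⁻¹ • P n l with hQ
  have hGQ : Gtop m k (P n) s = (√τ * √f) • Q := by
    unfold Gtop
    rw [hQ, Finset.smul_sum]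
    refine Finset.sum_congr rfl fun l _ => ?_
    rw [smul_smul, smul_smul]
    congr 1
    have h1 : √τ ≠ 0 := (Real.sqrt_pos.2 hτ).ne'
    have h2 : √f ≠ 0 := (Real.sqrt_pos.2 hf0).ne'
    simp only [hω]
    field_simp
  have hN : ∀ w, Nn k w (Gs (P n) s) = τ * f * Nn k w Q := by
    intro w
    rw [Gs_split (m := m) k, Nn_add_low k w _ _ (Gs_DegLE k _ (hchaos n) _ (lowv_supp k s hs)), hGQ, Nn_smul,
      mul_pow, hsτ, hsf]
  have h1 := HW _ (Gs (P n) s) (Gs_DegLE (k+1) _ (hchaos n) s hs) 1 zero_le_one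
  have h2 := HT _ Q hV (c * f * τ) (by positivity)
  have h3 : ∀ w, 1 * c * Nn k w (Gs (P n) s) = c * f * τ * Nn k w Q := fun w => by rw [hN]; ring
  simp_rw [h3] at h1
  have h4 := h1.trans h2
  set x := ENNReal.ofReal (τ ^ (4 * q)) * phi 1 (Gs (P n) s) with hx
  have h5 : x ^ (2 ^ k) ≤ C1 := by
    rw [hx, mul_pow, ENNReal.ofReal_pow hτ.le, ← pow_mul]
    refine (mul_le_mul_right h4 _).trans ?_
    rw [ENNReal.ofReal_mul (by positivity : 0 ≤ c * f), mul_pow, ENNReal.mul_inv, ← mul_assoc, mul_comm _ C0, mul_assoc,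
      mul_comm (ENNReal.ofReal τ ^ _), mul_assoc, ENNReal.inv_mul_cancel, mul_one]
    · exact pow_ne_zero _ (ENNReal.ofReal_pos.2 hτ).ne'
    · exact ENNReal.pow_ne_top ENNReal.ofReal_ne_top
    · exact Or.inr (ENNReal.pow_ne_top ENNReal.ofReal_ne_top)
    · exact Or.inl (ENNReal.pow_ne_top ENNReal.ofReal_ne_top)
  rcases le_total x 1 with hx1 | hx1
  · exact hx1.trans (le_max_left _ _)
  · exact ((le_self_pow₀ hx1 (by positivity)).trans h5).trans (le_max_right _ _)

end Assembly



section Assembly2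

lemma sqField_add_ge {ι : Type} [Fintype ι] (A B : MvPolynomial ι ℝ) (x : ι → ℝ) :
    sqField A x / 2 - sqField B x ≤ sqField (A + B) x := by
  unfold sqField
  rw [Finset.sum_div, ← Finset.sum_sub_distrib]
  refine Finset.sum_le_sum fun i _ => ?_
  rw [map_add, map_add]
  nlinarith [sq_nonneg (eval x (pderiv i A) + 2 * eval x (pderiv i B))]

lemma sqField_smul {ι : Type} [Fintype ι] (c : ℝ) (A : MvPolynomial ι ℝ) (x : ι → ℝ) :
    sqField (c • A) x = c ^ 2 * sqField A x := by
  unfold sqField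
  rw [Finset.mul_sum]
  refine Finset.sum_congr rfl fun i _ => ?_
  rw [Derivation.map_smul, smul_eval, mul_pow]

lemma phi_split {ι : Type} [Fintype ι] (A B : MvPolynomial ι ℝ) (t : ℝ) (ht : 0 ≤ t) (ht1 : t ≤ 1) (p : ℕ) :
    phi 1 (A + B) ≤ ENNReal.ofReal (Real.exp 1) * phi 1 (√(t / 2) • A)
      + ENNReal.ofReal (t ^ p * Ex (Gam B ^ p)) := by
  have e : t ^ p * Ex (Gam B ^ p) = Ex (t ^ p • Gam B ^ p) := by rw [map_smul, smul_eq_mul]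
  have hG : ∀ x, 0 ≤ eval x (Gam B) := fun x => by rw [eval_Gam]; exact sqField_nonneg B x
  rw [e, Ex_lint _ (fun x => by rw [smul_eval, map_pow]; have := hG x; positivity)]
  unfold phi
  rw [← lintegral_const_mul' _ _ ENNReal.ofReal_ne_top, ← lintegral_add_left]
  · refine lintegral_mono fun x => ?_
    rw [smul_eval, map_pow, eval_Gam, sqField_smul, Real.sq_sqrt (by positivity), one_mul, one_mul]
    have hA := sqField_nonneg A x
    have hB := sqField_nonneg B x
    have hAB := sqField_nonneg (A + B) x
    have h1 := sqField_add_ge A B x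
    by_cases h : t * sqField B x ≤ 1
    · refine le_trans ?_ le_self_add
      unfold ee
      rw [← ENNReal.ofReal_mul (Real.exp_pos _).le, ← Real.exp_add]
      refine ENNReal.ofReal_le_ofReal (Real.exp_le_exp.2 ?_)
      have h2 := mul_le_mul_of_nonneg_left h1 ht
      have h3 : t * sqField (A + B) x ≤ 1 * sqField (A + B) x := mul_le_mul_of_nonneg_right ht1 hAB
      linarith
    · refine le_trans ?_ le_add_self
      refine (ee_le_one hAB).trans ?_
      rw [← mul_pow, ← ENNReal.ofReal_one]
      exact ENNReal.ofReal_le_ofReal (one_le_pow₀ (not_le.1 h).le)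
  · refine Measurable.const_mul ?_ _
    exact measurable_ee.comp ((continuous_sqField _).measurable.const_mul _)

variable {d : ℕ} {m : Fin d → ℕ}

lemma Ex_Gtop_sq {K : ℕ} (k : ℕ) (P : Fin d → MvPolynomial (Fin K) ℝ)
    (h4 : ∀ i, Ex (P i ^ 2) ≤ 4) (s : Fin d → ℝ) :
    Ex (Gtop m k P s ^ 2) ≤ 4 * d * tau m k s := by
  have h1 : Ex (Gtop m k P s ^ 2) ≤ Ex (tau m k s • ∑ i, P i ^ 2) := by
    refine Ex_mono _ _ fun x => ?_
    unfold Gtop tau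
    simp only [map_pow, map_sum, smul_eval]
    refine (Finset.sum_mul_sq_le_sq_mul_sq Finset.univ _ _).trans ?_
    refine mul_le_mul_of_nonneg_left ?_ (Finset.sum_nonneg fun i _ => sq_nonneg _)
    rw [← Fintype.sum_subtype_add_sum_subtype (fun i => m i = k+1) (fun i => eval x (P i) ^ 2)]
    have : 0 ≤ ∑ l : {i // ¬ m i = k+1}, eval x (P l) ^ 2 := Finset.sum_nonneg fun i _ => sq_nonneg _
    linarith
  refine h1.trans ?_
  rw [map_smul, map_sum, smul_eq_mul]
  have h2 : ∑ i, Ex (P i ^ 2) ≤ 4 * d := by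
    calc _ ≤ ∑ i : Fin d, (4:ℝ) := Finset.sum_le_sum fun i _ => h4 i
      _ = _ := by simp [mul_comm]
  have h3 : 0 ≤ tau m k s := Finset.sum_nonneg fun i _ => sq_nonneg _
  nlinarith

variable {K : ℕ → ℕ} {P : (n : ℕ) → Fin d → MvPolynomial (Fin (K n)) ℝ}

lemma Gs_smul {K : ℕ} (P : Fin d → MvPolynomial (Fin K) ℝ) (c : ℝ) (s : Fin d → ℝ) :
    Gs P (c • s) = c • Gs P s := by
  unfold Gs
  rw [Finset.smul_sum]
  exact Finset.sum_congr rfl fun i _ => by rw [Pi.smul_apply, smul_eq_mul, mul_smul]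

lemma scal_single (hlaw : TendstoInLaw
      (fun n => Measure.map (fun x i => eval x (P n i)) (gaussPi (Fin (K n)))) (gaussPi (Fin d))) (i : Fin d) :
    ScalConv K (fun n => P n i) := by
  have h1 := scal_conv hlaw (Pi.single i 1) (by simp [Pi.single_apply, ite_pow])
  simp_rw [sum_single_smul, one_smul] at h1
  exact h1

theorem claim (hchaos : ∀ n i, P n i ∈ chaos (K n) (m i)) (hlaw : TendstoInLaw
      (fun n => Measure.map (fun x i => eval x (P n i)) (gaussPi (Fin (K n)))) (gaussPi (Fin d)))
    (k : ℕ) : ∀ q : ℕ, ∃ C : ℝ, 0 < C ∧ ∀ᶠ n in atTop, ∀ s : Fin d → ℝ, (∀ i, k < m i → s i = 0) →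
      ENNReal.ofReal ((∑ i, s i ^ 2) ^ q) * phi 1 (Gs (P n) s) ≤ ENNReal.ofReal C := by
  have hsmall : ∀ (q : ℕ) (n : ℕ) (s : Fin d → ℝ), ∑ i, s i ^ 2 ≤ 16 →
      ENNReal.ofReal ((∑ i, s i ^ 2) ^ q) * phi 1 (Gs (P n) s) ≤ ENNReal.ofReal (16 ^ q) := by
    intro q n s hs
    have h0 : 0 ≤ ∑ i, s i ^ 2 := Finset.sum_nonneg fun i _ => sq_nonneg _
    calc _ ≤ ENNReal.ofReal (16 ^ q) * 1 := by
          gcongr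
          exact phi_le_one _
      _ = _ := mul_one _
  induction k with
  | zero =>
    intro q
    refine ⟨16 ^ q, by positivity, Filter.Eventually.of_forall fun n s hs => hsmall q n s ?_⟩
    have : ∀ i, s i = 0 := fun i => hs i (Nat.pos_of_ne_zero
      ((scal_single hlaw i).deg_pos (fun n => hchaos n i)))
    simp [this]
  | succ k ih =>
    intro q
    obtain ⟨CA, hCA, HA⟩ := caseA hchaos hlaw k q
    obtain ⟨CI, hCI, HI⟩ := ih (2 * q)
    rcases Nat.eq_zero_or_pos q with hq | hq
    · subst hq
      refine ⟨1, one_pos, Filter.Eventually.of_forall fun n s hs => ?_⟩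
      simp only [pow_zero, ENNReal.ofReal_one, one_mul]
      exact phi_le_one _
    obtain ⟨CH, hCH, HH⟩ := hyper (k+1) (4 * q - 1)
    have hqq : 4 * q - 1 + 1 = 4 * q := by omega
    rw [hqq] at HH
    set CB : ℝ := Real.exp 1 * 16 ^ q * CI + CH * (4 * d) ^ (4 * q) with hCB
    have hCB0 : 0 < CB := by positivity
    have h4 : ∀ᶠ n in atTop, ∀ i, Ex (P n i ^ 2) ≤ 4 :=
      eventually_all.2 fun i => (scal_single hlaw i).bdd (fun n => hchaos n i)
    refine ⟨16 ^ q + CA + CB, by positivity, ?_⟩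
    filter_upwards [HA, HI, h4] with n hA hI h4 s hs
    set σ := ∑ i, s i ^ 2 with hσ
    have hσ0 : 0 ≤ σ := Finset.sum_nonneg fun i _ => sq_nonneg _
    rcases le_or_gt σ 16 with h16 | h16
    · refine (hsmall q n s h16).trans (ENNReal.ofReal_le_ofReal ?_)
      linarith
    set τ := tau m k s with hτ
    have hτ0 : 0 ≤ τ := Finset.sum_nonneg fun i _ => sq_nonneg _
    rcases le_or_gt σ (τ ^ 4) with hc | hc
    · have hτ1 : 0 < τ := by
        rcases hτ0.eq_or_lt with h | h
        · rw [← h] at hc; norm_num at hc; linarith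
        · exact h
      refine le_trans (mul_le_mul_left (ENNReal.ofReal_le_ofReal ?_) _) ((hA s hs hτ1).trans
        (ENNReal.ofReal_le_ofReal (by have : (0:ℝ) < 16 ^ q := by positivity
                                      linarith)))
      rw [pow_mul]
      gcongr
    · set r := √σ with hr
      have hr2 : r ^ 2 = σ := Real.sq_sqrt hσ0
      have hr4 : 4 ≤ r := by
        rw [hr]; exact Real.le_sqrt_of_sq_le (by linarith)
      have hr0 : 0 < r := by linarith
      have hsplit := phi_split (Gs (P n) (lowv m k s)) (Gtop m k (P n) s) r⁻¹ (by positivity)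
        (inv_le_one_of_one_le₀ (by linarith)) (4 * q)
      rw [← Gs_split, ← Gs_smul] at hsplit
      set lo := √(r⁻¹ / 2) • lowv m k s with hlo
      have hlosupp : ∀ i, k < m i → lo i = 0 := by
        intro i hi
        rw [hlo, Pi.smul_apply, lowv_supp k s hs i hi, smul_zero]
      have hI' := hI lo hlosupp
      set ρ := ∑ i, lo i ^ 2 with hρ
      have hρ1 : ρ = r⁻¹ / 2 * (σ - τ) := by
        have : σ - τ = ∑ i, lowv m k s i ^ 2 := by
          rw [hσ, sig_split (m := m) k s]; ring
        rw [this, Finset.mul_sum, hρ]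
        refine Finset.sum_congr rfl fun i _ => ?_
        rw [hlo, Pi.smul_apply, smul_eq_mul, mul_pow, Real.sq_sqrt (by positivity)]
      have hτσ : τ ≤ σ / 2 := by
        by_contra hcon
        rw [not_le] at hcon
        have h1 : (σ / 2) ^ 4 ≤ τ ^ 4 := by gcongr
        have h2 : (σ/2) ^ 4 = σ * (σ ^ 3 / 16) := by ring
        have h3 : (16:ℝ) ^ 3 ≤ σ ^ 3 := by gcongr
        nlinarith
      have hρ2 : r / 4 ≤ ρ := by
        rw [hρ1]
        have : r / 4 = r⁻¹ / 2 * (σ / 2) := by rw [← hr2]; field_simp; norm_num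
        rw [this]
        gcongr
        linarith
      have hσρ : σ ^ q ≤ 16 ^ q * ρ ^ (2 * q) := by
        rw [pow_mul, ← mul_pow, ← hr2]
        gcongr
        nlinarith
      have hGam : Ex (Gam (Gtop m k (P n) s) ^ (4 * q)) ≤ CH * (4 * d * τ) ^ (4 * q) := by
        refine (HH _ _ (Gtop_mem k (P n) (hchaos n) s)).2.trans ?_
        have h1 := Ex_Gtop_sq (m := m) k (P n) h4 s
        have h2 := Ex_sq_nonneg (Gtop m k (P n) s)
        gcongr
      have hlast : σ ^ q * (r⁻¹ ^ (4 * q) * Ex (Gam (Gtop m k (P n) s) ^ (4 * q))) ≤ CH * (4 * d) ^ (4 * q) := by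
        have h1 : σ ^ q * (r⁻¹ ^ (4 * q) * τ ^ (4 * q)) ≤ 1 := by
          rw [pow_mul, pow_mul, ← mul_pow, ← mul_pow]
          refine pow_le_one₀ (by positivity) ?_
          have h2 : σ * (r⁻¹ ^ 4 * τ ^ 4) = τ ^ 4 / σ := by
            rw [← hr2]; field_simp
          rw [h2, div_le_one (by linarith)]
          exact hc.le
        calc _ ≤ σ ^ q * (r⁻¹ ^ (4 * q) * (CH * (4 * d * τ) ^ (4 * q))) := by gcongr
          _ = CH * (4 * d) ^ (4 * q) * (σ ^ q * (r⁻¹ ^ (4 * q) * τ ^ (4 * q))) := by rw [mul_pow (4 * (d:ℝ)) τ]; ring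
          _ ≤ CH * (4 * d) ^ (4 * q) * 1 := by gcongr
          _ = _ := mul_one _
      calc ENNReal.ofReal (σ ^ q) * phi 1 (Gs (P n) s)
          ≤ ENNReal.ofReal (σ ^ q) * (ENNReal.ofReal (Real.exp 1) * phi 1 (Gs (P n) lo)
            + ENNReal.ofReal (r⁻¹ ^ (4 * q) * Ex (Gam (Gtop m k (P n) s) ^ (4 * q)))) := by gcongr
        _ = ENNReal.ofReal (Real.exp 1) * (ENNReal.ofReal (σ ^ q) * phi 1 (Gs (P n) lo))
            + ENNReal.ofReal (σ ^ q * (r⁻¹ ^ (4 * q) * Ex (Gam (Gtop m k (P n) s) ^ (4 * q)))) := by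
            rw [mul_add, ← ENNReal.ofReal_mul (by positivity : 0 ≤ σ ^ q)]
            congr 1
            ring
        _ ≤ ENNReal.ofReal (Real.exp 1) * (ENNReal.ofReal (16 ^ q) * ENNReal.ofReal CI)
            + ENNReal.ofReal (CH * (4 * d) ^ (4 * q)) := by
            refine add_le_add (mul_le_mul_right ?_ _) (ENNReal.ofReal_le_ofReal hlast)
            calc _ ≤ ENNReal.ofReal (16 ^ q * ρ ^ (2 * q)) * phi 1 (Gs (P n) lo) := by gcongr
              _ = ENNReal.ofReal (16 ^ q) * (ENNReal.ofReal (ρ ^ (2 * q)) * phi 1 (Gs (P n) lo)) := by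
                rw [ENNReal.ofReal_mul (by positivity), mul_assoc]
              _ ≤ _ := mul_le_mul_right hI' _
        _ = ENNReal.ofReal CB := by
            rw [← ENNReal.ofReal_mul (by positivity), ← ENNReal.ofReal_mul (by positivity),
              ← ENNReal.ofReal_add (by positivity) (by positivity), hCB]
            congr 1
            ring
        _ ≤ _ := ENNReal.ofReal_le_ofReal (by have : (0:ℝ) < 16 ^ q := by positivity
                                              linarith)

end Assembly2



section Final

noncomputable def cZ (d : ℕ) : ENNReal := ∫⁻ y : Fin d → ℝ, ee (∑ i, y i ^ 2)

lemma cZ_ne_zero (d : ℕ) : cZ d ≠ 0 := by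
  unfold cZ
  intro h
  have hm : Measurable fun y : Fin d → ℝ => ee (∑ i, y i ^ 2) :=
    measurable_ee.comp (by fun_prop)
  rw [lintegral_eq_zero_iff hm] at h
  have h2 : ∀ᵐ y : Fin d → ℝ, False := by
    filter_upwards [h] with y hy
    have : 0 < ee (∑ i, y i ^ 2) := by
      unfold ee
      exact ENNReal.ofReal_pos.2 (Real.exp_pos _)
    exact this.ne' hy
  rw [eventually_false_iff_eq_bot, ae_eq_bot] at h2
  exact NeZero.ne (volume : Measure (Fin d → ℝ)) h2

open scoped MatrixOrder in
lemma posdef_factor {d : ℕ} (A : Matrix (Fin d) (Fin d) ℝ) (hA : A.PosDef) :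
    ∃ B : Matrix (Fin d) (Fin d) ℝ, A = B.transpose * B := by
  refine ⟨CFC.sqrt A, ?_⟩
  have h0 : (0 : Matrix (Fin d) (Fin d) ℝ) ≤ A := Matrix.nonneg_iff_posSemidef.2 hA.posSemidef
  have h1 : (CFC.sqrt A).PosSemidef := Matrix.nonneg_iff_posSemidef.1 (CFC.sqrt_nonneg A)
  have h2 := h1.isHermitian
  have h3 : (CFC.sqrt A).transpose = CFC.sqrt A := by
    rw [← Matrix.conjTranspose_eq_transpose_of_trivial]
    exact h2
  rw [h3, CFC.sqrt_mul_sqrt_self A h0]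

lemma posdef_int {d : ℕ} (A : Matrix (Fin d) (Fin d) ℝ) (hA : A.PosDef) :
    (∫⁻ s : Fin d → ℝ, ee (dotProduct s (A.mulVec s))) ^ 2 = (ENNReal.ofReal A.det)⁻¹ * cZ d ^ 2 := by
  obtain ⟨B, hB⟩ := posdef_factor A hA
  have hdet : A.det = B.det ^ 2 := by rw [hB, Matrix.det_mul, Matrix.det_transpose, sq]
  have hB0 : B.det ≠ 0 := by
    intro h
    have := hA.det_pos
    rw [hdet, h] at this
    simp at this
  have h1 : ∀ s : Fin d → ℝ, dotProduct s (A.mulVec s) = ∑ i, (Matrix.toLin' B s) i ^ 2 := by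
    intro s
    rw [hB, ← Matrix.mulVec_mulVec, Matrix.dotProduct_mulVec, Matrix.vecMul_transpose]
    simp [dotProduct, Matrix.toLin'_apply, sq]
  simp_rw [h1]
  have hm : Measurable fun y : Fin d → ℝ => ee (∑ i, y i ^ 2) :=
    measurable_ee.comp (by fun_prop)
  have hl : Measurable (Matrix.toLin' B) :=
    (LinearMap.continuous_of_finiteDimensional _).measurable
  rw [← lintegral_map hm hl, Real.map_matrix_volume_pi_eq_smul_volume_pi hB0,
    lintegral_smul_measure, smul_eq_mul, mul_pow]
  congr 1
  rw [hdet, ← ENNReal.ofReal_inv_of_pos (by positivity), ← ENNReal.ofReal_pow (abs_nonneg _),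
    sq_abs, inv_pow]

lemma mal_quad {K d : ℕ} (P : Fin d → MvPolynomial (Fin K) ℝ) (x : Fin K → ℝ) (s : Fin d → ℝ) :
    dotProduct s ((malMatrix P x).mulVec s) = sqField (Gs P s) x := by
  unfold sqField Gs malMatrix
  simp only [dotProduct, Matrix.mulVec, Matrix.of_apply, map_sum, map_smul, smul_eval]
  simp_rw [sq, Finset.sum_mul_sum, Finset.mul_sum, Finset.sum_mul, Finset.mul_sum]
  rw [Finset.sum_comm' (t' := Finset.univ) (s' := fun _ => Finset.univ) (by simp)]
  rw [Finset.sum_comm]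
  conv_lhs =>
    enter [2, i]
    rw [Finset.sum_comm]
  rw [Finset.sum_comm]
  conv_rhs =>
    enter [2, i]
  refine Finset.sum_congr rfl fun k _ => ?_
  rw [Finset.sum_comm]
  refine Finset.sum_congr rfl fun i _ => Finset.sum_congr rfl fun j _ => ?_
  rw [Derivation.map_smul, Derivation.map_smul, smul_eval, smul_eval]
  ring

lemma mal_posSemidef {K d : ℕ} (P : Fin d → MvPolynomial (Fin K) ℝ) (x : Fin K → ℝ) :
    (malMatrix P x).PosSemidef := by
  have : malMatrix P x = (Matrix.of fun (k : Fin K) (i : Fin d) => eval x (pderiv k (P i))).conjTranspose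
      * (Matrix.of fun (k : Fin K) (i : Fin d) => eval x (pderiv k (P i))) := by
    ext i j
    simp [malMatrix, Matrix.mul_apply]
  rw [this]
  exact Matrix.posSemidef_conjTranspose_mul_self _

lemma det_bound {K d : ℕ} (P : Fin d → MvPolynomial (Fin K) ℝ) (x : Fin K → ℝ) :
    (ENNReal.ofReal (malMatrix P x).det)⁻¹ * (min (cZ d) 1) ^ 2
      ≤ (∫⁻ s : Fin d → ℝ, ee (sqField (Gs P s) x)) ^ 2 := by
  set Γ := malMatrix P x with hΓ
  have hpd : ∀ ε : ℝ, 0 < ε → (Γ + ε • (1 : Matrix (Fin d) (Fin d) ℝ)).PosDef := fun ε hε =>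
    Matrix.PosDef.posSemidef_add (mal_posSemidef P x) (Matrix.PosDef.one.smul hε)
  have hb : ∀ ε : ℝ, 0 < ε → (ENNReal.ofReal (Γ + ε • (1 : Matrix (Fin d) (Fin d) ℝ)).det)⁻¹ * (min (cZ d) 1) ^ 2
      ≤ (∫⁻ s : Fin d → ℝ, ee (sqField (Gs P s) x)) ^ 2 := by
    intro ε hε
    calc _ ≤ (ENNReal.ofReal (Γ + ε • (1 : Matrix (Fin d) (Fin d) ℝ)).det)⁻¹ * (cZ d) ^ 2 := by
          gcongr; exact min_le_left _ _
      _ = _ := (posdef_int _ (hpd ε hε)).symm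
      _ ≤ _ := by
          gcongr with s
          apply ee_anti
          rw [← mal_quad, Matrix.add_mulVec, dotProduct_add, Matrix.smul_mulVec, Matrix.one_mulVec,
            dotProduct_smul, smul_eq_mul]
          have : 0 ≤ dotProduct s s := by
            unfold dotProduct
            exact Finset.sum_nonneg fun i _ => mul_self_nonneg _
          have := mul_nonneg hε.le this
          linarith
  have hc : Tendsto (fun ε : ℝ => (ENNReal.ofReal (Γ + ε • (1 : Matrix (Fin d) (Fin d) ℝ)).det)⁻¹ * (min (cZ d) 1) ^ 2)
      (𝓝[>] 0) (𝓝 ((ENNReal.ofReal Γ.det)⁻¹ * (min (cZ d) 1) ^ 2)) := by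
    refine ENNReal.Tendsto.mul_const ?_ (Or.inr ?_)
    · have hcont : Continuous fun ε : ℝ => (ENNReal.ofReal (Γ + ε • (1 : Matrix (Fin d) (Fin d) ℝ)).det)⁻¹ := by
        refine continuous_inv.comp (ENNReal.continuous_ofReal.comp ?_)
        apply Continuous.matrix_det
        fun_prop
      have := hcont.tendsto 0
      simp only [zero_smul, add_zero] at this
      exact this.mono_left nhdsWithin_le_nhds
    · exact ENNReal.pow_ne_top (ne_top_of_le_ne_top ENNReal.one_ne_top (min_le_right _ _))
  refine le_of_tendsto hc ?_
  filter_upwards [self_mem_nhdsWithin] with ε hε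
  exact hb ε hε

noncomputable def gW (d : ℕ) (s : Fin d → ℝ) : ENNReal := ENNReal.ofReal ((1 + ‖s‖) ^ (d + 1))

lemma measurable_gW (d : ℕ) : Measurable (gW d) := by
  unfold gW; fun_prop

lemma measurable_gWi (d : ℕ) : Measurable fun s => (gW d s)⁻¹ := (measurable_gW d).inv

lemma gW_ne_zero (d : ℕ) (s) : gW d s ≠ 0 := by
  unfold gW
  exact (ENNReal.ofReal_pos.2 (by positivity)).ne'

lemma gW_ne_top (d : ℕ) (s) : gW d s ≠ ⊤ := ENNReal.ofReal_ne_top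

lemma gW_int (d : ℕ) : ∫⁻ s, (gW d s)⁻¹ ≠ ⊤ := by
  have := finite_integral_one_add_norm (E := Fin d → ℝ) (μ := volume) (r := ((d + 1 : ℕ) : ℝ))
    (by simp)
  refine ne_of_lt (lt_of_le_of_lt (le_of_eq ?_) this)
  refine lintegral_congr fun s => ?_
  unfold gW
  rw [← ENNReal.ofReal_inv_of_pos (by positivity), Real.rpow_neg (by positivity), Real.rpow_natCast]

lemma gW_int_ne_zero (d : ℕ) : ∫⁻ s, (gW d s)⁻¹ ≠ 0 := by
  intro h
  rw [lintegral_eq_zero_iff (measurable_gWi d)] at h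
  have h2 : ∀ᵐ y : Fin d → ℝ, False := by
    filter_upwards [h] with y hy
    exact ENNReal.inv_ne_zero.2 (gW_ne_top d y) hy
  rw [eventually_false_iff_eq_bot, ae_eq_bot] at h2
  exact NeZero.ne (volume : Measure (Fin d → ℝ)) h2

noncomputable def nuW (d : ℕ) : Measure (Fin d → ℝ) :=
  (∫⁻ s, (gW d s)⁻¹)⁻¹ • (volume.withDensity fun s => (gW d s)⁻¹)

instance nuW_prob (d : ℕ) : IsProbabilityMeasure (nuW d) := by
  constructor
  unfold nuW
  rw [Measure.smul_apply, withDensity_apply _ MeasurableSet.univ, Measure.restrict_univ, smul_eq_mul]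
  exact ENNReal.inv_mul_cancel (gW_int_ne_zero d) (gW_int d)

lemma int_nuW (d : ℕ) (f : (Fin d → ℝ) → ENNReal) (hf : Measurable f) :
    ∫⁻ s, f s = (∫⁻ s, (gW d s)⁻¹) * ∫⁻ s, f s * gW d s ∂nuW d := by
  have hfg : Measurable fun s => f s * gW d s := hf.mul (measurable_gW d)
  unfold nuW
  rw [lintegral_smul_measure, smul_eq_mul, ← mul_assoc,
    ENNReal.mul_inv_cancel (gW_int_ne_zero d) (gW_int d), one_mul,
    lintegral_withDensity_eq_lintegral_mul _ (measurable_gWi d) hfg]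
  refine lintegral_congr fun s => ?_
  simp only [Pi.mul_apply]
  rw [mul_comm (f s), ← mul_assoc, ENNReal.inv_mul_cancel (gW_ne_zero d s) (gW_ne_top d s), one_mul]

lemma pow_int_le (d : ℕ) (f : (Fin d → ℝ) → ENNReal) (hf : Measurable f) (hf1 : ∀ s, f s ≤ 1)
    (Q : ℕ) (hQ : 1 ≤ Q) :
    (∫⁻ s, f s) ^ Q ≤ (∫⁻ s, (gW d s)⁻¹) ^ Q * ∫⁻ s, gW d s ^ Q * f s ∂nuW d := by
  rw [int_nuW d f hf, mul_pow]
  gcongr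
  refine (lintegral_pow_le_pow (nuW d) (fun s => f s * gW d s) (hf.mul (measurable_gW d)).aemeasurable Q hQ).trans ?_
  refine lintegral_mono fun s => ?_
  simp only
  rw [mul_pow, mul_comm]
  gcongr
  exact pow_le_of_le_one zero_le (hf1 s) (by omega)

lemma sqField_Gs_joint {K d : ℕ} (P : Fin d → MvPolynomial (Fin K) ℝ) :
    Measurable fun z : (Fin K → ℝ) × (Fin d → ℝ) => ee (sqField (Gs P z.2) z.1) := by
  apply measurable_ee.comp
  have : (fun z : (Fin K → ℝ) × (Fin d → ℝ) => sqField (Gs P z.2) z.1)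
      = fun z => ∑ k, (∑ i, z.2 i * eval z.1 (pderiv k (P i))) ^ 2 := by
    funext z
    unfold sqField Gs
    simp [map_sum, smul_eval]
  rw [this]
  have h : ∀ (k i), Continuous fun z : (Fin K → ℝ) × (Fin d → ℝ) => eval z.1 (pderiv k (P i)) :=
    fun k i => (continuous_eval_poly _).comp continuous_fst
  apply Continuous.measurable
  fun_prop

lemma weight_bound {d : ℕ} (Q : ℕ) (s : Fin d → ℝ) :
    gW d s ^ Q ≤ ENNReal.ofReal ((4:ℝ) ^ ((d+1)*Q) * (1 + (∑ i, s i ^ 2) ^ ((d+1)*Q))) := by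
  unfold gW
  rw [← ENNReal.ofReal_pow (by positivity), ← pow_mul]
  apply ENNReal.ofReal_le_ofReal
  set σ := ∑ i, s i ^ 2 with hσ
  have h0 : 0 ≤ σ := Finset.sum_nonneg fun i _ => sq_nonneg _
  have h1 : ‖s‖ ≤ 1 + σ := by
    rw [pi_norm_le_iff_of_nonneg (by positivity)]
    intro i
    have : s i ^ 2 ≤ σ := Finset.single_le_sum (f := fun i => s i ^ 2) (fun i _ => sq_nonneg _) (Finset.mem_univ i)
    rw [Real.norm_eq_abs]
    nlinarith [sq_abs (s i), sq_nonneg (|s i| - 1), abs_nonneg (s i)]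
  generalize (d+1)*Q = p
  have hn := norm_nonneg s
  rcases le_total σ 1 with h | h
  · calc (1 + ‖s‖) ^ p ≤ 4 ^ p := by gcongr; linarith
      _ ≤ 4 ^ p * (1 + σ ^ p) := le_mul_of_one_le_right (by positivity) (by
          have := pow_nonneg h0 p; linarith)
  · calc (1 + ‖s‖) ^ p ≤ (4 * σ) ^ p := by gcongr; linarith
      _ = 4 ^ p * σ ^ p := mul_pow _ _ _
      _ ≤ 4 ^ p * (1 + σ ^ p) := by gcongr; linarith

lemma main_int {K d : ℕ} (P : Fin d → MvPolynomial (Fin K) ℝ) (q : ℕ) (hq : 1 ≤ q) (C : ℝ) (hC : 0 < C)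
    (h : ∀ s : Fin d → ℝ, ENNReal.ofReal ((∑ i, s i ^ 2) ^ ((d+1)*(2*q))) * phi 1 (Gs P s) ≤ ENNReal.ofReal C) :
    ∫⁻ x, (ENNReal.ofReal ((malMatrix P x).det) ^ q)⁻¹ ∂gaussPi (Fin K)
      ≤ (((min (cZ d) 1) ^ 2) ^ q)⁻¹ * ((∫⁻ s, (gW d s)⁻¹) ^ (2*q) *
        ENNReal.ofReal ((4:ℝ) ^ ((d+1)*(2*q)) * (1 + C))) := by
  set c := (min (cZ d) 1) ^ 2 with hc
  have hct : c ≠ ⊤ := ENNReal.pow_ne_top (ne_top_of_le_ne_top ENNReal.one_ne_top (min_le_right _ _))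
  have hc0 : c ≠ 0 := pow_ne_zero _ (by
    rw [← pos_iff_ne_zero]
    exact lt_min (pos_iff_ne_zero.2 (cZ_ne_zero d)) one_pos)
  have hcq : c ^ q ≠ 0 := pow_ne_zero _ hc0
  have hcqt : c ^ q ≠ ⊤ := ENNReal.pow_ne_top hct
  have hj := sqField_Gs_joint P
  have hpt : ∀ x, (ENNReal.ofReal ((malMatrix P x).det) ^ q)⁻¹ ≤
      (c ^ q)⁻¹ * ((∫⁻ s, (gW d s)⁻¹) ^ (2*q) * ∫⁻ s, gW d s ^ (2*q) * ee (sqField (Gs P s) x) ∂nuW d) := by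
    intro x
    have h1 := pow_le_pow_left₀ (zero_le) (det_bound P x) q
    rw [← pow_mul, mul_pow, ← ENNReal.inv_pow] at h1
    have hms : Measurable fun s : Fin d → ℝ => ee (sqField (Gs P s) x) :=
      Measurable.of_uncurry_left (f := fun (x : Fin K → ℝ) (s : Fin d → ℝ) => ee (sqField (Gs P s) x)) hj
    have h2 := h1.trans (pow_int_le d (fun s => ee (sqField (Gs P s) x))
      hms (fun s => ee_le_one (sqField_nonneg _ _)) (2*q) (by omega))
    calc _ = (c ^ q)⁻¹ * ((ENNReal.ofReal ((malMatrix P x).det) ^ q)⁻¹ * c ^ q) := by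
          rw [mul_comm _ (c ^ q), ← mul_assoc, ENNReal.inv_mul_cancel hcq hcqt, one_mul]
      _ ≤ _ := by gcongr
  refine (lintegral_mono hpt).trans ?_
  have hM : (∫⁻ s, (gW d s)⁻¹) ^ (2*q) ≠ ⊤ := ENNReal.pow_ne_top (gW_int d)
  rw [lintegral_const_mul' _ _ (ENNReal.inv_ne_top.2 hcq), lintegral_const_mul' _ _ hM]
  gcongr
  rw [lintegral_lintegral_swap (((measurable_gW d).comp measurable_snd |>.pow_const _).mul hj).aemeasurable]
  have hs : ∀ s, ∫⁻ x, gW d s ^ (2*q) * ee (sqField (Gs P s) x) ∂gaussPi (Fin K)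
      ≤ ENNReal.ofReal ((4:ℝ) ^ ((d+1)*(2*q)) * (1 + C)) := by
    intro s
    rw [lintegral_const_mul' _ _ (ENNReal.pow_ne_top (gW_ne_top d s))]
    have hphi : ∫⁻ x, ee (sqField (Gs P s) x) ∂gaussPi (Fin K) = phi 1 (Gs P s) := by
      unfold phi; simp
    rw [hphi]
    have h0 : 0 ≤ ∑ i, s i ^ 2 := Finset.sum_nonneg fun i _ => sq_nonneg _
    calc _ ≤ ENNReal.ofReal ((4:ℝ) ^ ((d+1)*(2*q)) * (1 + (∑ i, s i ^ 2) ^ ((d+1)*(2*q)))) * phi 1 (Gs P s) := by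
          gcongr; exact weight_bound _ s
      _ = ENNReal.ofReal ((4:ℝ) ^ ((d+1)*(2*q))) * (phi 1 (Gs P s) +
            ENNReal.ofReal ((∑ i, s i ^ 2) ^ ((d+1)*(2*q))) * phi 1 (Gs P s)) := by
          rw [ENNReal.ofReal_mul (by positivity), ENNReal.ofReal_add (by norm_num) (by positivity),
            ENNReal.ofReal_one, mul_assoc]
          congr 1
          rw [add_mul, one_mul]
      _ ≤ ENNReal.ofReal ((4:ℝ) ^ ((d+1)*(2*q))) * (1 + ENNReal.ofReal C) := by
          gcongr
          · exact phi_le_one _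
          · exact h s
      _ = _ := by
          rw [ENNReal.ofReal_mul (by positivity), ENNReal.ofReal_add (by norm_num) hC.le, ENNReal.ofReal_one]
  refine (lintegral_mono hs).trans ?_
  simp

theorem final_bound (d : ℕ) (m : Fin d → ℕ) (K : ℕ → ℕ)
    (P : (n : ℕ) → Fin d → MvPolynomial (Fin (K n)) ℝ)
    (hchaos : ∀ n i, P n i ∈ chaos (K n) (m i))
    (hlaw : TendstoInLaw
      (fun n => Measure.map (fun x i => eval x (P n i)) (gaussPi (Fin (K n))))
      (gaussPi (Fin d))) :
    ∀ q : ℕ, 1 ≤ q → ∃ (N : ℕ) (C : ℝ), 0 < C ∧ ∀ n ≥ N,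
      ∫⁻ x, (ENNReal.ofReal ((malMatrix (P n) x).det) ^ q)⁻¹ ∂gaussPi (Fin (K n))
        ≤ ENNReal.ofReal C := by
  intro q hq
  obtain ⟨C, hC, hev⟩ := claim hchaos hlaw (∑ i, m i) ((d+1)*(2*q))
  obtain ⟨N, hN⟩ := eventually_atTop.1 hev
  set T : ENNReal := (((min (cZ d) 1) ^ 2) ^ q)⁻¹ * ((∫⁻ s, (gW d s)⁻¹) ^ (2*q) *
        ENNReal.ofReal ((4:ℝ) ^ ((d+1)*(2*q)) * (1 + C))) with hT
  have hTt : T ≠ ⊤ := by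
    refine ENNReal.mul_ne_top (ENNReal.inv_ne_top.2 (pow_ne_zero _ (pow_ne_zero _ ?_)))
      (ENNReal.mul_ne_top (ENNReal.pow_ne_top (gW_int d)) ENNReal.ofReal_ne_top)
    rw [← pos_iff_ne_zero]
    exact lt_min (pos_iff_ne_zero.2 (cZ_ne_zero d)) one_pos
  refine ⟨N, T.toReal + 1, by positivity, fun n hn => ?_⟩
  calc _ ≤ T := main_int (P n) q hq C hC fun s => hN n hn s fun i hi => by
        have := Finset.single_le_sum (f := m) (fun i _ => Nat.zero_le _) (Finset.mem_univ i)
        omega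
    _ = ENNReal.ofReal T.toReal := (ENNReal.ofReal_toReal hTt).symm
    _ ≤ _ := ENNReal.ofReal_le_ofReal (by linarith)

end Final

/-- Vector version: negative moments of the determinant of the Malliavin matrix
are eventually bounded along normal convergence on Wiener chaoses. -/
theorem negative_moments_of_chaos_clt_vector (d : ℕ) (m : Fin d → ℕ) (K : ℕ → ℕ)
    (P : (n : ℕ) → Fin d → MvPolynomial (Fin (K n)) ℝ)
    (hchaos : ∀ n i, P n i ∈ chaos (K n) (m i))
    (hlaw : TendstoInLaw
      (fun n => Measure.map (fun x i => eval x (P n i)) (gaussPi (Fin (K n))))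
      (gaussPi (Fin d))) :
    ∀ q : ℕ, 1 ≤ q → ∃ (N : ℕ) (C : ℝ), 0 < C ∧ ∀ n ≥ N,
      ∫⁻ x, (ENNReal.ofReal ((malMatrix (P n) x).det) ^ q)⁻¹ ∂gaussPi (Fin (K n))
        ≤ ENNReal.ofReal C := by
  exact final_bound d m K P hchaos hlaw
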